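/- arXiv:2306.00140 — 11 statements merged into one kernel-verified Lean document; each statement's English description precedes it below -/
import Mathlib

section
/- Let Γ be a strongly regular graph with parameters (v,k,λ,μ) on a finite nonempty vertex type, and let A be its adjacency matrix with real entries. If η is a real eigenvalue of A with η ≠ k, then η² − (λ−μ)·η − (k−μ) = 0 (all parameters cast from ℕ to ℝ). -/
/-!
For an eigenvector `f` of eigenvalue `η ≠ k`, regularity forces `∑ x, f x = 0`: the all-ones vector is
a `k`-eigenvector of the symmetric matrix `A`, hence orthogonal to `f`. Strong regularity says
`A² = k I + l A + m (J - I - A)`, with `J` the all-ones matrix. Since `J f = 0`, applying this to `f`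
gives `η² f = (k + l η - m - m η) f`, and `f ≠ 0`.
-/

/-- If `η ≠ k` is a real eigenvalue of the adjacency matrix of a `(v,k,l,m)` strongly regular
graph, then `η² − (l−m)·η − (k−m) = 0`. -/
theorem stmt_0 {V : Type*} [Fintype V] [Nonempty V] (Γ : SimpleGraph V)
    [DecidableRel Γ.Adj] (v k l m : ℕ) (h : Γ.IsSRGWith v k l m)
    (η : ℝ) (hη : ∃ f : V → ℝ, f ≠ 0 ∧ (Γ.adjMatrix ℝ).mulVec f = η • f)
    (hηk : η ≠ (k : ℝ)) :
    η ^ 2 - ((l : ℝ) - (m : ℝ)) * η - ((k : ℝ) - (m : ℝ)) = 0 := by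
  classical
  obtain ⟨f, hf0, hf⟩ := hη
  have hsum : ∑ x, f x = 0 := by
    -- Pair both sides of `A f = η f` with the all-ones vector and move `A` across.
    have hone : Matrix.vecMul (fun _ => (1 : ℝ)) (Γ.adjMatrix ℝ) = fun _ => (k : ℝ) := by
      ext x
      simp [h.regular.degree_eq x]
    have key := Matrix.dotProduct_mulVec (fun _ => (1 : ℝ)) (Γ.adjMatrix ℝ) f
    rw [hf, hone] at key
    simp only [dotProduct, Pi.smul_apply, smul_eq_mul, one_mul, ← Finset.mul_sum] at key
    have hmul : (η - k) * ∑ x, f x = 0 := by linarith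
    exact (mul_eq_zero.mp hmul).resolve_left (sub_ne_zero.mpr hηk)
  have hcompl : Γᶜ.adjMatrix ℝ =
      (Matrix.of fun _ _ => (1 : ℝ)) - 1 - Γ.adjMatrix ℝ := by
    ext i j
    by_cases hij : i = j
    · subst hij
      simp
    · by_cases ha : Γ.Adj i j <;> simp [hij, ha]
  have hJ : (Matrix.of fun _ _ : V => (1 : ℝ)).mulVec f = 0 := by
    ext x
    simp [Matrix.mulVec, dotProduct, hsum]
  obtain ⟨x, hx⟩ := Function.ne_iff.mp hf0
  have hsq := congrFun (congrArg (fun M => Matrix.mulVec M f) (h.matrix_eq (α := ℝ))) x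
  simp only [hcompl, pow_two, ← Matrix.mulVec_mulVec, hf, Matrix.mulVec_smul, Matrix.add_mulVec,
    Matrix.sub_mulVec, Matrix.smul_mulVec, Matrix.one_mulVec, hJ, Pi.add_apply, Pi.sub_apply,
    Pi.smul_apply, Pi.zero_apply, smul_eq_mul] at hsq
  simp only [nsmul_eq_mul] at hsq
  refine (mul_eq_zero.mp ?_).resolve_right hx
  linear_combination hsq
end

section
/- Let Γ be a strongly regular graph with parameters (v,k,λ,μ) satisfying 0 < μ, μ < k, and k < v−1. If the integer Δ := (λ−μ)² + 4(k−μ) is not the square of an integer, then v = 4μ+1, k = 2μ, and λ+1 = μ (i.e., Γ is a conference graph). -/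
/-!
Put `e = l − m`, `c = k − m`, `s = √Δ`, and let `A` be the adjacency matrix and `J` the all-ones
matrix. Then `A² = c I + e A + m J`, so on the complement of the all-ones vector `A` satisfies
`x² = e x + c`, with roots `(e ± s) / 2`. The projection `P` onto the eigenspace of `(e + s) / 2`
is a linear combination of `I`, `A` and `J`, and its trace is a natural number `f`
(`exists_trace_eq_natCast`), the multiplicity of that eigenvalue. Computing the trace from the
coefficients gives `(2 f − (v − 1)) s = −(2 k + e (v − 1))`. As `s` is irrational, both sides
vanish: `2 k = (v − 1)(m − l)`. Since `0 < k < v − 1`, this forces `m − l = 1` and `v = 2 k + 1`,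
and the counting identity `k (k − l − 1) = (v − k − 1) m` then gives `k = 2 m`.
-/

/-- The trace of an idempotent matrix is its rank, hence a natural number. -/
lemma exists_trace_eq_natCast {V : Type*} [Fintype V] [DecidableEq V] (P : Matrix V V ℝ)
    (hP : P * P = P) : ∃ f : ℕ, P.trace = f := by
  have h : IsIdempotentElem (Matrix.toLin' P) := by
    rw [IsIdempotentElem, Module.End.mul_eq_comp, ← Matrix.toLin'_mul, hP]
  have h2 := LinearMap.IsProj.trace (LinearMap.IsIdempotentElem.isProj_range _ h)
  exact ⟨_, by rw [← h2, Matrix.trace_toLin'_eq]⟩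

open Matrix in
/-- The quadratic equation `A² = (k − m) I + (l − m) A + m J`. -/
lemma adjMatrix_mul_self_eq {V : Type*} [Fintype V] [DecidableEq V] (Γ : SimpleGraph V)
    [DecidableRel Γ.Adj] {v k l m : ℕ} (h : Γ.IsSRGWith v k l m) :
    Γ.adjMatrix ℝ * Γ.adjMatrix ℝ = ((k : ℝ) - m) • (1 : Matrix V V ℝ)
      + ((l : ℝ) - m) • Γ.adjMatrix ℝ + (m : ℝ) • Matrix.of (fun _ _ => (1 : ℝ)) := by
  rw [← pow_two, h.matrix_eq]
  simp only [← Nat.cast_smul_eq_nsmul ℝ]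
  ext i j
  by_cases hij : i = j
  · subst hij; simp
  · by_cases ha : Γ.Adj i j <;> simp [ha, hij]

open Matrix in
/-- The multiplicity equation `(2 f − (v − 1)) √Δ = −(2 k + (l − m)(v − 1))`, where `f` is the
multiplicity of the eigenvalue `((l − m) + √Δ) / 2`. -/
lemma exists_multiplicity {V : Type*} [Fintype V] (Γ : SimpleGraph V) [DecidableRel Γ.Adj]
    {v k l m : ℕ} (h : Γ.IsSRGWith v k l m) (hv : (v : ℝ) ≠ 0)
    (hpar : (k : ℝ) * (k - l - 1) = (v - k - 1) * m) (s : ℝ) (hs0 : s ≠ 0)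
    (hs : s ^ 2 = ((l : ℝ) - m) ^ 2 + 4 * ((k : ℝ) - m)) :
    ∃ f : ℕ, (2 * (f : ℝ) - (v - 1)) * s = -(2 * k + ((l : ℝ) - m) * (v - 1)) := by
  classical
  set A := Γ.adjMatrix ℝ with hA
  set J : Matrix V V ℝ := Matrix.of (fun _ _ => (1 : ℝ)) with hJ
  have hAA : A * A = ((k : ℝ) - m) • (1 : Matrix V V ℝ) + ((l : ℝ) - m) • A + (m : ℝ) • J :=
    adjMatrix_mul_self_eq Γ h
  have hAJ : A * J = (k : ℝ) • J := by
    ext i j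
    simp [hA, hJ, h.regular i]
  have hJA : J * A = (k : ℝ) • J := by
    ext i j
    simp [hA, hJ, h.regular j]
  have hJJ : J * J = (v : ℝ) • J := by
    ext i j
    simp [hJ, Matrix.mul_apply, h.card]
  -- With `B = A - (k / v) J`, `E = I - J / v` and `τ = (e - s) / 2`, the projection
  -- `(B - τ E) / s` equals `a I + b A + g J` for the following coefficients.
  obtain ⟨a, ha⟩ : ∃ a : ℝ, a = (s - (l - m)) / (2 * s) := ⟨_, rfl⟩
  obtain ⟨b, hb⟩ : ∃ b : ℝ, b = 1 / s := ⟨_, rfl⟩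
  obtain ⟨g, hg⟩ : ∃ g : ℝ, g = ((l - m) - s - 2 * k) / (2 * v * s) := ⟨_, rfl⟩
  have h1 : a ^ 2 + b ^ 2 * (k - m) = a := by
    rw [ha, hb]; field_simp; linear_combination -hs
  have h2 : 2 * a * b + b ^ 2 * (l - m) = b := by
    rw [ha, hb]; field_simp; ring
  have h3 : b ^ 2 * m + g ^ 2 * v + 2 * a * g + 2 * b * g * k = g := by
    rw [ha, hb, hg]; field_simp; linear_combination hs - 4 * hpar
  obtain ⟨f, hf⟩ := exists_trace_eq_natCast (a • (1 : Matrix V V ℝ) + b • A + g • J) (by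
    simp only [add_mul, mul_add, smul_mul_assoc, mul_smul_comm, one_mul, mul_one, hAA, hAJ, hJA,
      hJJ]
    linear_combination (norm := module) h1 • (1 : Matrix V V ℝ) + h2 • A + h3 • J)
  refine ⟨f, ?_⟩
  have htJ : J.trace = v := by simp [hJ, Matrix.trace, h.card]
  have htA : A.trace = 0 := by simp [hA]
  rw [Matrix.trace_add, Matrix.trace_add, Matrix.trace_smul, Matrix.trace_smul, Matrix.trace_smul,
    Matrix.trace_one, htJ, htA, h.card, ha, hg] at hf
  simp only [smul_eq_mul] at hf
  rw [← hf]
  field_simp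
  ring

/-- If `Δ = (l−m)² + 4(k−m)` is not a perfect square, then a `(v,k,l,m)` strongly regular graph
with `0 < m`, `m < k`, `k < v−1` is a conference graph: `v = 4m+1`, `k = 2m`, `l+1 = m`. -/
theorem stmt_1 {V : Type*} [Fintype V] (Γ : SimpleGraph V) [DecidableRel Γ.Adj]
    (v k l m : ℕ) (h : Γ.IsSRGWith v k l m)
    (hm : 0 < m) (hmk : m < k) (hkv : k < v - 1)
    (hΔ : ¬ ∃ s : ℤ, ((l : ℤ) - (m : ℤ)) ^ 2 + 4 * ((k : ℤ) - (m : ℤ)) = s ^ 2) :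
    v = 4 * m + 1 ∧ k = 2 * m ∧ l + 1 = m := by
  have hpar := h.param_eq Γ (by omega)
  -- The right-hand side of `hpar` is positive, so its natural subtractions do not truncate.
  have hlk : l + 1 < k := by
    by_contra! hc
    have h0 : k - l - 1 = 0 := by omega
    have h1 : 0 < (v - k - 1) * m := Nat.mul_pos (by omega) hm
    rw [← hpar, h0] at h1
    simp at h1
  have hparZ : (k : ℤ) * (k - l - 1) = (v - k - 1) * m := by
    zify [show l ≤ k by omega, show 1 ≤ k - l by omega, show k ≤ v by omega,
      show 1 ≤ v - k by omega] at hpar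
    exact hpar
  have hmkR : (m : ℝ) < k := by exact_mod_cast hmk
  have hpos : 0 < ((l : ℝ) - m) ^ 2 + 4 * ((k : ℝ) - m) := by nlinarith [sq_nonneg ((l : ℝ) - m)]
  obtain ⟨f, hf⟩ := exists_multiplicity Γ h (by norm_cast; omega) (by exact_mod_cast hparZ)
    _ (Real.sqrt_pos.2 hpos).ne' (Real.sq_sqrt hpos.le)
  have hsq : (2 * (f : ℤ) - (v - 1)) ^ 2 * (((l : ℤ) - m) ^ 2 + 4 * ((k : ℤ) - m))
      = (2 * k + ((l : ℤ) - m) * (v - 1)) ^ 2 := by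
    have h2 := congrArg (· ^ 2) hf
    simp only [mul_pow, Real.sq_sqrt hpos.le, neg_sq] at h2
    exact_mod_cast h2
  have hN : 2 * (f : ℤ) - (v - 1) = 0 := by
    by_contra hN
    obtain ⟨t, ht⟩ := (Int.pow_dvd_pow_iff two_ne_zero).1 (Dvd.intro _ hsq)
    rw [ht, mul_pow] at hsq
    exact hΔ ⟨t, mul_left_cancel₀ (pow_ne_zero 2 hN) hsq⟩
  rw [hN] at hsq
  have hM : 2 * (k : ℤ) + (l - m) * (v - 1) = 0 := by
    apply pow_eq_zero_iff two_ne_zero |>.1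
    rw [← hsq]; ring
  have hkv' : (k : ℤ) < v - 1 := by omega
  have hk : (0 : ℤ) < k := by omega
  -- `0 < (m - l)(v - 1) = 2 k < 2 (v - 1)`.
  have e1 : (0 : ℤ) < m - l := by
    by_contra! hc
    nlinarith
  have e2 : (m : ℤ) - l < 2 := by
    by_contra! hc
    nlinarith
  have e3 : (m : ℤ) = l + 1 := by omega
  have e4 : (v : ℤ) = 2 * k + 1 := by rw [e3] at hM; linarith
  have e5 : (k : ℤ) = 2 * m := by
    apply mul_left_cancel₀ hk.ne'
    rw [e4] at hparZ
    rw [e3] at hparZ ⊢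
    linear_combination hparZ
  omega
end

section
/- Let Γ be a strongly regular graph with parameters (v,k,λ,μ) satisfying 0 < μ, μ < k, and k < v−1, and suppose the integer Δ := (λ−μ)² + 4(k−μ) equals s² for a natural number s. Then, in ℤ, s divides 2k + (v−1)(λ−μ), and the eigenvalue multiplicity m₁ := ((v−1) − (2k+(v−1)(λ−μ))/s)/2 is a nonnegative integer; that is, there exists a natural number m₁ with 2·m₁·s = (v−1)·s − (2k + (v−1)(λ−μ)) in ℤ. -/
/-!
The integer `m₁` is the multiplicity of the eigenvalue `θ = ((l - m) + s) / 2` of the adjacency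
matrix `A` on the orthogonal complement of the all-ones vector, and it is obtained as the trace of
the corresponding spectral projection. With `τ = ((l - m) - s) / 2` and `J` the all-ones matrix, the
relation `A² = (k - m) I + (l - m) A + m J` shows that

  `E = s⁻¹ (A - τ I - ((k - τ) / v) J)`

is idempotent over `ℚ` (`isIdempotentElem_proj`), because `θ + τ = l - m`, `θ τ = m - k` and
`(k - θ) (k - τ) = m v`. The trace of an idempotent matrix is its rank
(`exists_trace_eq_natCast`), hence a natural number, while `tr A = 0` and `tr I = tr J = v` give
`tr E = (-(v - 1) τ - k) / s`, which is the formula for `m₁`. Divisibility by `s` follows from that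
equation. No spectral theorem is needed.
-/

/-- The trace of an idempotent matrix over a field is its rank, in particular a natural number. -/
lemma exists_trace_eq_natCast_s2 {V K : Type*} [Fintype V] [DecidableEq V] [Field K]
    (E : Matrix V V K) (hE : IsIdempotentElem E) : ∃ n : ℕ, E.trace = n := by
  have h : IsIdempotentElem (Matrix.toLin' E) := by
    rw [IsIdempotentElem, Module.End.mul_eq_comp, ← Matrix.toLin'_mul, hE.eq]
  refine ⟨Module.finrank K (LinearMap.range (Matrix.toLin' E)), ?_⟩
  rw [← Matrix.trace_toLin'_eq]
  exact (LinearMap.IsIdempotentElem.isProj_range _ h).trace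

/-- The spectral projection onto the `θ`-eigenspace orthogonal to the all-ones vector, written
abstractly for elements `A`, `J` of a `ℚ`-algebra that satisfy the relations of the adjacency matrix
and of the all-ones matrix. -/
lemma isIdempotentElem_proj {R : Type*} [Ring R] [Algebra ℚ R] (A J : R) (v k m θ τ : ℚ)
    (hv : v ≠ 0) (hs : θ - τ ≠ 0) (hAJ : A * J = k • J) (hJA : J * A = k • J)
    (hJJ : J * J = v • J) (hAA : A * A = (-(θ * τ)) • (1 : R) + (θ + τ) • A + m • J)
    (hp : (k - θ) * (k - τ) = m * v) :
    IsIdempotentElem ((θ - τ)⁻¹ • (A - τ • (1 : R) - ((k - τ) / v) • J)) := by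
  have hm : m = (k - θ) * (k - τ) / v := by field_simp; linarith
  have key : (A - τ • (1 : R) - ((k - τ) / v) • J) * (A - τ • (1 : R) - ((k - τ) / v) • J)
      = (θ - τ) • (A - τ • (1 : R) - ((k - τ) / v) • J) := by
    simp only [sub_mul, mul_sub, smul_mul_assoc, mul_smul_comm, one_mul, mul_one, hAJ, hJA, hJJ,
      hAA, hm]
    match_scalars <;> field_simp <;> ring
  rw [IsIdempotentElem, smul_mul_smul_comm, key, smul_smul]
  congr 1
  field_simp

/-- The multiplicity condition: if `Δ = (l−m)² + 4(k−m) = s²`, then `s` divides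
`2k + (v−1)(l−m)` and `m₁ = ((v−1) − (2k+(v−1)(l−m))/s)/2` is a nonnegative integer. -/
theorem stmt_2 {V : Type*} [Fintype V] (Γ : SimpleGraph V) [DecidableRel Γ.Adj]
    (v k l m : ℕ) (h : Γ.IsSRGWith v k l m)
    (hm : 0 < m) (hmk : m < k) (hkv : k < v - 1)
    (s : ℕ) (hΔ : ((l : ℤ) - (m : ℤ)) ^ 2 + 4 * ((k : ℤ) - (m : ℤ)) = (s : ℤ) ^ 2) :
    (s : ℤ) ∣ 2 * (k : ℤ) + ((v : ℤ) - 1) * ((l : ℤ) - (m : ℤ)) ∧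
      ∃ m₁ : ℕ, 2 * (m₁ : ℤ) * (s : ℤ) =
        ((v : ℤ) - 1) * (s : ℤ) - (2 * (k : ℤ) + ((v : ℤ) - 1) * ((l : ℤ) - (m : ℤ))) := by
  classical
  have hs : (s : ℚ) ≠ 0 := by
    rintro h0
    have h0' : s = 0 := by exact_mod_cast h0
    subst h0'
    have : (m : ℤ) < k := by exact_mod_cast hmk
    push_cast at hΔ
    nlinarith [sq_nonneg ((l : ℤ) - m)]
  have hv : (v : ℚ) ≠ 0 := by
    have : v ≠ 0 := by omega
    exact_mod_cast this
  have hΔ' : ((l : ℚ) - m) ^ 2 + 4 * ((k : ℚ) - m) = (s : ℚ) ^ 2 := by exact_mod_cast hΔ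
  set A : Matrix V V ℚ := Γ.adjMatrix ℚ with hA
  set J : Matrix V V ℚ := Matrix.of 1 with hJ
  have hAJ : A * J = (k : ℚ) • J := by
    ext i j
    simp [hA, hJ, h.regular i]
  have hJA : J * A = (k : ℚ) • J := by
    ext i j
    simp [hA, hJ, h.regular j]
  have hJJ : J * J = (v : ℚ) • J := by
    ext i j
    simp [hJ, Matrix.mul_apply, h.card]
  have hcompl : Γᶜ.adjMatrix ℚ = J - 1 - A := by
    rw [hJ, ← SimpleGraph.one_add_adjMatrix_add_compl_adjMatrix_eq_of_one (α := ℚ) (G := Γ),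
      SimpleGraph.compl_adjMatrix_eq_adjMatrix_compl]
    abel
  have hAA : A * A = ((k : ℚ) - m) • (1 : Matrix V V ℚ) + ((l : ℚ) - m) • A + (m : ℚ) • J := by
    rw [← pow_two, h.matrix_eq, hcompl]
    module
  -- Applying `A²` to the all-ones vector in two ways gives `k² = (k - m) + (l - m) k + m v`.
  have hp : (k : ℚ) * k = (k - m) + (l - m) * k + m * v := by
    have h1 : A * A * J = ((k : ℚ) * k) • J := by
      rw [mul_assoc, hAJ, mul_smul_comm, hAJ, smul_smul]
    rw [hAA, add_mul, add_mul, smul_mul_assoc, smul_mul_assoc, smul_mul_assoc, one_mul, hAJ, hJJ]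
      at h1
    have : 0 < Fintype.card V := by rw [h.card]; omega
    obtain ⟨x⟩ := Fintype.card_pos_iff.mp this
    have h2 := congrFun (congrFun h1 x) x
    simp [hJ] at h2
    linarith
  have hE := isIdempotentElem_proj A J v k m (((l - m : ℚ) + s) / 2) (((l - m : ℚ) - s) / 2) hv
    (by ring_nf; exact hs) hAJ hJA hJJ
    (by
        rw [hAA]
        congr 3
        · linear_combination (1 / 4 : ℚ) * hΔ'
        · ring)
    (by linear_combination hp + (1 / 4 : ℚ) * hΔ')
  obtain ⟨n, hn⟩ := exists_trace_eq_natCast_s2 _ hE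
  have htA : A.trace = 0 := Γ.trace_adjMatrix ℚ
  have htJ : J.trace = v := by simp [hJ, Matrix.trace, h.card]
  have hts : ((l - m : ℚ) + s) / 2 - ((l - m : ℚ) - s) / 2 = s := by ring
  rw [Matrix.trace_smul, Matrix.trace_sub, Matrix.trace_sub, Matrix.trace_smul, Matrix.trace_smul,
    htA, htJ, Matrix.trace_one, h.card, hts] at hn
  simp only [smul_eq_mul] at hn
  have hmul : 2 * (n : ℤ) * s = ((v : ℤ) - 1) * s - (2 * k + ((v : ℤ) - 1) * (l - m)) := by
    have : 2 * (n : ℚ) * s = ((v : ℚ) - 1) * s - (2 * k + ((v : ℚ) - 1) * (l - m)) := by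
      rw [← hn]
      field_simp
      ring
    exact_mod_cast this
  exact ⟨⟨(v : ℤ) - 1 - 2 * n, by linear_combination hmul⟩, n, hmul⟩
end

section
/- (Ma's Multiplier Theorem) Let G be a finite abelian group of order v and let S be a (v,k,λ,μ) partial difference set in G with 0 < k < v−1 that is Type II. If m is a positive integer with gcd(m, v) = 1, then the image of S under the map g ↦ gᵐ equals S. -/
/-!
The proof works in the group algebra `𝔽_p[G]` for a prime `p` not dividing `v = |G|`; the general
multiplier is a product of such primes.

Let `u = ∑_{s ∈ S} s` and `w = ∑_{g ∈ G} g`. The PDS condition reads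
`u² = k + l u + m (w - 1 - u)`. Type II says that `X² - (l - m) X - (k - m)` has integer roots
`a, b`, so `(u - a)(u - b) = m w`. As `u w = k w`, this gives `(u - a)(u - b)(u - k) = 0`
(`IsPDS.cubic`). Each of `u - a`, `u - b`, `u - k` divides `u^p - u` by Fermat's little theorem, so
`(u^p - u)³ = 0`.

The Frobenius of `𝔽_p[G]` is induced by the map `g ↦ g^p` of `G`
(`frobenius_eq_mapDomainRingHom`), which is injective because `p ∤ v`. Hence `𝔽_p[G]` is reduced and
`u^p = u`. But `u^p = ∑_{s ∈ S} s^p`, and comparing coefficients gives `S^(p) = S`.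
-/

attribute [local instance] Classical.propDecidable

/-- `S` is a `(v,k,l,m)` partial difference set in the group `G`:
`G` has order `v`, `|S| = k`, `1 ∉ S`, `S = S⁻¹`, and every nonidentity `g ∈ G` has exactly
`l` (resp. `m`) representations `g = x * y⁻¹` with `x, y ∈ S` when `g ∈ S` (resp. `g ∉ S`). -/
def IsPDS {G : Type*} [Group G] (v k l m : ℕ) (S : Set G) : Prop :=
  Nat.card G = v ∧ Nat.card S = k ∧ (1 : G) ∉ S ∧ (∀ s ∈ S, s⁻¹ ∈ S) ∧
  ∀ g : G, g ≠ 1 →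
    Nat.card {p : ↥S × ↥S // (p.1 : G) * (p.2 : G)⁻¹ = g} = if g ∈ S then l else m

open MonoidAlgebra in
/-- In characteristic `p` the Frobenius of the group algebra over `𝔽_p` is induced by the
`p`-power map of the group. -/
lemma frobenius_eq_mapDomainRingHom {G : Type*} [CommGroup G] (p : ℕ) [Fact p.Prime]
    [CharP (MonoidAlgebra (ZMod p) G) p] :
    frobenius (MonoidAlgebra (ZMod p) G) p = mapDomainRingHom (ZMod p) (powMonoidHom p : G →* G) := by
  refine MonoidAlgebra.ringHom_ext (fun r => ?_) (fun g => ?_)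
  · simp [frobenius_def, MonoidAlgebra.single_pow, ZMod.pow_card]
  · simp [frobenius_def, MonoidAlgebra.single_pow]

/-- Fermat's little theorem makes `u - a` a divisor of `u ^ p - u` for every integer `a`. -/
lemma sub_intCast_dvd_pow_sub {A : Type*} [CommRing A] (p : ℕ) [Fact p.Prime] [CharP A p]
    (u : A) (a : ℤ) : u - (a : A) ∣ u ^ p - u := by
  have ha : (a : A) ^ p = a := by
    have h : ((a : ZMod p)) ^ p = a := ZMod.pow_card _
    have := congrArg (ZMod.castHom (dvd_refl p) A) h
    rwa [map_pow, map_intCast] at this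
  have h := sub_dvd_pow_sub_pow u (a : A) p
  rw [ha] at h
  have h2 := dvd_sub h (dvd_refl (u - (a : A)))
  simpa using h2

/-- A Type II discriminant makes the quadratic `X² - (l - m) X - (k - m)` split over `ℤ`. -/
lemma exists_int_roots (k l m : ℤ) (hII : ∃ s : ℤ, (l - m) ^ 2 + 4 * (k - m) = s ^ 2) :
    ∃ a b : ℤ, a + b = l - m ∧ a * b = m - k := by
  obtain ⟨s, hs⟩ := hII
  -- `s` has the parity of `l - m`, as their squares agree modulo 4.
  have hpar : Even (l - m + s) := by
    have h1 : Even ((l - m) ^ 2 + s ^ 2) := ⟨(l - m) ^ 2 + 2 * (k - m), by rw [← hs]; ring⟩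
    rw [Int.even_add, Int.even_pow' two_ne_zero, Int.even_pow' two_ne_zero] at h1
    rwa [Int.even_add]
  obtain ⟨a, ha⟩ := hpar
  refine ⟨a, l - m - a, by ring, ?_⟩
  have hs' : s = 2 * a - (l - m) := by linarith
  subst hs'
  linarith

section GroupAlgebra

open MonoidAlgebra Finset

variable {G : Type*} [CommGroup G] [Fintype G]

/-- The PDS condition as an identity in the group algebra. -/
lemma IsPDS.sq_eq {v k l m : ℕ} {S : Set G} (hS : IsPDS v k l m S)
    (R : Type*) [CommRing R] :
    (∑ s with s ∈ S, of R G s) * (∑ s with s ∈ S, of R G s) =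
      (k : MonoidAlgebra R G) + (l : MonoidAlgebra R G) * (∑ s with s ∈ S, of R G s)
        + (m : MonoidAlgebra R G) * ((∑ g, of R G g) - 1 - ∑ s with s ∈ S, of R G s) := by
  obtain ⟨-, hk, h1, hinv, hcount⟩ := hS
  set T : Finset G := univ.filter (· ∈ S) with hT
  have hkT : T.card = k := by
    rw [← hk, hT, Nat.card_eq_fintype_card, Fintype.card_subtype]
  have hinvsum : ∑ s ∈ T, of R G s = ∑ s ∈ T, of R G s⁻¹ := by
    refine Finset.sum_nbij' (fun x => x⁻¹) (fun x => x⁻¹) ?_ ?_ ?_ ?_ ?_ <;> simp [hT]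
    · exact hinv
    · exact hinv
  -- The number of representations of `g` as a quotient of elements of `T`.
  have hN : ∀ g : G, (((T ×ˢ T).filter (fun q => q.1 * q.2⁻¹ = g)).card) =
      if g = 1 then k else if g ∈ S then l else m := by
    intro g
    split_ifs with hg hgS
    · subst hg
      rw [← hkT, eq_comm]
      refine Finset.card_nbij' (fun x => (x, x)) (fun q => q.1) ?_ ?_ ?_ ?_
      · intro x hx; simpa using hx
      · intro q hq; simp at hq ⊢; exact hq.1.1
      · intro x hx; rfl
      · intro q hq
        simp [mul_inv_eq_one] at hq
        exact Prod.ext rfl hq.2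
    all_goals
      have hc := hcount g hg
      simp only [hgS, if_true, if_false] at hc
      rw [← hc, ← Nat.card_eq_finsetCard]
      refine Nat.card_congr
        { toFun := fun q => ⟨(⟨q.1.1, ?_⟩, ⟨q.1.2, ?_⟩), ?_⟩
          invFun := fun q => ⟨(q.1.1, q.1.2), ?_⟩
          left_inv := fun q => rfl
          right_inv := fun q => rfl }
      · exact (Finset.mem_filter.mp (Finset.mem_product.mp (Finset.mem_filter.mp q.2).1).1).2
      · exact (Finset.mem_filter.mp (Finset.mem_product.mp (Finset.mem_filter.mp q.2).1).2).2
      · exact (Finset.mem_filter.mp q.2).2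
      · simp [hT, q.2]
  have key : (∑ s ∈ T, of R G s) * (∑ s ∈ T, of R G s) =
      ∑ g, (((T ×ˢ T).filter (fun q => q.1 * q.2⁻¹ = g)).card : MonoidAlgebra R G) * of R G g := by
    nth_rewrite 2 [hinvsum]
    rw [Finset.sum_mul_sum, ← Finset.sum_product',
      ← Finset.sum_fiberwise (T ×ˢ T) (fun q => q.1 * q.2⁻¹)]
    refine Finset.sum_congr rfl fun g _ => ?_
    rw [← nsmul_eq_mul]
    refine Finset.sum_eq_card_nsmul fun q hq => ?_
    rw [← map_mul, (Finset.mem_filter.mp hq).2]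
  rw [key]
  have hterm : ∀ g : G,
      (((T ×ˢ T).filter (fun q => q.1 * q.2⁻¹ = g)).card : MonoidAlgebra R G) * of R G g =
      (if g = 1 then (k : MonoidAlgebra R G) else 0) + l * (if g ∈ S then of R G g else 0)
      + m * (of R G g - (if g = 1 then 1 else 0) - (if g ∈ S then of R G g else 0)) := by
    intro g
    rw [hN]
    by_cases hg : g = 1
    · subst hg; simp [h1, ← MonoidAlgebra.one_def]
    · by_cases hgS : g ∈ S <;> simp [hg, hgS]
  rw [Finset.sum_congr rfl fun g _ => hterm g]
  simp only [Finset.sum_add_distrib, ← Finset.mul_sum, Finset.sum_sub_distrib, hT,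
    Finset.sum_filter, Finset.sum_ite_eq', Finset.mem_univ, if_true]

lemma sum_mul_sum_univ (R : Type*) [CommRing R] (T : Finset G) :
    (∑ s ∈ T, of R G s) * (∑ g, of R G g) = (T.card : MonoidAlgebra R G) * ∑ g, of R G g := by
  rw [Finset.sum_mul, ← nsmul_eq_mul]
  refine Finset.sum_eq_card_nsmul fun s _ => ?_
  rw [Finset.mul_sum]
  exact Fintype.sum_equiv (Equiv.mulLeft s) _ _ (fun g => by simp)

/-- The element of the group algebra attached to a Type II PDS is a root of a cubic that splits
over `ℤ`. -/
lemma IsPDS.cubic {v k l m : ℕ} {S : Set G} (hS : IsPDS v k l m S)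
    (hII : ∃ s : ℤ, ((l : ℤ) - (m : ℤ)) ^ 2 + 4 * ((k : ℤ) - (m : ℤ)) = s ^ 2)
    (R : Type*) [CommRing R] :
    ∃ a b c : ℤ, ((∑ s with s ∈ S, of R G s) - (a : MonoidAlgebra R G)) *
      ((∑ s with s ∈ S, of R G s) - (b : MonoidAlgebra R G)) *
      ((∑ s with s ∈ S, of R G s) - (c : MonoidAlgebra R G)) = 0 := by
  obtain ⟨a, b, hab, hab'⟩ := exists_int_roots k l m hII
  refine ⟨a, b, k, ?_⟩
  have hsq := hS.sq_eq R
  have hw := sum_mul_sum_univ R (univ.filter (· ∈ S))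
  have hkT : (univ.filter (· ∈ S)).card = k := by
    rw [← hS.2.1, Nat.card_eq_fintype_card, Fintype.card_subtype]
  rw [hkT] at hw
  generalize (∑ s with s ∈ S, of R G s) = u at *
  generalize (∑ g, of R G g) = w at *
  have e1 : (a : MonoidAlgebra R G) + b = l - m := by exact_mod_cast congrArg (Int.cast) hab
  have e2 : (a : MonoidAlgebra R G) * b = m - k := by exact_mod_cast congrArg (Int.cast) hab'
  push_cast
  linear_combination (u - k) * hsq - u * (u - k) * e1 + (u - k) * e2 + m * hw

/-- The multiplier theorem for a prime multiplier. -/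
lemma IsPDS.pow_prime {v k l m : ℕ} {S : Set G} (hS : IsPDS v k l m S)
    (hII : ∃ s : ℤ, ((l : ℤ) - (m : ℤ)) ^ 2 + 4 * ((k : ℤ) - (m : ℤ)) = s ^ 2)
    (p : ℕ) (hp : p.Prime) (hcop : p.Coprime v) :
    (fun g : G => g ^ p) '' S = S := by
  have : Fact p.Prime := ⟨hp⟩
  have : CharP (MonoidAlgebra (ZMod p) G) p := charP_of_injective_algebraMap' (ZMod p) p
  have hinj : Function.Injective (fun g : G => g ^ p) := by
    have hc : (Nat.card G).Coprime p := by rw [hS.1]; exact hcop.symm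
    exact (powCoprime hc).injective
  have hfrob (x : MonoidAlgebra (ZMod p) G) : x ^ p = mapDomain (fun g : G => g ^ p) x :=
    RingHom.congr_fun (frobenius_eq_mapDomainRingHom (G := G) p) x
  have hred : IsReduced (MonoidAlgebra (ZMod p) G) := by
    refine (isReduced_iff_pow_one_lt p hp.one_lt).mpr fun x hx => ?_
    rw [hfrob] at hx
    exact mapDomain_injective hinj (by rw [hx, mapDomain_zero])
  obtain ⟨a, b, c, habc⟩ := hS.cubic hII (ZMod p)
  set u : MonoidAlgebra (ZMod p) G := ∑ s with s ∈ S, of (ZMod p) G s with hu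
  have hdvd := mul_dvd_mul (mul_dvd_mul (sub_intCast_dvd_pow_sub p u a)
    (sub_intCast_dvd_pow_sub p u b)) (sub_intCast_dvd_pow_sub p u c)
  rw [habc, zero_dvd_iff] at hdvd
  have hup : u ^ p = u := by
    have : (u ^ p - u) ^ 3 = 0 := by rw [← hdvd]; ring
    exact sub_eq_zero.mp (pow_eq_zero_iff three_ne_zero |>.mp this)
  have hcoeff (g : G) : u.coeff g = if g ∈ S then 1 else 0 := by
    simp [hu, Finsupp.single_apply, Finsupp.finsetSum_apply]
  have hsub : (fun g : G => g ^ p) '' S ⊆ S := by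
    rintro _ ⟨s, hs, rfl⟩
    by_contra hns
    have h1 : (u ^ p).coeff (s ^ p) = u.coeff s := by
      rw [hfrob, coeff_mapDomain]
      exact Finsupp.mapDomain_apply hinj _ _
    rw [hup, hcoeff, hcoeff, if_pos hs, if_neg hns] at h1
    exact zero_ne_one h1
  exact Set.eq_of_subset_of_ncard_le hsub (Set.ncard_image_of_injective S hinj).ge (Set.toFinite S)

end GroupAlgebra

/-- Ma's Multiplier Theorem: if `S` is a Type II `(v,k,l,m)` PDS in a finite abelian group of
order `v` with `0 < k < v−1` and `gcd(n,v) = 1`, then `{ gⁿ : g ∈ S } = S`. -/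
theorem stmt_4 {G : Type*} [CommGroup G] [Finite G] (v k l m : ℕ) (S : Set G)
    (hS : IsPDS v k l m S) (hk : 0 < k) (hkv : k < v - 1)
    (hII : ∃ s : ℤ, ((l : ℤ) - (m : ℤ)) ^ 2 + 4 * ((k : ℤ) - (m : ℤ)) = s ^ 2)
    (n : ℕ) (hn : 0 < n) (hcop : Nat.Coprime n v) :
    (fun g : G => g ^ n) '' S = S := by
  have := Fintype.ofFinite G
  clear hn
  induction n using induction_on_primes with
  | zero =>
    -- Here `v = 1`, which the bounds on `k` exclude.
    rw [Nat.coprime_zero_left] at hcop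
    omega
  | one => simp
  | prime_mul p n hp ih =>
    have h1 := hS.pow_prime hII p hp hcop.coprime_mul_right
    have h2 := ih hcop.coprime_mul_left
    calc (fun g : G => g ^ (p * n)) '' S
        = (fun g : G => g ^ n) '' ((fun g : G => g ^ p) '' S) := by
          rw [Set.image_image]; simp only [pow_mul]
      _ = S := by rw [h1, h2]
end

section
/- (Bridges–Mena, Delsarte) Let G be a finite abelian group of order v, let S be a (v,k,λ,μ) partial difference set in G with 0 < k < v−1, and let θ be an integer with θ ≠ k and θ² = (λ−μ)·θ + (k−μ). Let Ĝ be the character group of G, i.e., the (abelian) group of group homomorphisms from G to ℂˣ under pointwise multiplication, and set S* := { χ ∈ Ĝ : Σ_{s ∈ S} χ(s) = θ }. Then there exist natural numbers λ*, μ* such that S* is a (v, |S*|, λ*, μ*) partial difference set in Ĝ. -/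
/-!
A partial difference set is recognised by its character sums. Write `F χ = ∑ s ∈ S, χ s`.
Since `S` is symmetric, `(F χ)²` is the sum of `N g * χ g` over `g ∈ G`, where `N g` is the number
of representations `g = x * y⁻¹` in `S` (`sq_charSum`). For a PDS, `N` is a linear combination of
the indicators of `{1}`, `S` and `G`, so orthogonality makes `F χ`, for `χ ≠ 1`, a root of
`X² = (l - m) X + (k - m)`, that is `θ` or `τ = l - m - θ` (`IsPDS.charSum_sq`).

Hence `(θ - τ) 1_{S*}(χ) = F χ - τ` for `χ ≠ 1`, and Fourier inversion shows that the dual sum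
`∑ χ ∈ S*, χ g` takes only two values for `g ≠ 1`: one on `S`, one off `S`
(`exists_dualSum_quadratic`). So off `1` it satisfies a quadratic equation with constant
coefficients. Applying `sq_charSum` to `S*` in the dual group and inverting once more
(`card_mul_repCount`), the representation count of `S*` at `χ ≠ 1` depends only on whether
`χ ∈ S*`. If `θ = τ`, then `S*` consists of all nontrivial characters and its dual sum is
constantly `-1` off `1`, so the same conclusion applies.
-/

attribute [local instance] Classical.propDecidable

/-- The number of representations `g = x * y⁻¹` with `x, y ∈ S`. -/
noncomputable def repCount {G : Type*} [Group G] (S : Set G) (g : G) : ℕ :=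
  Nat.card {p : ↥S × ↥S // (p.1 : G) * (p.2 : G)⁻¹ = g}

lemma sum_char {G : Type*} [Group G] [Fintype G] (χ : G →* ℂˣ) :
    ∑ g : G, ((χ g : ℂˣ) : ℂ) = if χ = 1 then (Fintype.card G : ℂ) else 0 := by
  split_ifs with h
  · simp [h]
  · refine sum_hom_units_eq_zero ((Units.coeHom ℂ).comp χ) fun h' ↦ h ?_
    ext g
    simpa using DFunLike.congr_fun h' g

lemma sum_dual {G : Type*} [CommGroup G] [Fintype G] [Fintype (G →* ℂˣ)] (g : G) :
    ∑ χ : G →* ℂˣ, ((χ g : ℂˣ) : ℂ) = if g = 1 then (Fintype.card G : ℂ) else 0 := by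
  have h := sum_char (MonoidHom.eval g : (G →* ℂˣ) →* ℂˣ)
  have hc : Fintype.card (G →* ℂˣ) = Fintype.card G := by
    simpa using CommGroup.card_monoidHom_of_hasEnoughRootsOfUnity G ℂ
  have he : (MonoidHom.eval g : (G →* ℂˣ) →* ℂˣ) = 1 ↔ g = 1 := by
    constructor
    · intro h1
      refine (CommGroup.forall_apply_eq_apply_iff (M := ℂ) G).1 fun φ ↦ ?_
      simpa using DFunLike.congr_fun h1 φ
    · rintro rfl
      ext φ
      simp
  simpa [he, hc] using h

lemma sum_coe_inv {A : Type*} [Group A] [Fintype A] {T : Set A} (hT : ∀ t ∈ T, t⁻¹ ∈ T)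
    (f : A → ℂ) : ∑ t : ↥T, f (t : A)⁻¹ = ∑ t : ↥T, f t :=
  Fintype.sum_bijective (fun t : ↥T ↦ (⟨(t : A)⁻¹, hT _ t.2⟩ : ↥T))
    (Function.Involutive.bijective fun t ↦ by simp) _ _ fun _ ↦ rfl

/-- The square of a character sum over a symmetric set is the Fourier transform of the
representation count of the set. -/
lemma sq_charSum {A : Type*} [Group A] [Fintype A] {T : Set A} (hT : ∀ t ∈ T, t⁻¹ ∈ T)
    (φ : A →* ℂˣ) :
    (∑ t : ↥T, ((φ t : ℂˣ) : ℂ)) ^ 2 = ∑ a : A, (repCount T a : ℂ) * ((φ a : ℂˣ) : ℂ) := by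
  have hN : ∀ a : A, (repCount T a : ℂ) =
      ∑ p : ↥T × ↥T, if (p.1 : A) * (p.2 : A)⁻¹ = a then 1 else 0 := by
    intro a
    rw [repCount, Nat.card_eq_fintype_card, Fintype.card_subtype]
    simp
  simp_rw [hN, Finset.sum_mul]
  rw [Finset.sum_comm, sq]
  nth_rewrite 2 [← sum_coe_inv hT fun t ↦ ((φ t : ℂˣ) : ℂ)]
  rw [Finset.sum_mul_sum, Fintype.sum_prod_type]
  simp [ite_mul]

lemma repCount_one {A : Type*} [Group A] (T : Set A) : repCount T 1 = Nat.card T := by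
  refine Nat.card_congr ⟨fun p ↦ p.1.1, fun t ↦ ⟨(t, t), by simp⟩, fun p ↦ ?_, fun t ↦ rfl⟩
  obtain ⟨⟨x, y⟩, h⟩ := p
  have : x = y := Subtype.ext (mul_inv_eq_one.1 h)
  simp [this]

lemma sum_ite_mem {A : Type*} [Fintype A] (T : Set A) (f : A → ℂ) :
    (∑ a : A, if a ∈ T then f a else 0) = ∑ t : ↥T, f t := by
  rw [← Finset.sum_filter]
  exact Finset.sum_subtype _ (by simp) _

lemma IsPDS.charSum_sq {G : Type*} [CommGroup G] [Fintype G] {v k l m : ℕ} {S : Set G}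
    (hS : IsPDS v k l m S) {χ : G →* ℂˣ} (hχ : χ ≠ 1) :
    (∑ s : ↥S, ((χ s : ℂˣ) : ℂ)) ^ 2 =
      ((l : ℂ) - m) * (∑ s : ↥S, ((χ s : ℂˣ) : ℂ)) + (k - m) := by
  obtain ⟨-, hk, h1, hinv, hN⟩ := hS
  have key : ∀ g : G, (repCount S g : ℂ) * ((χ g : ℂˣ) : ℂ) =
      (if g = 1 then ((k : ℂ) - m) else 0) + ((l : ℂ) - m) * (if g ∈ S then ((χ g : ℂˣ) : ℂ) else 0)
        + m * ((χ g : ℂˣ) : ℂ) := by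
    intro g
    by_cases hg : g = 1
    · subst hg
      rw [repCount_one, hk]
      simp [h1]
    · rw [repCount, hN g hg]
      by_cases hgS : g ∈ S <;> simp [hg, hgS]
      ring
  rw [sq_charSum hinv, Finset.sum_congr rfl fun g _ ↦ key g, Finset.sum_add_distrib,
    Finset.sum_add_distrib, ← Finset.mul_sum, ← Finset.mul_sum, sum_ite_mem, sum_char, if_neg hχ]
  simp
  ring

/-- Fourier inversion for a function `w` on the dual group: the transform of `w` is a function on
`G`, and summing it against `χ⁻¹` recovers `w χ` up to the factor `|G|`. -/
lemma fourier_inversion {G : Type*} [CommGroup G] [Fintype G] [Fintype (G →* ℂˣ)]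
    (w : (G →* ℂˣ) → ℂ) (χ : G →* ℂˣ) :
    ∑ g : G, (∑ ψ : G →* ℂˣ, w ψ * ((ψ g : ℂˣ) : ℂ)) * (((χ⁻¹) g : ℂˣ) : ℂ) =
      Fintype.card G * w χ := by
  simp_rw [Finset.sum_mul]
  rw [Finset.sum_comm]
  have : ∀ ψ : G →* ℂˣ, ∑ g : G, w ψ * ((ψ g : ℂˣ) : ℂ) * (((χ⁻¹) g : ℂˣ) : ℂ) =
      if ψ = χ then Fintype.card G * w ψ else 0 := by
    intro ψ
    have h := sum_char (ψ * χ⁻¹)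
    have hiff : ψ * χ⁻¹ = 1 ↔ ψ = χ := mul_inv_eq_one (G := G →* ℂˣ)
    simp only [hiff] at h
    simp_rw [mul_assoc, ← Finset.mul_sum]
    simp only [MonoidHom.mul_apply, Units.val_mul] at h
    rw [h]
    split_ifs <;> ring
  rw [Finset.sum_congr rfl fun ψ _ ↦ this ψ]
  simp

/-- If the dual sum of `T` satisfies a fixed quadratic equation at every `g ≠ 1`, then the
representation count of `T` is, off `1`, an affine function of the indicator of `T`. The
constant term absorbs the failure of the equation at `g = 1`. -/
lemma card_mul_repCount {G : Type*} [CommGroup G] [Fintype G] [Fintype (G →* ℂˣ)]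
    {T : Set (G →* ℂˣ)} (hT : ∀ t ∈ T, t⁻¹ ∈ T) {p q : ℂ}
    (hF : ∀ g : G, g ≠ 1 → (∑ ψ : ↥T, (((ψ : G →* ℂˣ) g : ℂˣ) : ℂ)) ^ 2 =
      p * (∑ ψ : ↥T, (((ψ : G →* ℂˣ) g : ℂˣ) : ℂ)) + q) :
    ∃ C : ℂ, ∀ χ : G →* ℂˣ, χ ≠ 1 →
      (Fintype.card G : ℂ) * repCount T χ = Fintype.card G * (p * if χ ∈ T then 1 else 0) + C := by
  set F : G → ℂ := fun g ↦ ∑ ψ : ↥T, (((ψ : G →* ℂˣ) g : ℂˣ) : ℂ) with hFdef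
  refine ⟨F 1 ^ 2 - p * F 1 - q, fun χ hχ ↦ ?_⟩
  have hFT : ∀ g, F g = ∑ ψ : G →* ℂˣ, (if ψ ∈ T then 1 else 0) * ((ψ g : ℂˣ) : ℂ) := by
    intro g
    simp only [hFdef, ite_mul, one_mul, zero_mul]
    exact (sum_ite_mem T fun ψ ↦ ((ψ g : ℂˣ) : ℂ)).symm
  have hsq : ∀ g, F g ^ 2 = ∑ ψ : G →* ℂˣ, (repCount T ψ : ℂ) * ((ψ g : ℂˣ) : ℂ) :=
    fun g ↦ sq_charSum hT (MonoidHom.eval g : (G →* ℂˣ) →* ℂˣ)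
  have key : ∀ g, F g ^ 2 * (((χ⁻¹) g : ℂˣ) : ℂ) =
      p * (F g * (((χ⁻¹) g : ℂˣ) : ℂ)) + q * (((χ⁻¹) g : ℂˣ) : ℂ) +
        if g = 1 then F 1 ^ 2 - p * F 1 - q else 0 := by
    intro g
    by_cases hg : g = 1
    · subst hg
      simp
    · have := hF g hg
      simp only [hg, if_false]
      linear_combination (((χ⁻¹) g : ℂˣ) : ℂ) * this
  have h1 := fourier_inversion (fun ψ ↦ (repCount T ψ : ℂ)) χ
  have h2 := fourier_inversion (fun ψ ↦ if ψ ∈ T then (1 : ℂ) else 0) χ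
  simp_rw [← hsq] at h1
  simp_rw [← hFT] at h2
  have h3 : ∑ g : G, (((χ⁻¹) g : ℂˣ) : ℂ) = 0 := by
    rw [sum_char, if_neg ((inv_ne_one (α := G →* ℂˣ)).2 hχ)]
  rw [← h1, Finset.sum_congr rfl fun g _ ↦ key g, Finset.sum_add_distrib, Finset.sum_add_distrib,
    ← Finset.mul_sum, ← Finset.mul_sum, h2, h3]
  simp only [Finset.sum_ite_eq', Finset.mem_univ, if_true]
  ring

/-- If every nontrivial character sum of `S` is `θ` or `τ`, and `T` is the set of characters with
sum `θ`, then the dual sum of `T` takes at most two values off `1`, hence is there a root of a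
fixed quadratic polynomial. The trivial character, whose sum need not be `θ` or `τ`, contributes
only a constant independent of `g`. -/
lemma exists_dualSum_quadratic {G : Type*} [CommGroup G] [Fintype G] [Fintype (G →* ℂˣ)]
    {S : Set G} (hS : ∀ s ∈ S, s⁻¹ ∈ S) {T : Set (G →* ℂˣ)} (h1 : 1 ∉ T) {θ τ : ℂ}
    (hT : ∀ χ : G →* ℂˣ, χ ∈ T ↔ ∑ s : ↥S, ((χ s : ℂˣ) : ℂ) = θ)
    (hτ : ∀ χ : G →* ℂˣ, χ ≠ 1 →
      ∑ s : ↥S, ((χ s : ℂˣ) : ℂ) = θ ∨ ∑ s : ↥S, ((χ s : ℂˣ) : ℂ) = τ) :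
    ∃ p q : ℂ, ∀ g : G, g ≠ 1 → (∑ ψ : ↥T, (((ψ : G →* ℂˣ) g : ℂˣ) : ℂ)) ^ 2 =
      p * (∑ ψ : ↥T, (((ψ : G →* ℂˣ) g : ℂˣ) : ℂ)) + q := by
  suffices h : ∃ a b : ℂ, ∀ g : G, g ≠ 1 → (∑ ψ : ↥T, (((ψ : G →* ℂˣ) g : ℂˣ) : ℂ)) = a ∨
      (∑ ψ : ↥T, (((ψ : G →* ℂˣ) g : ℂˣ) : ℂ)) = b by
    obtain ⟨a, b, h⟩ := h
    refine ⟨a + b, -(a * b), fun g hg ↦ ?_⟩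
    rcases h g hg with h | h <;> rw [h] <;> ring
  by_cases hθτ : θ = τ
  -- Here `T` is the set of all nontrivial characters.
  · refine ⟨-1, -1, fun g hg ↦ .inl ?_⟩
    have hmem : ∀ χ : G →* ℂˣ, (if χ ∈ T then ((χ g : ℂˣ) : ℂ) else 0) =
        ((χ g : ℂˣ) : ℂ) - if χ = 1 then 1 else 0 := by
      intro χ
      by_cases hχ : χ = 1
      · subst hχ
        simp [h1]
      · have : χ ∈ T := (hT χ).2 (by simpa [← hθτ] using hτ χ hχ)
        simp [this, hχ]
    rw [← sum_ite_mem T fun ψ ↦ ((ψ g : ℂˣ) : ℂ), Finset.sum_congr rfl fun χ _ ↦ hmem χ,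
      Finset.sum_sub_distrib, sum_dual]
    simp [hg]
  -- `(θ - τ) 1_T` is the character sum of `S` minus `τ`, corrected at the trivial character.
  · set K : ℂ := ∑ s : ↥S, (((1 : G →* ℂˣ) s : ℂˣ) : ℂ) with hK
    have hd : θ - τ ≠ 0 := sub_ne_zero.2 hθτ
    have hmem : ∀ (g : G) (χ : G →* ℂˣ), (θ - τ) * (if χ ∈ T then ((χ g : ℂˣ) : ℂ) else 0) =
        (∑ s : ↥S, ((χ (g * s) : ℂˣ) : ℂ)) - τ * ((χ g : ℂˣ) : ℂ) -
          if χ = 1 then K - τ else 0 := by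
      intro g χ
      simp only [map_mul, Units.val_mul, ← Finset.mul_sum]
      by_cases hχ : χ = 1
      · subst hχ
        rw [← hK]
        simp [h1]
      · by_cases hχT : χ ∈ T
        · rw [(hT χ).1 hχT]
          simp only [hχT, hχ, if_true, if_false]
          ring
        · rw [(hτ χ hχ).resolve_left fun h ↦ hχT ((hT χ).2 h)]
          simp only [hχT, hχ, if_false]
          ring
    have hS' : ∀ g : G, (∑ s : ↥S, if g * s = 1 then (Fintype.card G : ℂ) else 0) =
        if g ∈ S then (Fintype.card G : ℂ) else 0 := by
      intro g
      rw [← sum_ite_mem S fun s ↦ if g * s = 1 then (Fintype.card G : ℂ) else 0]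
      have : ∀ s : G, (if s ∈ S then if g * s = 1 then (Fintype.card G : ℂ) else 0 else 0) =
          if s = g⁻¹ then (if g ∈ S then (Fintype.card G : ℂ) else 0) else 0 := by
        intro s
        by_cases hs : s = g⁻¹
        · subst hs
          have : g⁻¹ ∈ S ↔ g ∈ S := ⟨fun h ↦ by simpa using hS _ h, hS g⟩
          simp [this]
        · simp [hs, mul_eq_one_iff_eq_inv']
      simp [this]
    have hF : ∀ g : G, g ≠ 1 → (θ - τ) * (∑ ψ : ↥T, (((ψ : G →* ℂˣ) g : ℂˣ) : ℂ)) =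
        (if g ∈ S then (Fintype.card G : ℂ) else 0) - (K - τ) := by
      intro g hg
      rw [← sum_ite_mem T fun ψ ↦ ((ψ g : ℂˣ) : ℂ), Finset.mul_sum,
        Finset.sum_congr rfl fun χ _ ↦ hmem g χ, Finset.sum_sub_distrib, Finset.sum_sub_distrib,
        Finset.sum_comm, ← Finset.mul_sum]
      simp_rw [sum_dual, hS']
      simp [hg]
    refine ⟨(Fintype.card G - (K - τ)) / (θ - τ), (0 - (K - τ)) / (θ - τ), fun g hg ↦ ?_⟩
    have := hF g hg
    by_cases hgS : g ∈ S
    · left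
      rw [eq_div_iff hd, mul_comm, this, if_pos hgS]
    · right
      rw [eq_div_iff hd, mul_comm, this, if_neg hgS]

/-- Bridges–Mena / Delsarte: if `S` is a `(v,k,l,m)` PDS in a finite abelian group `G` and `θ`
is a nontrivial eigenvalue (`θ ≠ k`, `θ² = (l−m)θ + (k−m)`), then
`S* = { χ ∈ Ĝ : χ(S) = θ }` is a `(v, |S*|, l*, m*)` PDS in the character group `Ĝ = G →* ℂˣ`. -/
theorem stmt_5 {G : Type*} [CommGroup G] [Fintype G] (v k l m : ℕ) (S : Set G)
    (hS : IsPDS v k l m S) (hk : 0 < k) (hkv : k < v - 1)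
    (θ : ℤ) (hθk : θ ≠ (k : ℤ)) (hθ : θ ^ 2 = ((l : ℤ) - (m : ℤ)) * θ + ((k : ℤ) - (m : ℤ))) :
    ∃ l' m' : ℕ,
      IsPDS v
        (Nat.card {χ : G →* ℂˣ | ∑ s : ↥S, ((χ (s : G) : ℂˣ) : ℂ) = (θ : ℂ)})
        l' m'
        {χ : G →* ℂˣ | ∑ s : ↥S, ((χ (s : G) : ℂˣ) : ℂ) = (θ : ℂ)} := by
  obtain ⟨hv, hcard, h1S, hinv, hN⟩ := id hS
  let _ : Fintype (G →* ℂˣ) := Fintype.ofFinite _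
  set T : Set (G →* ℂˣ) := {χ : G →* ℂˣ | ∑ s : ↥S, ((χ (s : G) : ℂˣ) : ℂ) = (θ : ℂ)} with hTdef
  have hT : ∀ χ : G →* ℂˣ, χ ∈ T ↔ ∑ s : ↥S, ((χ s : ℂˣ) : ℂ) = (θ : ℂ) := fun χ ↦ Iff.rfl
  have h1 : 1 ∉ T := by
    intro h
    rw [hT] at h
    simp only [MonoidHom.one_apply, Units.val_one, Finset.sum_const, Finset.card_univ,
      nsmul_eq_mul, mul_one, ← Nat.card_eq_fintype_card, hcard] at h
    exact hθk (by exact_mod_cast h.symm)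
  have hTinv : ∀ χ ∈ T, χ⁻¹ ∈ T := by
    intro χ hχ
    rw [hT] at hχ ⊢
    rw [← hχ, ← sum_coe_inv hinv fun s ↦ ((χ s : ℂˣ) : ℂ)]
    simp
  have hτ : ∀ χ : G →* ℂˣ, χ ≠ 1 → ∑ s : ↥S, ((χ s : ℂˣ) : ℂ) = (θ : ℂ) ∨
      ∑ s : ↥S, ((χ s : ℂˣ) : ℂ) = ((l : ℂ) - m - θ) := by
    intro χ hχ
    have h := hS.charSum_sq hχ
    have hθ' : (θ : ℂ) ^ 2 = ((l : ℂ) - m) * θ + (k - m) := by exact_mod_cast hθ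
    rw [← sub_eq_zero, ← sub_eq_zero (b := (l : ℂ) - m - θ), ← mul_eq_zero]
    linear_combination h - hθ'
  obtain ⟨p, q, hF⟩ := exists_dualSum_quadratic hinv h1 hT hτ
  obtain ⟨C, hC⟩ := card_mul_repCount hTinv hF
  have hconst : ∀ χ ψ : G →* ℂˣ, χ ≠ 1 → ψ ≠ 1 → (χ ∈ T ↔ ψ ∈ T) →
      repCount T χ = repCount T ψ := by
    intro χ ψ hχ hψ h
    have e : (Fintype.card G : ℂ) * repCount T χ = Fintype.card G * repCount T ψ := by
      rw [hC χ hχ, hC ψ hψ]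
      simp only [h]
    exact_mod_cast mul_left_cancel₀ (Nat.cast_ne_zero.2 Fintype.card_ne_zero) e
  -- A class with no nontrivial character imposes no condition on its parameter.
  have hex : ∀ P : (G →* ℂˣ) → Prop, (∀ χ ψ, P χ → P ψ → repCount T χ = repCount T ψ) →
      ∃ n, ∀ χ, P χ → repCount T χ = n := by
    intro P hP
    by_cases h : ∃ χ, P χ
    · obtain ⟨χ, hχ⟩ := h
      exact ⟨repCount T χ, fun ψ hψ ↦ hP _ _ hψ hχ⟩
    · exact ⟨0, fun χ hχ ↦ (h ⟨χ, hχ⟩).elim⟩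
  obtain ⟨l', hl'⟩ := hex (fun χ ↦ χ ≠ 1 ∧ χ ∈ T) fun χ ψ hχ hψ ↦
    hconst χ ψ hχ.1 hψ.1 (iff_of_true hχ.2 hψ.2)
  obtain ⟨m', hm'⟩ := hex (fun χ ↦ χ ≠ 1 ∧ χ ∉ T) fun χ ψ hχ hψ ↦
    hconst χ ψ hχ.1 hψ.1 (iff_of_false hχ.2 hψ.2)
  refine ⟨l', m', ?_, rfl, h1, hTinv, fun χ hχ ↦ ?_⟩
  · rw [CommGroup.card_monoidHom_of_hasEnoughRootsOfUnity, hv]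
  · by_cases h : χ ∈ T
    · rw [if_pos h]
      exact hl' χ ⟨hχ, h⟩
    · rw [if_neg h]
      exact hm' χ ⟨hχ, h⟩
end

section
/- Let q be a prime power and let r be a divisor of q+1 with 1 < r < q+1; set m := (q+1)/r. Then there exist a finite group G of order q³ which is nonabelian and a subset S ⊆ G such that S is a partial difference set in G with parameters ( q³, (q−1)·(m(q+1) − q), r·(m−1)³ + r − 3, (m−1)·(m(q+1) − q) ). -/
/-!
Let `K` be the field with `q²` elements, `σ x = x ^ q` its involution, and let `G` be the group of
pairs `(a, b)` with `b + σ b = a * σ a` under `(a, b)(c, d) = (a + c, b + d + σ a * c)`: the Sylow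
`p`-subgroup of the unitary group in dimension three, acting regularly on the points of the
Hermitian unital other than a fixed one. For `b ≠ 0` the *slope* `phi b = -(σ b) / b` is an
element of norm one that classifies the `F_q`-lines through `0`. The partial difference set consists
of the `(a, b)` with `b ≠ 0` and slope in the group `M` of `m`-th roots of unity; for `r ∣ q + 1`
this is one neighbourhood in the `r`-fold antipodal cover of the complete graph on the unital.

The number of representations of `g = (c, d)` is the number of `y ∈ S` with `g * y ∈ S`.
* If `c = 0` (so that `d` has slope `1`), a pair of distinct slopes, both different from `1`,
  determines the second coordinate `b` of `y`; there are then `q + 1` choices for the first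
  coordinate, which gives the count in `Heis.count_zero`.
* If `c ≠ 0`, the element `y = (a, b)` is determined by `x = b` and by the conjugate `y'` of the
  second coordinate of `g * y`, and these pairs are exactly the solutions of the equation
  `Q x y' d = 0`, where `Q` is symmetric in its three arguments. With `x`, `y'`, `d` on lines of
  slopes `v₁`, `v₂`, `v₃`, it becomes a conic over `F_q`, whose determinant vanishes exactly when
  one of `v₁`, `v₂`, `v₃`, `v₁ v₂ v₃` equals `1`, and which meets each coordinate axis in at most
  one point, namely when the product of two slopes is `1`. Its points are counted in `count_B` and
  `count_A`, uniformly in the characteristic, by completing the square to `N(Y) = c` for the norm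
  `N(Y) = Y * σ Y`. Summing over the slopes in `M` (`sum_count`) gives `λ` when `v₃ ∈ M` and `μ`
  otherwise.
-/

attribute [local instance] Classical.propDecidable

namespace HermPDS
open Finset

/-! ### Power equations and lines in a finite field -/

/-- `Kˣ` is cyclic of order `a * b`, so every `b`-torsion element has exactly
`a` `a`-th roots. -/
theorem card_pow_eq {K : Type} [Field K] [Fintype K] {a b : ℕ} (ha : 0 < a) (hb : 0 < b)
    (hK : Fintype.card K = a * b + 1) {c : K} (hc : c ^ b = 1) :
    #{x : K | x ^ a = c} = a := by
  have hc0 : c ≠ 0 := by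
    rintro rfl
    rw [zero_pow hb.ne'] at hc
    exact zero_ne_one hc
  have hcard : Nat.card Kˣ = a * b := by
    rw [Nat.card_eq_fintype_card, Fintype.card_units, hK, Nat.add_sub_cancel]
  obtain ⟨g, hg⟩ := IsCyclic.exists_generator (α := Kˣ)
  have hord : orderOf g = a * b := by rw [orderOf_eq_card_of_forall_mem_zpowers hg, hcard]
  obtain ⟨k, hk⟩ := (mem_powers_iff_mem_zpowers.mpr (hg (Units.mk0 c hc0)))
  have hk1 : g ^ (k * b) = 1 := by
    rw [pow_mul]
    simp only at hk
    rw [hk]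
    ext
    simpa using hc
  have hak : a ∣ k := by
    rw [← orderOf_dvd_iff_pow_eq_one, hord] at hk1
    exact Nat.dvd_of_mul_dvd_mul_right hb hk1
  obtain ⟨j, rfl⟩ := hak
  have hy : ((g ^ j : Kˣ) : K) ^ a = c := by
    have := congrArg Units.val hk
    simpa [pow_mul, mul_comm a j] using this
  have hker : #{u : Kˣ | u ^ a = 1} = a := by
    have := IsCyclic.card_powMonoidHom_ker (G := Kˣ) (d := a)
    rw [hcard, Nat.gcd_eq_right (Dvd.intro _ rfl)] at this
    rw [Nat.card_eq_fintype_card, Fintype.card_subtype] at this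
    simpa only [MonoidHom.mem_ker, powMonoidHom_apply] using this
  refine Eq.trans (Eq.symm ?_) hker
  refine Finset.card_bij (fun u _ => (u : K) * ((g ^ j : Kˣ) : K)) ?_ ?_ ?_
  · intro u hu
    simp only [mem_filter, mem_univ, true_and] at hu ⊢
    rw [mul_pow, hy, ← Units.val_pow_eq_pow_val, hu]; simp
  · intro u _ w _ h
    exact Units.ext (mul_right_cancel₀ (Units.ne_zero _) h)
  · intro x hx
    simp only [mem_filter, mem_univ, true_and] at hx
    have hx0 : x ≠ 0 := by
      rintro rfl
      rw [zero_pow ha.ne'] at hx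
      exact hc0 hx.symm
    refine ⟨Units.mk0 x hx0 * (g ^ j)⁻¹, ?_, by simp⟩
    simp only [mem_filter, mem_univ, true_and]
    ext
    simp only [Units.val_pow_eq_pow_val, Units.val_mul, Units.val_mk0, mul_pow, Units.val_one]
    rw [← Units.val_pow_eq_pow_val, inv_pow, Units.val_inv_eq_inv_val]
    rw [Units.val_pow_eq_pow_val, hy, hx]
    exact mul_inv_cancel₀ hc0

variable {K : Type} [Field K] [Fintype K]

/-- The line of slope `v`: the solutions of `σ x = -v x`, including `0`. It is an `F_q`-line when `v`
has norm one, and slope `1` describes the elements of trace zero. -/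
noncomputable def line (σ : K →+* K) (v : K) : Finset K := {x | σ x = -(v * x)}

theorem mem_line {σ : K →+* K} {v x : K} : x ∈ line σ v ↔ σ x = -(v * x) := by simp [line]

/-- Up to sign, the form `Q` restricted to the lines of slopes `v1`, `v2`, `v3`. -/
def P (v1 v2 v3 x y z : K) : K :=
  v1 * x ^ 2 + v2 * y ^ 2 + v3 * z ^ 2 + (1 + v1 * v2) * (x * y) + (1 + v1 * v3) * (x * z)
    + (1 + v2 * v3) * (y * z)

omit [Fintype K] in
theorem sig_inv {σ : K →+* K} {v : K} (h : v * σ v = 1) : σ v = v⁻¹ :=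
  eq_inv_of_mul_eq_one_right h

variable {σ : K →+* K} {q : ℕ}

/-! ### Counting points of the conic -/

/-- The affine points of the conic `P = 0` for fixed `z`, those with `x = 0` or `y = 0` included.
If `v1 * v2 ≠ 1`, then `(x, y) ↦ x + v2 * y` identifies the product of the two lines with `K`, and
`P = 0` becomes `N(Y) = c` after a translation. If `v1 * v2 = 1`, the conic is a parabola, a graph
over the line of slope `v1`. -/
theorem count_B (hσ : ∀ x, σ (σ x) = x)
    (hline : ∀ v, v * σ v = 1 → #(line σ v) = q)
    (hnorm : ∀ c, c ≠ 0 → σ c = c → #{x | x * σ x = c} = q + 1)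
    {v1 v2 v3 z : K} (h1 : v1 * σ v1 = 1) (h2 : v2 * σ v2 = 1) (h3 : v3 * σ v3 = 1)
    (hz : z ≠ 0) (hz3 : σ z = -(v3 * z)) (hv3 : v3 ≠ 1) :
    (#{p ∈ line σ v1 ×ˢ line σ v2 | P v1 v2 v3 p.1 p.2 z = 0} : ℤ) =
      q + 1 - q * (if v1 = 1 ∨ v2 = 1 ∨ v1 * v2 * v3 = 1 then 1 else 0)
        - (if v1 * v2 = 1 then 1 else 0) := by
  have n1 : v1 ≠ 0 := left_ne_zero_of_mul_eq_one h1
  have n2 : v2 ≠ 0 := left_ne_zero_of_mul_eq_one h2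
  have n3 : v3 ≠ 0 := left_ne_zero_of_mul_eq_one h3
  have s1 := sig_inv h1
  have s2 := sig_inv h2
  have s3 := sig_inv h3
  by_cases h12 : v1 * v2 = 1
  · have e2 : v2 = v1⁻¹ := eq_inv_of_mul_eq_one_right h12
    by_cases hv1 : v1 = 1
    · have hv2 : v2 = 1 := by rw [e2, hv1, inv_one]
      subst hv1 hv2
      -- The form splits into two linear factors, and neither vanishes as `z` has nonzero trace.
      have : #{p ∈ line σ 1 ×ˢ line σ 1 | P 1 1 v3 p.1 p.2 z = 0} = 0 := by
        rw [card_eq_zero, filter_eq_empty_iff]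
        rintro ⟨x, y⟩ hp h
        simp only [mem_product, mem_line, one_mul] at hp
        have hf : (x + y + z) * (x + y + v3 * z) = 0 := by
          rw [← h]; simp only [P]; ring
        have key : ∀ w, σ w = -w → w ≠ -z := by
          rintro w hw rfl
          rw [map_neg, hz3] at hw
          have : (v3 - 1) * z = 0 := by linear_combination hw
          exact (mul_ne_zero (sub_ne_zero.mpr hv3) hz) this
        have hxy : σ (x + y) = -(x + y) := by rw [map_add, hp.1, hp.2]; ring
        rcases mul_eq_zero.mp hf with h' | h'
        · exact key (x + y) hxy (by linear_combination h')
        · refine key (x + y) hxy ?_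
          have h4 : x + y = σ z := by rw [hz3]; linear_combination h'
          have := hσ z
          rw [← h4, hxy] at this
          linear_combination -this
      rw [this]; simp
    · have hv2 : v2 ≠ 1 := by
        rintro rfl
        rw [mul_one] at h12
        exact hv1 h12
      have h123 : v1 * v2 * v3 ≠ 1 := by rwa [h12, one_mul]
      have d2 : (1 - v2) ≠ 0 := sub_ne_zero.mpr hv2.symm
      have d3 : (1 - v3) ≠ 0 := sub_ne_zero.mpr hv3.symm
      -- For given `h = x + v2 * y` the equation is linear in `y`, with nonzero leading coefficient.
      have : #{p ∈ line σ v1 ×ˢ line σ v2 | P v1 v2 v3 p.1 p.2 z = 0} = #(line σ v1) := by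
        refine Finset.card_nbij' (fun p => p.1 + v2 * p.2)
          (fun h => (h + v2 * ((v1 * h ^ 2 + v3 * z ^ 2 + (1 + v1 * v3) * (h * z)) /
              ((1 - v2) * (1 - v3) * z)),
            -((v1 * h ^ 2 + v3 * z ^ 2 + (1 + v1 * v3) * (h * z)) / ((1 - v2) * (1 - v3) * z))))
          ?_ ?_ ?_ ?_
        · rintro ⟨x, y⟩ hp
          simp only [coe_filter, Set.mem_ofPred_eq, mem_product, mem_line] at hp
          simp only [mem_coe, mem_line, map_add, map_mul, hp.1.1, hp.1.2, s2]
          rw [e2]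
          field_simp
          ring
        · intro h hh
          simp only [mem_coe, mem_line] at hh
          have hM : σ ((v1 * h ^ 2 + v3 * z ^ 2 + (1 + v1 * v3) * (h * z)) /
              ((1 - v2) * (1 - v3) * z)) = -(v2 * ((v1 * h ^ 2 + v3 * z ^ 2 + (1 + v1 * v3) * (h * z)) /
              ((1 - v2) * (1 - v3) * z))) := by
            have t1 : (1 - v2⁻¹) ≠ 0 := by
              rw [sub_ne_zero]; intro h; exact hv2 (by rw [← inv_inv v2, ← h, inv_one])
            have t2 : (1 - v3⁻¹) ≠ 0 := by
              rw [sub_ne_zero]; intro h; exact hv3 (by rw [← inv_inv v3, ← h, inv_one])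
            simp only [map_div₀, map_add, map_sub, map_mul, map_pow, map_one, hh, hz3, s1, s2, s3]
            rw [← mul_neg, div_eq_iff (by simp [t1, t2, n3, hz])]
            field_simp
            ring
          simp only [coe_filter, Set.mem_ofPred_eq, mem_product, mem_line]
          refine ⟨⟨?_, ?_⟩, ?_⟩
          · rw [map_add, map_mul, hM, hh, s2, e2]
            field_simp
            ring
          · rw [map_neg, hM]
            ring
          · simp only [P]
            rw [e2] at d2 ⊢
            field_simp
            ring
        · rintro ⟨x, y⟩ hp
          simp only [coe_filter, Set.mem_ofPred_eq, mem_product, mem_line] at hp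
          obtain ⟨-, hp⟩ := hp
          have hy : (v1 * (x + v2 * y) ^ 2 + v3 * z ^ 2 + (1 + v1 * v3) * ((x + v2 * y) * z)) /
              ((1 - v2) * (1 - v3) * z) = -y := by
            rw [div_eq_iff (by simp [d2, d3, hz])]
            simp only [P] at hp
            linear_combination hp + (x * y + v2 * y ^ 2 + v3 * y * z) * h12
          simp only [hy]
          ext <;> simp
        · intro h hh
          simp
      rw [this, hline v1 h1, if_pos h12, if_neg (by tauto)]
      ring
  · have d : 1 - v1 * v2 ≠ 0 := sub_ne_zero.mpr (Ne.symm h12)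
    have d' : 1 - v2 * v1 ≠ 0 := by rwa [mul_comm v2]
    -- With `X = x + v2 * y`, the linear part of `P` is `k * X + σ (k * X)`; the product `c` is
    -- the determinant of the conic up to a nonzero factor.
    set k := z * (1 - v1 + v1 * v3 - v1 * v2 * v3) / (1 - v1 * v2) with hk
    set k' := -(z * (1 - v2 + v2 * v3 - v1 * v2 * v3) / (1 - v1 * v2)) with hk'
    have hsd : σ (1 - v1 * v2) = -((1 - v1 * v2) / (v1 * v2)) := by
      simp only [map_sub, map_one, map_mul, s1, s2]
      field_simp
      ring
    have hkk : σ k' = k := by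
      rw [hk', hk, map_neg, map_div₀, hsd]
      simp only [map_add, map_sub, map_one, map_mul, s1, s2, s3, hz3]
      field_simp
      ring
    have hkk' : σ k = k' := by rw [← hkk, hσ]
    set c := -(z ^ 2 * ((1 - v1) * (1 - v2) * (1 - v3) * (1 - v1 * v2 * v3))
      / (1 - v1 * v2) ^ 2) with hc
    have hcN : c = k * σ k - z * σ z := by
      rw [hkk', hz3, hc, hk, hk']
      field_simp
      ring
    have hcc : σ c = c := by
      rw [hcN, map_sub, map_mul, map_mul, hσ, hσ]; ring
    have : #{p ∈ line σ v1 ×ˢ line σ v2 | P v1 v2 v3 p.1 p.2 z = 0} = #{x | x * σ x = c} := by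
      have hP : ∀ x y, (x + v2 * y - k') * (-(v1 * x) - y - k) = c - P v1 v2 v3 x y z := by
        intro x y
        simp only [P]
        rw [hc, hk, hk']
        field_simp
        ring
      have hsig : ∀ x y, σ x = -(v1 * x) → σ y = -(v2 * y) →
          σ (x + v2 * y - k') = -(v1 * x) - y - k := by
        intro x y hx hy
        rw [map_sub, map_add, map_mul, hx, hy, s2, hkk]
        field_simp
        ring
      refine Finset.card_nbij' (fun p => p.1 + v2 * p.2 - k')
        (fun Y => ((Y + k' + v2 * σ (Y + k')) / (1 - v1 * v2),
          -((σ (Y + k') + v1 * (Y + k')) / (1 - v1 * v2)))) ?_ ?_ ?_ ?_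
      · rintro ⟨x, y⟩ hp
        simp only [coe_filter, Set.mem_ofPred_eq, mem_product, mem_line] at hp
        simp only [coe_filter, Set.mem_ofPred_eq, mem_univ, true_and]
        rw [hsig x y hp.1.1 hp.1.2, hP, hp.2, sub_zero]
      · intro Y hY
        simp only [coe_filter, Set.mem_ofPred_eq, mem_univ, true_and] at hY
        simp only [coe_filter, Set.mem_ofPred_eq, mem_product, mem_line]
        have l1 : σ ((Y + k' + v2 * σ (Y + k')) / (1 - v1 * v2)) =
            -(v1 * ((Y + k' + v2 * σ (Y + k')) / (1 - v1 * v2))) := by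
          rw [map_div₀, hsd, map_add _ (Y + k'), map_mul, hσ, s2]
          field_simp
          ring
        have l2 : σ (-((σ (Y + k') + v1 * (Y + k')) / (1 - v1 * v2))) =
            -(v2 * -((σ (Y + k') + v1 * (Y + k')) / (1 - v1 * v2))) := by
          rw [map_neg, map_div₀, hsd, map_add _ (σ (Y + k')), map_mul, hσ, s1]
          field_simp
          ring
        refine ⟨⟨l1, l2⟩, ?_⟩
        have h5 := hP ((Y + k' + v2 * σ (Y + k')) / (1 - v1 * v2))
          (-((σ (Y + k') + v1 * (Y + k')) / (1 - v1 * v2)))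
        rw [← hsig _ _ l1 l2] at h5
        have h6 : (Y + k' + v2 * σ (Y + k')) / (1 - v1 * v2) +
            v2 * -((σ (Y + k') + v1 * (Y + k')) / (1 - v1 * v2)) - k' = Y := by
          generalize k' = k'
          generalize σ (Y + k') = w
          field_simp
          ring
        rw [h6, hY] at h5
        linear_combination h5
      · rintro ⟨x, y⟩ hp
        simp only [coe_filter, Set.mem_ofPred_eq, mem_product, mem_line] at hp
        have hs := hsig x y hp.1.1 hp.1.2
        have hs' : σ (x + v2 * y) = -(v1 * x) - y := by
          rw [map_sub, hkk] at hs
          linear_combination hs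
        simp only [sub_add_cancel, hs']
        ext
        · simp only
          field_simp
          ring
        · simp only
          field_simp
          ring
      · intro Y hY
        simp only
        generalize k' = k'
        generalize σ (Y + k') = w
        field_simp
        ring
    rw [this, if_neg h12]
    by_cases h0 : v1 = 1 ∨ v2 = 1 ∨ v1 * v2 * v3 = 1
    · have hc0 : c = 0 := by
        rw [hc]
        rcases h0 with h | h | h <;> simp [h]
      have : #{x | x * σ x = c} = 1 := by
        rw [hc0, card_eq_one]
        exact ⟨0, by ext; simp⟩
      rw [this, if_pos h0]; simp
    · have hc0 : c ≠ 0 := by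
        push Not at h0
        rw [hc, neg_ne_zero]
        have a1 := sub_ne_zero.mpr h0.1.symm
        have a2 := sub_ne_zero.mpr h0.2.1.symm
        have a3 := sub_ne_zero.mpr h0.2.2.symm
        have a4 := sub_ne_zero.mpr hv3.symm
        positivity
      rw [hnorm c hc0 hcc, if_neg h0]; push_cast; ring

theorem P_zero (hσ : ∀ x, σ (σ x) = x) {v1 v2 v3 y z : K} (h3 : v3 * σ v3 = 1)
    (hz : z ≠ 0) (hz3 : σ z = -(v3 * z)) (hy : y ∈ line σ v2) :
    P v1 v2 v3 0 y z = 0 ↔ v2 * v3 = 1 ∧ y = σ z := by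
  have n3 : v3 ≠ 0 := left_ne_zero_of_mul_eq_one h3
  have s3 := sig_inv h3
  rw [mem_line] at hy
  have hf : P v1 v2 v3 0 y z = (v2 * y + z) * (y + v3 * z) := by simp only [P]; ring
  rw [hf, mul_eq_zero]
  have key : y = σ z → v2 * v3 = 1 := by
    rintro rfl
    rw [hσ, hz3] at hy
    have : (v2 * v3 - 1) * z = 0 := by linear_combination -hy
    exact sub_eq_zero.mp ((mul_eq_zero.mp this).resolve_right hz)
  constructor
  · intro h
    have : y = σ z := by
      rcases h with h | h
      · have : σ y = z := by rw [hy]; linear_combination -h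
        rw [← this, hσ]
      · rw [hz3]; linear_combination h
    exact ⟨key this, this⟩
  · rintro ⟨-, h⟩
    right
    rw [h, hz3]; ring

/-- The points of the conic on the axis `x = 0`, where the form is a product of two linear factors
that vanish at the same point. -/
theorem card_P_zero (hσ : ∀ x, σ (σ x) = x) {v1 v2 v3 z : K} (h3 : v3 * σ v3 = 1)
    (hz : z ≠ 0) (hz3 : σ z = -(v3 * z)) :
    #{p ∈ line σ v1 ×ˢ line σ v2 | p.1 = 0 ∧ P v1 v2 v3 p.1 p.2 z = 0} =
      if v2 * v3 = 1 then 1 else 0 := by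
  have n3 : v3 ≠ 0 := left_ne_zero_of_mul_eq_one h3
  split_ifs with h
  · rw [card_eq_one]
    refine ⟨(0, σ z), ?_⟩
    have hl : σ z ∈ line σ v2 := by
      rw [mem_line, hσ, hz3]; linear_combination -z * h
    ext ⟨x, y⟩
    simp only [mem_filter, mem_product, mem_singleton, Prod.mk.injEq]
    constructor
    · rintro ⟨⟨-, hy⟩, rfl, hP⟩
      exact ⟨rfl, ((P_zero hσ h3 hz hz3 hy).mp hP).2⟩
    · rintro ⟨rfl, rfl⟩
      exact ⟨⟨by simp [mem_line], hl⟩, rfl, (P_zero hσ h3 hz hz3 hl).mpr ⟨h, rfl⟩⟩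
  · rw [card_eq_zero, filter_eq_empty_iff]
    rintro ⟨x, y⟩ hp ⟨hx, hP⟩
    rw [mem_product] at hp
    simp only at hx hp
    subst hx
    exact h ((P_zero hσ h3 hz hz3 hp.2).mp hP).1

/-- The points of the conic on the axis `y = 0`. -/
theorem card_P_zero' (hσ : ∀ x, σ (σ x) = x) {v1 v2 v3 z : K} (h3 : v3 * σ v3 = 1)
    (hz : z ≠ 0) (hz3 : σ z = -(v3 * z)) :
    #{p ∈ line σ v1 ×ˢ line σ v2 | p.2 = 0 ∧ P v1 v2 v3 p.1 p.2 z = 0} =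
      if v1 * v3 = 1 then 1 else 0 := by
  rw [← card_P_zero (v1 := v2) hσ h3 hz hz3]
  have hsymm : ∀ x y, P v1 v2 v3 x y z = P v2 v1 v3 y x z := by
    intro x y; simp only [P]; ring
  refine Finset.card_nbij' Prod.swap Prod.swap ?_ ?_ ?_ ?_
  · rintro ⟨x, y⟩ h
    simp only [coe_filter, mem_product, Set.mem_ofPred_eq, Prod.swap] at h ⊢
    exact ⟨h.1.symm, h.2.1, by rw [← hsymm]; exact h.2.2⟩
  · rintro ⟨x, y⟩ h
    simp only [coe_filter, mem_product, Set.mem_ofPred_eq, Prod.swap] at h ⊢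
    exact ⟨h.1.symm, h.2.1, by rw [hsymm]; exact h.2.2⟩
  · intro p _; simp
  · intro p _; simp

/-- The points of the conic with `x` and `y` both nonzero. -/
theorem count_A (hσ : ∀ x, σ (σ x) = x)
    (hline : ∀ v, v * σ v = 1 → #(line σ v) = q)
    (hnorm : ∀ c, c ≠ 0 → σ c = c → #{x | x * σ x = c} = q + 1)
    {v1 v2 v3 z : K} (h1 : v1 * σ v1 = 1) (h2 : v2 * σ v2 = 1) (h3 : v3 * σ v3 = 1)
    (hz : z ≠ 0) (hz3 : σ z = -(v3 * z)) (hv3 : v3 ≠ 1) :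
    (#{p ∈ line σ v1 ×ˢ line σ v2 | (p.1 ≠ 0 ∧ p.2 ≠ 0) ∧ P v1 v2 v3 p.1 p.2 z = 0} : ℤ) =
      q + 1 - q * (if v1 = 1 ∨ v2 = 1 ∨ v1 * v2 * v3 = 1 then 1 else 0)
        - (if v1 * v2 = 1 then 1 else 0) - (if v2 * v3 = 1 then 1 else 0)
        - (if v1 * v3 = 1 then 1 else 0) := by
  have n3 : v3 ≠ 0 := left_ne_zero_of_mul_eq_one h3
  have hB := count_B hσ hline hnorm h1 h2 h3 hz hz3 hv3
  have hx := card_P_zero (v1 := v1) (v2 := v2) hσ h3 hz hz3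
  have hy := card_P_zero' (v1 := v1) (v2 := v2) hσ h3 hz hz3
  have hsplit : #{p ∈ line σ v1 ×ˢ line σ v2 | P v1 v2 v3 p.1 p.2 z = 0} =
      #{p ∈ line σ v1 ×ˢ line σ v2 | (p.1 ≠ 0 ∧ p.2 ≠ 0) ∧ P v1 v2 v3 p.1 p.2 z = 0} +
      #{p ∈ line σ v1 ×ˢ line σ v2 | p.1 = 0 ∧ P v1 v2 v3 p.1 p.2 z = 0} +
      #{p ∈ line σ v1 ×ˢ line σ v2 | p.2 = 0 ∧ P v1 v2 v3 p.1 p.2 z = 0} := by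
    rw [← card_union_of_disjoint, ← card_union_of_disjoint]
    · congr 1
      ext p
      simp only [mem_filter, mem_union]
      tauto
    · rw [disjoint_left]
      rintro ⟨x, y⟩ hp hp'
      simp only [mem_filter, mem_union] at hp hp'
      obtain ⟨-, rfl, hP⟩ := hp'
      rcases hp with hp | hp
      · exact hp.2.1.2 rfl
      · obtain ⟨-, rfl, -⟩ := hp
        simp [P, n3, hz] at hP
    · rw [disjoint_left]
      rintro ⟨x, y⟩ hp hp'
      simp only [mem_filter] at hp hp'
      exact hp.2.1.1 hp'.2.1
  rw [hsplit, Nat.cast_add, Nat.cast_add, hx, hy] at hB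
  push_cast at hB
  linarith

/-- The slope of `x`, normalised so that `x ≠ 0` has slope `1` exactly when its trace `x + σ x` is
zero. The value at `0` is `0` and carries no meaning. -/
def phi (σ : K →+* K) (x : K) : K := -(σ x) / x

omit [Fintype K] in
theorem phi_eq {x v : K} (hx : x ≠ 0) : phi σ x = v ↔ σ x = -(v * x) := by
  rw [phi, div_eq_iff hx, neg_eq_iff_eq_neg]

omit [Fintype K] in
theorem sig_phi {x : K} (hx : x ≠ 0) : σ x = -(phi σ x * x) := (phi_eq hx).mp rfl

omit [Fintype K] in
theorem phi_norm (hσ : ∀ x, σ (σ x) = x) {x : K} (hx : x ≠ 0) : phi σ x * σ (phi σ x) = 1 := by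
  have : σ x ≠ 0 := (map_ne_zero σ).mpr hx
  simp only [phi, map_div₀, map_neg, hσ]
  field_simp

omit [Fintype K] in
theorem phi_conj (hσ : ∀ x, σ (σ x) = x) {x : K} (hx : x ≠ 0) : phi σ (σ x) = (phi σ x)⁻¹ := by
  have : σ x ≠ 0 := (map_ne_zero σ).mpr hx
  simp only [phi, hσ]
  field_simp

/-- The form `N(x) + N(y) + N(z) - Tr(xy + xz + yz)`, with norm and trace taken from `K` to the
fixed field of `σ`. -/
def Q (σ : K →+* K) (x y z : K) : K :=
  x * σ x + y * σ y + z * σ z - (x * y + σ (x * y)) - (x * z + σ (x * z)) - (y * z + σ (y * z))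

omit [Fintype K] in
theorem Q_eq {v1 v2 v3 x y z : K} (hx : σ x = -(v1 * x)) (hy : σ y = -(v2 * y))
    (hz : σ z = -(v3 * z)) : Q σ x y z = -P v1 v2 v3 x y z := by
  simp only [Q, P, map_mul, hx, hy, hz]; ring

/-! ### Summation over the slopes -/

/-- `M` is a group of `m` elements of norm one, given as a finite set. -/
structure IsMu (σ : K →+* K) (M : Finset K) (m : ℕ) : Prop where
  one : 1 ∈ M
  inv : ∀ v ∈ M, v⁻¹ ∈ M
  mul : ∀ v ∈ M, ∀ w ∈ M, v * w ∈ M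
  norm : ∀ v ∈ M, v * σ v = 1
  card : #M = m

/-- The count of `count_A`, summed over all pairs of slopes in `M`. -/
theorem sum_count {M : Finset K} {m : ℕ} (hM : IsMu σ M m) {v3 : K} (n3 : v3 ≠ 0)
    (hv3 : v3 ≠ 1) :
    ∑ v1 ∈ M, ∑ v2 ∈ M, ((q : ℤ) + 1
        - q * (if v1 = 1 ∨ v2 = 1 ∨ v1 * v2 * v3 = 1 then 1 else 0)
        - (if v1 * v2 = 1 then 1 else 0) - (if v2 * v3 = 1 then 1 else 0)
        - (if v1 * v3 = 1 then 1 else 0)) =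
      if v3 ∈ M then (q + 1) * ((m : ℤ) ^ 2 - 3 * m + 3) - 3
      else (m : ℤ) ^ 2 * (q + 1) - q * (2 * m - 1) - m := by
  have hinv : ∀ v, v⁻¹ ∈ M ↔ v ∈ M :=
    fun v => ⟨fun h => by simpa using hM.inv _ h, hM.inv v⟩
  have hmul : ∀ v ∈ M, (v⁻¹ * v3⁻¹ ∈ M ↔ v3 ∈ M) := by
    intro v hv
    constructor
    · intro h
      rw [← hinv]
      have := hM.mul _ hv _ h
      rwa [mul_inv_cancel_left₀ (left_ne_zero_of_mul_eq_one (hM.norm v hv))] at this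
    · intro h
      exact hM.mul _ (hM.inv _ hv) _ (hM.inv _ h)
  -- Inclusion-exclusion for the degenerate conics; at most two of the three conditions hold at once
  -- because `v3 ≠ 1`.
  have hterm : ∀ v1 ∈ M, ∀ v2 ∈ M, ((q : ℤ) + 1
        - q * (if v1 = 1 ∨ v2 = 1 ∨ v1 * v2 * v3 = 1 then 1 else 0)
        - (if v1 * v2 = 1 then 1 else 0) - (if v2 * v3 = 1 then 1 else 0)
        - (if v1 * v3 = 1 then 1 else 0)) = (q : ℤ) + 1
        - q * ((if v1 = 1 then 1 else 0) + (if v2 = 1 then 1 else 0)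
          + (if v2 = v1⁻¹ * v3⁻¹ then 1 else 0)
          - (if v1 = 1 then 1 else 0) * (if v2 = 1 then 1 else 0)
          - (if v1 = 1 then 1 else 0) * (if v2 = v3⁻¹ then 1 else 0)
          - (if v1 = v3⁻¹ then 1 else 0) * (if v2 = 1 then 1 else 0))
        - (if v2 = v1⁻¹ then 1 else 0) - (if v2 = v3⁻¹ then 1 else 0)
        - (if v1 = v3⁻¹ then 1 else 0) := by
    intro v1 h1 v2 h2
    have n1 := left_ne_zero_of_mul_eq_one (hM.norm v1 h1)
    have e1 : v1 * v2 = 1 ↔ v2 = v1⁻¹ := by rw [mul_comm, mul_eq_one_iff_eq_inv₀ n1]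
    have e2 : v2 * v3 = 1 ↔ v2 = v3⁻¹ := by rw [mul_eq_one_iff_eq_inv₀ n3]
    have e3 : v1 * v3 = 1 ↔ v1 = v3⁻¹ := by rw [mul_eq_one_iff_eq_inv₀ n3]
    have e4 : v1 * v2 * v3 = 1 ↔ v2 = v1⁻¹ * v3⁻¹ := by
      rw [← mul_inv, ← mul_eq_one_iff_eq_inv₀ (mul_ne_zero n1 n3),
        show v1 * v2 * v3 = v2 * (v1 * v3) by ring]
    rw [e1, e2, e3, e4]
    congr 4
    have n3' : v3⁻¹ ≠ 1 := by rwa [Ne, inv_eq_one]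
    by_cases a1 : v1 = 1
    · subst a1
      by_cases a2 : v2 = 1
      · subst a2; simp [n3'.symm]
      · simp [a2, n3'.symm]
    · by_cases a2 : v2 = 1
      · subst a2
        have : (1 = v1⁻¹ * v3⁻¹) ↔ v1 = v3⁻¹ := by
          rw [← e4, ← e3, mul_one]
        simp [a1, this]
      · simp [a1, a2]
  rw [sum_congr rfl fun v1 h1 => sum_congr rfl fun v2 h2 => hterm v1 h1 v2 h2]
  simp only [sum_sub_distrib, sum_add_distrib, ← mul_sum, ← sum_mul, sum_ite_eq', sum_const,
    hM.card, hM.one, if_true, hinv]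
  rw [sum_congr rfl fun v1 h1 => if_congr (hmul v1 h1) rfl rfl,
    sum_congr rfl fun v1 h1 => if_pos h1]
  split_ifs with h
  · simp [hM.card, hM.one, hinv, h]; ring
  · simp [hM.card, hM.one, hinv, h]; ring

/-- The number of solutions of `Q x y z = 0` in which `x` and `y` have slopes in `M`. -/
theorem card_T (hσ : ∀ x, σ (σ x) = x)
    (hline : ∀ v, v * σ v = 1 → #(line σ v) = q)
    (hnorm : ∀ c, c ≠ 0 → σ c = c → #{x | x * σ x = c} = q + 1)
    {M : Finset K} {m : ℕ} (hM : IsMu σ M m) {z : K} (hz : z ≠ 0) (hz3 : phi σ z ≠ 1) :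
    (#{p : K × K | (p.1 ≠ 0 ∧ phi σ p.1 ∈ M) ∧ (p.2 ≠ 0 ∧ phi σ p.2 ∈ M) ∧
        Q σ p.1 p.2 z = 0} : ℤ) =
      if phi σ z ∈ M then (q + 1) * ((m : ℤ) ^ 2 - 3 * m + 3) - 3
      else (m : ℤ) ^ 2 * (q + 1) - q * (2 * m - 1) - m := by
  have hz' := phi_norm hσ hz
  rw [← sum_count hM (left_ne_zero_of_mul_eq_one hz') hz3, ← sum_product',
    card_eq_sum_card_fiberwise (f := fun p : K × K => (phi σ p.1, phi σ p.2)) (t := M ×ˢ M)]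
  · push_cast
    refine sum_congr rfl ?_
    rintro ⟨v1, v2⟩ hv
    rw [mem_product] at hv
    rw [← count_A hσ hline hnorm (hM.norm _ hv.1) (hM.norm _ hv.2) hz' hz (sig_phi hz) hz3]
    congr 2
    ext ⟨x, y⟩
    simp only [mem_filter, mem_univ, true_and, mem_product, mem_line, Prod.mk.injEq]
    constructor
    · rintro ⟨⟨⟨hx, -⟩, ⟨hy, -⟩, hQ⟩, rfl, rfl⟩
      refine ⟨⟨sig_phi hx, sig_phi hy⟩, ⟨hx, hy⟩, ?_⟩
      rwa [Q_eq (sig_phi hx) (sig_phi hy) (sig_phi hz), neg_eq_zero] at hQ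
    · rintro ⟨⟨hx, hy⟩, ⟨hx0, hy0⟩, hP⟩
      have ex := (phi_eq hx0).mpr hx
      have ey := (phi_eq hy0).mpr hy
      refine ⟨⟨⟨hx0, ex ▸ hv.1⟩, ⟨hy0, ey ▸ hv.2⟩, ?_⟩, ex, ey⟩
      rw [Q_eq hx hy (sig_phi hz), hP, neg_zero]
  · rintro ⟨x, y⟩ h
    simp only [coe_filter, mem_univ, true_and, Set.mem_ofPred_eq] at h
    simp only [coe_product, Set.mem_prod, mem_coe]
    exact ⟨h.1.2, h.2.1.2⟩

/-! ### The Heisenberg group and its partial difference set -/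

/-- The pairs `(a, b)` with `b + σ b = a * σ a`. The involutivity of `σ` is a parameter of the type
because the group law depends on it. -/
@[ext]
structure Heis (σ : K →+* K) (hσ : ∀ x, σ (σ x) = x) : Type where
  a : K
  b : K
  eq : b + σ b = a * σ a

namespace Heis

variable {hσ : ∀ x, σ (σ x) = x}

instance : Mul (Heis σ hσ) where
  mul g h := ⟨g.a + h.a, g.b + h.b + σ g.a * h.a, by
    have hg := g.eq
    have hh := h.eq
    simp only [map_add, map_mul, hσ]
    linear_combination hg + hh⟩

instance : One (Heis σ hσ) where
  one := ⟨0, 0, by simp⟩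

instance : Inv (Heis σ hσ) where
  inv g := ⟨-g.a, σ g.b, by
    have hg := g.eq
    simp only [map_neg, hσ]
    linear_combination hg⟩

@[simp] theorem mul_a (g h : Heis σ hσ) : (g * h).a = g.a + h.a := rfl
@[simp] theorem mul_b (g h : Heis σ hσ) : (g * h).b = g.b + h.b + σ g.a * h.a := rfl
@[simp] theorem one_a : (1 : Heis σ hσ).a = 0 := rfl
@[simp] theorem one_b : (1 : Heis σ hσ).b = 0 := rfl
@[simp] theorem inv_a (g : Heis σ hσ) : (g⁻¹).a = -g.a := rfl
@[simp] theorem inv_b (g : Heis σ hσ) : (g⁻¹).b = σ g.b := rfl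

instance : Group (Heis σ hσ) :=
  Group.ofLeftAxioms
    (fun x y z => by
      ext
      · simp only [mul_a]; ring
      · simp only [mul_a, mul_b, map_add]; ring)
    (fun x => by ext <;> simp)
    (fun x => by
      ext
      · simp
      · have := x.eq
        simp only [mul_b, inv_b, inv_a, map_neg, one_b]
        linear_combination this)

instance : Finite (Heis σ hσ) :=
  Finite.of_injective (fun g => (g.a, g.b)) (by
    intro g h e
    simp only [Prod.mk.injEq] at e
    exact Heis.ext e.1 e.2)

noncomputable instance : Fintype (Heis σ hσ) := Fintype.ofFinite _

/-- A second coordinate `b` of trace zero forces the first coordinate to be `0`; for any other `b`,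
the first coordinate has `q + 1` possible values. -/
theorem card_filter (hnorm : ∀ c, c ≠ 0 → σ c = c → #{x | x * σ x = c} = q + 1)
    (B : Finset K) :
    #{g : Heis σ hσ | g.b ∈ B} =
      #{b ∈ B | b ∈ line σ 1} + (q + 1) * #{b ∈ B | b ∉ line σ 1} := by
  have hfib : ∀ b : K, #{g : Heis σ hσ | g.b = b} = if b ∈ line σ 1 then 1 else q + 1 := by
    intro b
    have : #{g : Heis σ hσ | g.b = b} = #{x | x * σ x = b + σ b} := by
      refine Finset.card_bij (fun g _ => g.a) ?_ ?_ ?_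
      · intro g hg
        simp only [mem_filter, mem_univ, true_and] at hg ⊢
        rw [← hg, g.eq]
      · intro g hg h hh e
        simp only [mem_filter, mem_univ, true_and] at hg hh
        exact Heis.ext e (by rw [hg, hh])
      · intro a ha
        simp only [mem_filter, mem_univ, true_and] at ha
        exact ⟨⟨a, b, ha.symm⟩, by simp, rfl⟩
    rw [this]
    have h1 : b ∈ line σ 1 ↔ b + σ b = 0 := by
      rw [mem_line, one_mul, add_comm, eq_neg_iff_add_eq_zero]
    split_ifs with hb
    · rw [h1.mp hb, card_eq_one]
      exact ⟨0, by ext; simp⟩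
    · exact hnorm _ (fun h => hb (h1.mpr h)) (by rw [map_add, hσ, add_comm])
  rw [card_eq_sum_card_fiberwise (f := fun g : Heis σ hσ => g.b) (t := B)
    (by intro g hg; simpa using hg)]
  have : ∀ b ∈ B, #{g ∈ ({g : Heis σ hσ | g.b ∈ B} : Finset _) | g.b = b} =
      if b ∈ line σ 1 then 1 else q + 1 := by
    intro b hb
    rw [← hfib b]
    congr 1
    ext g
    simp only [mem_filter, mem_univ, true_and, and_iff_right_iff_imp]
    rintro rfl
    exact hb
  rw [sum_congr rfl this, sum_ite, sum_const, sum_const, smul_eq_mul, smul_eq_mul, mul_one,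
    mul_comm (q + 1)]

theorem card_eq (hq : Fintype.card K = q ^ 2)
    (hline : ∀ v, v * σ v = 1 → #(line σ v) = q)
    (hnorm : ∀ c, c ≠ 0 → σ c = c → #{x | x * σ x = c} = q + 1) :
    Nat.card (Heis σ hσ) = q ^ 3 := by
  have h := card_filter (hσ := hσ) hnorm univ
  have hl := hline 1 (by simp)
  have h1 : #{b | b ∈ line σ 1} = q := by
    rw [← hl]; congr 1; ext; simp
  have h2 : #{b | b ∈ line σ 1} + #{b | b ∉ line σ 1} = q ^ 2 := by
    rw [card_filter_add_card_filter_not, card_univ, hq]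
  simp only [mem_univ, filter_true, card_univ] at h
  rw [Nat.card_eq_fintype_card, h]
  rw [h1] at h2 ⊢
  zify at h2 ⊢
  linear_combination ((q : ℤ) + 1) * h2

/-- The elements whose second coordinate is nonzero with slope in `M`. -/
def pds (σ : K →+* K) (hσ : ∀ x, σ (σ x) = x) (M : Finset K) : Set (Heis σ hσ) :=
  {g | g.b ≠ 0 ∧ phi σ g.b ∈ M}

theorem mem_pds {M : Finset K} {g : Heis σ hσ} :
    g ∈ pds σ hσ M ↔ g.b ≠ 0 ∧ phi σ g.b ∈ M := Iff.rfl

theorem card_line_ne {v : K} (hl : #(line σ v) = q) :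
    #{b | b ≠ 0 ∧ phi σ b = v} = q - 1 := by
  rw [← hl, ← card_erase_of_mem (a := (0 : K)) (by simp [mem_line])]
  congr 1
  ext b
  simp only [mem_filter, mem_univ, true_and, mem_erase, mem_line]
  exact and_congr_right fun hb => phi_eq hb

theorem mem_line_one {b : K} (hb : b ≠ 0) : b ∈ line σ 1 ↔ phi σ b = 1 := by
  rw [mem_line, phi_eq hb]

theorem card_pds (hline : ∀ v, v * σ v = 1 → #(line σ v) = q)
    (hnorm : ∀ c, c ≠ 0 → σ c = c → #{x | x * σ x = c} = q + 1)
    {M : Finset K} {m : ℕ} (hM : IsMu σ M m) :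
    Nat.card (pds σ hσ M) = (q - 1) + (q + 1) * ((m - 1) * (q - 1)) := by
  rw [Nat.card_eq_fintype_card, Fintype.card_subtype]
  have h := card_filter (hσ := hσ) hnorm {b | b ≠ 0 ∧ phi σ b ∈ M}
  simp only [mem_filter, mem_univ, true_and] at h
  refine Eq.trans ?_ (h.trans ?_)
  · simp only [mem_pds]
  · congr 2
    · rw [← card_line_ne (hline 1 (by simp)), filter_filter]
      congr 1
      ext b
      simp only [mem_filter, mem_univ, true_and]
      constructor
      · rintro ⟨⟨h1, -⟩, h2⟩
        exact ⟨h1, (mem_line_one h1).mp h2⟩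
      · rintro ⟨h1, h2⟩
        exact ⟨⟨h1, h2 ▸ hM.one⟩, (mem_line_one h1).mpr h2⟩
    · rw [filter_filter, card_eq_sum_card_fiberwise (f := phi σ) (t := M.erase 1)]
      · rw [sum_congr rfl (g := fun _ => q - 1), sum_const, card_erase_of_mem hM.one, hM.card,
          smul_eq_mul]
        intro v hv
        rw [mem_erase] at hv
        rw [← card_line_ne (hline v (hM.norm v hv.2))]
        congr 1
        ext b
        simp only [mem_filter, mem_univ, true_and]
        constructor
        · rintro ⟨⟨⟨h1, -⟩, -⟩, h2⟩
          exact ⟨h1, h2⟩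
        · rintro ⟨h1, rfl⟩
          exact ⟨⟨⟨h1, hv.2⟩, fun h => hv.1 ((mem_line_one h1).mp h)⟩, rfl⟩
      · intro b hb
        simp only [coe_filter, mem_univ, true_and, Set.mem_ofPred_eq] at hb
        simp only [mem_coe, mem_erase]
        exact ⟨fun h => hb.2 ((mem_line_one hb.1.1).mpr h), hb.1.2⟩

/-- A representation `x * y⁻¹ = g` is determined by `y`. -/
theorem card_pairs (M : Finset K) (g : Heis σ hσ) :
    Nat.card {p : pds σ hσ M × pds σ hσ M // (p.1 : Heis σ hσ) * (p.2 : Heis σ hσ)⁻¹ = g} =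
      #{y : Heis σ hσ | y ∈ pds σ hσ M ∧ g * y ∈ pds σ hσ M} := by
  rw [← Fintype.card_subtype, ← Nat.card_eq_fintype_card]
  refine Nat.card_congr
    { toFun := fun p => ⟨p.1.2, p.1.2.2, ?_⟩
      invFun := fun y => ⟨(⟨g * y, y.2.2⟩, ⟨y, y.2.1⟩), by simp⟩
      left_inv := ?_
      right_inv := ?_ }
  · have : g * (p.1.2 : Heis σ hσ) = p.1.1 := by
      rw [← mul_inv_eq_iff_eq_mul.mp p.2]
    rw [this]
    exact p.1.1.2
  · rintro ⟨⟨⟨x, hx⟩, ⟨y, hy⟩⟩, h⟩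
    simp only at h
    subst h
    simp
  · rintro ⟨y, hy⟩
    rfl

/-- The number of representations of a noncentral `g`: the pairs `(y.b, σ (g * y).b)` are the solutions
of `Q · · g.b = 0` with slopes in `M`. -/
theorem count_ne (hline : ∀ v, v * σ v = 1 → #(line σ v) = q)
    (hnorm : ∀ c, c ≠ 0 → σ c = c → #{x | x * σ x = c} = q + 1)
    {M : Finset K} {m : ℕ} (hM : IsMu σ M m) (g : Heis σ hσ) (hg : g.a ≠ 0) :
    (#{y : Heis σ hσ | y ∈ pds σ hσ M ∧ g * y ∈ pds σ hσ M} : ℤ) =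
      if g ∈ pds σ hσ M then (q + 1) * ((m : ℤ) ^ 2 - 3 * m + 3) - 3
      else (m : ℤ) ^ 2 * (q + 1) - q * (2 * m - 1) - m := by
  have hsa : σ g.a ≠ 0 := (map_ne_zero σ).mpr hg
  have htr : g.b + σ g.b ≠ 0 := by rw [g.eq]; exact mul_ne_zero hg hsa
  have hb : g.b ≠ 0 := by
    intro h
    rw [h, map_zero, add_zero] at htr
    exact htr rfl
  have hb1 : phi σ g.b ≠ 1 := by
    rw [Ne, phi_eq hb]
    intro h
    rw [h] at htr
    exact htr (by ring)
  have hconj : ∀ x, x ≠ 0 → (phi σ (σ x) ∈ M ↔ phi σ x ∈ M) := by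
    intro x hx
    rw [phi_conj hσ hx]
    exact ⟨fun h => by simpa using hM.inv _ h, hM.inv _⟩
  have hmem : g ∈ pds σ hσ M ↔ phi σ g.b ∈ M := ⟨fun h => h.2, fun h => ⟨hb, h⟩⟩
  rw [if_congr hmem rfl rfl, ← card_T hσ hline hnorm hM hb hb1]
  congr 1
  refine Finset.card_bij (fun y _ => (y.b, σ (g * y).b)) ?_ ?_ ?_
  · intro y hy
    simp only [mem_filter, mem_univ, true_and] at hy ⊢
    obtain ⟨hy1, hy2⟩ := hy
    refine ⟨hy1, ⟨(map_ne_zero σ).mpr hy2.1, (hconj _ hy2.1).mpr hy2.2⟩, ?_⟩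
    have e1 := y.eq
    have e2 := g.eq
    simp only [Q, mul_b, map_add, map_mul, hσ]
    linear_combination (-(g.a * σ g.a)) * e1 + (-y.b - σ y.b) * e2
  · intro y hy w hw e
    simp only [Prod.mk.injEq] at e
    have e2 := σ.injective e.2
    rw [mul_b, mul_b, e.1] at e2
    exact Heis.ext (mul_left_cancel₀ hsa (add_left_cancel e2)) e.1
  · rintro ⟨x, y⟩ h
    simp only [mem_filter, mem_univ, true_and] at h
    obtain ⟨h1, h2, hQ⟩ := h
    have e : g.b + x + σ g.a * ((σ y - x - g.b) / σ g.a) = σ y := by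
      field_simp; ring
    have hx : x + σ x = (σ y - x - g.b) / σ g.a * σ ((σ y - x - g.b) / σ g.a) := by
      rw [map_div₀, hσ, div_mul_div_comm, eq_div_iff (mul_ne_zero hsa hg)]
      have e2 := g.eq
      simp only [Q, map_sub, map_mul, hσ] at hQ ⊢
      linear_combination (-(x + σ x)) * e2 - hQ
    refine ⟨⟨(σ y - x - g.b) / σ g.a, x, hx⟩, ?_, ?_⟩
    · rw [mem_filter, mem_pds, mem_pds, mul_b, e]
      exact ⟨mem_univ _, h1, (map_ne_zero σ).mpr h2.1, (hconj _ h2.1).mpr h2.2⟩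
    · simp only [mul_b, e, hσ]

/-- The number of representations of a central `g ≠ 1`. The elements `y` with `y.b` of trace zero
contribute `q - 2`; for the others, the slopes of `y.b` and `(g * y).b` form an arbitrary ordered pair
of distinct elements of `M \ {1}`, which determines `y.b`. -/
theorem count_zero (hline : ∀ v, v * σ v = 1 → #(line σ v) = q)
    (hnorm : ∀ c, c ≠ 0 → σ c = c → #{x | x * σ x = c} = q + 1)
    {M : Finset K} {m : ℕ} (hM : IsMu σ M m) (g : Heis σ hσ) (hg : g.a = 0) (hg1 : g.b ≠ 0) :
    #{y : Heis σ hσ | y ∈ pds σ hσ M ∧ g * y ∈ pds σ hσ M} =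
      q - 2 + (q + 1) * ((m - 1) * (m - 1) - (m - 1)) := by
  have h := card_filter (hσ := hσ) hnorm
    {b | (b ≠ 0 ∧ phi σ b ∈ M) ∧ (g.b + b ≠ 0 ∧ phi σ (g.b + b) ∈ M)}
  have hs : σ g.b = -g.b := by
    have := g.eq
    rw [hg, zero_mul] at this
    linear_combination this
  simp only [mem_filter, mem_univ, true_and] at h
  refine Eq.trans ?_ (h.trans ?_)
  · congr 1
    ext y
    simp [pds, hg]
  have hl1 : ∀ b, b ∈ line σ 1 ↔ g.b + b ∈ line σ 1 := by
    intro b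
    rw [mem_line, mem_line, map_add, hs]
    constructor
    · intro h; linear_combination h
    · intro h; linear_combination h
  congr 2
  · have : q - 2 = #(((line σ 1).erase 0).erase (-g.b)) := by
      rw [card_erase_of_mem, card_erase_of_mem (by simp [mem_line]), hline 1 (by simp)]
      · omega
      · rw [mem_erase, mem_line]
        exact ⟨neg_ne_zero.mpr hg1, by rw [map_neg, hs]; ring⟩
    rw [this, filter_filter]
    congr 1
    ext b
    simp only [mem_filter, mem_univ, true_and, mem_erase]
    have hne : b ≠ -g.b ↔ g.b + b ≠ 0 := by
      rw [Ne, Ne, add_comm, eq_neg_iff_add_eq_zero]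
    rw [hne]
    constructor
    · rintro ⟨⟨⟨h1, h2⟩, h3, h4⟩, h5⟩
      exact ⟨h3, h1, h5⟩
    · rintro ⟨h3, h1, h5⟩
      refine ⟨⟨⟨h1, ?_⟩, h3, ?_⟩, h5⟩
      · rw [(mem_line_one h1).mp h5]; exact hM.one
      · rw [(mem_line_one h3).mp ((hl1 b).mp h5)]; exact hM.one
  · have : (m - 1) * (m - 1) - (m - 1) = #(M.erase 1).offDiag := by
      rw [offDiag_card, card_erase_of_mem hM.one, hM.card]
    rw [this, filter_filter]
    refine Finset.card_bij (fun b _ => (phi σ b, phi σ (g.b + b))) ?_ ?_ ?_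
    · intro b hb
      simp only [mem_filter, mem_univ, true_and] at hb
      obtain ⟨⟨⟨h1, h2⟩, h3, h4⟩, h5⟩ := hb
      rw [mem_offDiag, mem_erase, mem_erase]
      refine ⟨⟨fun h => h5 ((mem_line_one h1).mpr h), h2⟩,
        ⟨fun h => h5 ((hl1 b).mpr ((mem_line_one h3).mpr h)), h4⟩, ?_⟩
      simp only
      intro h
      have e1 := sig_phi (σ := σ) h1
      have e2 := sig_phi (σ := σ) h3
      rw [← h, map_add, hs, e1] at e2
      have : (phi σ b - 1) * g.b = 0 := by linear_combination e2
      rcases mul_eq_zero.mp this with h' | h'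
      · exact h5 ((mem_line_one h1).mpr (sub_eq_zero.mp h'))
      · exact hg1 h'
    · intro b hb c hc e
      simp only [mem_filter, mem_univ, true_and] at hb hc
      simp only [Prod.mk.injEq] at e
      obtain ⟨⟨⟨h1, h2⟩, h3, h4⟩, h5⟩ := hb
      obtain ⟨⟨⟨k1, k2⟩, k3, k4⟩, k5⟩ := hc
      have e1 := sig_phi (σ := σ) h1
      have e2 := sig_phi (σ := σ) h3
      have f1 := sig_phi (σ := σ) k1
      have f2 := sig_phi (σ := σ) k3
      rw [← e.1] at f1
      rw [← e.2] at f2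
      rw [map_add, hs, e1] at e2
      rw [map_add, hs, f1] at f2
      have : (phi σ b - phi σ (g.b + b)) * (b - c) = 0 := by linear_combination f2 - e2
      rcases mul_eq_zero.mp this with h' | h'
      · exfalso
        rw [← sub_eq_zero.mp h'] at e2
        have : (phi σ b - 1) * g.b = 0 := by linear_combination e2
        rcases mul_eq_zero.mp this with h' | h'
        · exact h5 ((mem_line_one h1).mpr (sub_eq_zero.mp h'))
        · exact hg1 h'
      · exact sub_eq_zero.mp h'
    · rintro ⟨v1, v2⟩ hv
      simp only [mem_offDiag, mem_erase] at hv
      obtain ⟨⟨a1, a2⟩, ⟨b1, b2⟩, hne⟩ := hv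
      have d : v2 - v1 ≠ 0 := sub_ne_zero.mpr (Ne.symm hne)
      have d1 : 1 - v1 ≠ 0 := sub_ne_zero.mpr (Ne.symm a1)
      have d2 : 1 - v2 ≠ 0 := sub_ne_zero.mpr (Ne.symm b1)
      have n1 := left_ne_zero_of_mul_eq_one (hM.norm v1 a2)
      have n2 := left_ne_zero_of_mul_eq_one (hM.norm v2 b2)
      have s1 := sig_inv (hM.norm v1 a2)
      have s2 := sig_inv (hM.norm v2 b2)
      have hsd : σ (v2 - v1) = -((v2 - v1) / (v1 * v2)) := by
        rw [map_sub, s1, s2]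
        field_simp
        ring
      set x := g.b * (1 - v2) / (v2 - v1) with hx
      have hx' : g.b + x = g.b * (1 - v1) / (v2 - v1) := by
        rw [hx]; field_simp; ring
      have x0 : x ≠ 0 := div_ne_zero (mul_ne_zero hg1 d2) d
      have x0' : g.b + x ≠ 0 := by
        rw [hx']; exact div_ne_zero (mul_ne_zero hg1 d1) d
      have p1 : phi σ x = v1 := by
        rw [phi_eq x0, hx, map_div₀, hsd, map_mul, map_sub, s2, hs, map_one]
        field_simp
        ring
      have p2 : phi σ (g.b + x) = v2 := by
        rw [phi_eq x0', hx', map_div₀, hsd, map_mul, map_sub, s1, hs, map_one]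
        field_simp
        ring
      refine ⟨x, ?_, ?_⟩
      · simp only [mem_filter, mem_univ, true_and]
        refine ⟨⟨⟨x0, p1 ▸ a2⟩, x0', p2 ▸ b2⟩, ?_⟩
        rw [mem_line_one x0, p1]
        exact a1
      · simp only [p1, p2]

end Heis

end HermPDS

namespace HermPDS
open Finset

/-! ### The field with `q²` elements -/

/-- Sizes of the lines, of the norm fibres and of the groups of roots of unity, all instances of
`card_pow_eq` for the factorisation `q² - 1 = (q - 1) * (q + 1)`. -/
theorem field_facts {K : Type} [Field K] [Fintype K] {q : ℕ} (hq2 : 2 ≤ q)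
    (hK : Fintype.card K = q ^ 2) (σ : K →+* K) (hσq : ∀ x, σ x = x ^ q) :
    (∀ x, σ (σ x) = x) ∧ (∀ v, v * σ v = 1 → #(line σ v) = q) ∧
      (∀ c, c ≠ 0 → σ c = c → #{x | x * σ x = c} = q + 1) ∧
      (∀ m r, m * r = q + 1 → IsMu σ {v | v ^ m = 1} m) := by
  have hinv : ∀ x, σ (σ x) = x := by
    intro x
    rw [hσq, hσq, ← pow_mul, ← sq, ← hK, FiniteField.pow_card]
  obtain ⟨s, rfl⟩ : ∃ s, q = s + 1 := ⟨q - 1, by omega⟩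
  refine ⟨hinv, ?_, ?_, ?_⟩
  · intro v hv
    have n : v ≠ 0 := left_ne_zero_of_mul_eq_one hv
    have h := card_pow_eq (K := K) (a := s) (b := s + 2) (by omega) (by omega)
      (by rw [hK]; ring) (c := -v) (by
        rw [pow_succ', ← hσq, map_neg, neg_mul_neg, hv])
    have : line σ v = insert 0 (univ.filter fun x : K => x ^ s = -v) := by
      ext x
      simp only [mem_line, hσq, mem_insert, mem_filter, mem_univ, true_and]
      by_cases hx : x = 0
      · simp [hx]
      · rw [pow_succ, ← neg_mul, mul_left_inj' hx]
        simp [hx]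
    rw [this, card_insert_of_notMem, h]
    simp only [mem_filter, mem_univ, true_and]
    rw [zero_pow (by omega)]
    exact (neg_ne_zero.mpr n).symm
  · intro c hc hcc
    have h := card_pow_eq (K := K) (a := s + 2) (b := s) (by omega) (by omega)
      (by rw [hK]; ring) (c := c) (by
        rw [hσq, pow_succ] at hcc
        exact (mul_eq_right₀ hc).mp hcc)
    rw [← h]
    congr 1
    ext x
    simp only [mem_filter, mem_univ, true_and, hσq]
    rw [← pow_succ']
  · intro m r hmr
    have hm : 0 < m := Nat.pos_of_ne_zero (by rintro rfl; simp at hmr)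
    have hr : 0 < r := Nat.pos_of_ne_zero (by rintro rfl; simp at hmr)
    refine ⟨by simp, ?_, ?_, ?_, ?_⟩
    · intro v hv
      simp only [mem_filter, mem_univ, true_and] at hv ⊢
      rw [inv_pow, hv, inv_one]
    · intro v hv w hw
      simp only [mem_filter, mem_univ, true_and] at hv hw ⊢
      rw [mul_pow, hv, hw, one_mul]
    · intro v hv
      simp only [mem_filter, mem_univ, true_and] at hv ⊢
      rw [hσq, ← pow_succ', ← hmr, pow_mul, hv, one_pow]
    · refine card_pow_eq (b := r * s) hm (Nat.mul_pos hr (by omega)) ?_ (one_pow _)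
      rw [hK, ← mul_assoc, hmr]; ring

/-- Elements with first coordinates `1` and `u` do not commute when `u` is not fixed by `σ`. -/
theorem exists_not_comm {K : Type} [Field K] [Fintype K] {q : ℕ} (hq2 : 2 ≤ q)
    (hK : Fintype.card K = q ^ 2) {σ : K →+* K} (hσ : ∀ x, σ (σ x) = x)
    (hline : ∀ v, v * σ v = 1 → #(line σ v) = q) :
    ∃ a b : Heis σ hσ, a * b ≠ b * a := by
  have hex : ∀ v, v * σ v = 1 → ∃ x, σ x ≠ -(v * x) := by
    intro v hv
    by_contra! h
    have : line σ v = univ := by ext x; simp [mem_line, h x]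
    have h2 := hline v hv
    rw [this, card_univ, hK] at h2
    nlinarith
  -- An element of nonzero trace, and one that is not fixed by `σ`.
  obtain ⟨w, hw⟩ := hex 1 (by simp)
  obtain ⟨u, hu⟩ := hex (-1) (by simp)
  have ht : w + σ w ≠ 0 := by
    intro h; apply hw; linear_combination h
  have hlift : ∀ a : K, ∃ g : Heis σ hσ, g.a = a := by
    intro a
    refine ⟨⟨a, a * σ a * w / (w + σ w), ?_⟩, rfl⟩
    have hts : σ (w + σ w) = w + σ w := by rw [map_add, hσ, add_comm]
    rw [map_div₀, hts, map_mul, map_mul, hσ]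
    field_simp
  obtain ⟨g, hg⟩ := hlift 1
  obtain ⟨h, hh⟩ := hlift u
  refine ⟨g, h, fun e => hu ?_⟩
  have e2 := congrArg Heis.b e
  simp only [Heis.mul_b, hg, hh, map_one] at e2
  linear_combination -e2

end HermPDS

open HermPDS in
/-- For a prime power `q` and a divisor `r` of `q+1` with `1 < r < q+1` and `m = (q+1)/r`,
there exists a nonabelian group of order `q³` containing a PDS with parameters
`(q³, (q−1)(m(q+1)−q), r(m−1)³+r−3, (m−1)(m(q+1)−q))`. -/
theorem stmt_11 (q r : ℕ) (hq : IsPrimePow q) (hr : r ∣ q + 1) (hr1 : 1 < r)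
    (hrq : r < q + 1) :
    ∃ (G : Type) (instG : Group G) (_ : Finite G) (S : Set G),
      Nat.card G = q ^ 3 ∧ (∃ a b : G, a * b ≠ b * a) ∧
      @IsPDS G instG (q ^ 3) ((q - 1) * ((q + 1) / r * (q + 1) - q))
        (r * ((q + 1) / r - 1) ^ 3 + r - 3)
        (((q + 1) / r - 1) * ((q + 1) / r * (q + 1) - q)) S := by
  have hq2 : 2 ≤ q := hq.two_le
  obtain ⟨K, instF, instFt, σ, hK, hσq⟩ : ∃ (K : Type) (_ : Field K) (_ : Fintype K)
      (σ : K →+* K), Fintype.card K = q ^ 2 ∧ ∀ x, σ x = x ^ q := by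
    obtain ⟨p, n, hp, hn, rfl⟩ := (isPrimePow_nat_iff q).mp hq
    have : Fact p.Prime := ⟨hp⟩
    let : Fintype (GaloisField p (n * 2)) := Fintype.ofFinite _
    refine ⟨GaloisField p (n * 2), inferInstance, inferInstance,
      iterateFrobenius _ p n, ?_, fun x => iterateFrobenius_def p n x⟩
    rw [← Nat.card_eq_fintype_card, GaloisField.card p _ (by omega), pow_mul]
  obtain ⟨m, hm⟩ := hr
  have hdiv : (q + 1) / r = m := by rw [hm, Nat.mul_div_cancel_left _ (by omega)]
  obtain ⟨hσ, hline, hnorm, hmu⟩ := field_facts hq2 hK σ hσq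
  have hM := hmu m r (by rw [hm, mul_comm])
  obtain ⟨n, rfl⟩ : ∃ n, m = n + 2 := by
    refine ⟨m - 2, ?_⟩
    rcases m with _ | _ | m
    · omega
    · omega
    · rfl
  rw [hdiv]
  generalize hMdef : ({v : K | v ^ (n + 2) = 1} : Finset K) = M at hM
  obtain ⟨s, rfl⟩ : ∃ s, q = s + 2 := ⟨q - 2, by omega⟩
  obtain ⟨t, rfl⟩ : ∃ t, r = t + 2 := ⟨r - 2, by omega⟩
  have hk : (n + 2) * (s + 2 + 1) - (s + 2) = (n + 1) * (s + 3) + 1 := by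
    rw [Nat.sub_eq_iff_eq_add] <;> nlinarith
  have e1 : s + 2 - 1 = s + 1 := rfl
  have e2 : n + 2 - 1 = n + 1 := rfl
  have hmZ : (s : ℤ) + 3 = (t + 2) * (n + 2) := by
    have := congrArg (Nat.cast : ℕ → ℤ) hm
    push_cast at this
    linear_combination this
  have hl : (((t + 2) * (n + 1) ^ 3 + (t + 2) - 3 : ℕ) : ℤ) =
      (t + 2) * (n + 1) ^ 3 + (t + 2) - 3 := by
    rw [Nat.cast_sub]
    · push_cast; ring
    · have : 1 ≤ (n + 1) ^ 3 := Nat.one_le_pow _ _ (by omega)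
      nlinarith
  refine ⟨Heis σ hσ, inferInstance, inferInstance, Heis.pds σ hσ M, Heis.card_eq hK hline hnorm,
    exists_not_comm hq2 hK hσ hline, Heis.card_eq hK hline hnorm, ?_, ?_, ?_, ?_⟩
  · rw [Heis.card_pds hline hnorm hM, hk, e1, e2]
    ring
  · intro h
    exact h.1 rfl
  · intro g hg
    rw [Heis.mem_pds] at hg ⊢
    rw [Heis.inv_b, phi_conj hσ hg.1]
    exact ⟨(map_ne_zero σ).mpr hg.1, hM.inv _ hg.2⟩
  · intro g hg
    rw [Heis.card_pairs, hk, e2]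
    by_cases ha : g.a = 0
    · have hb : g.b ≠ 0 := fun h => hg (Heis.ext ha h)
      have hmem : g ∈ Heis.pds σ hσ M := by
        refine ⟨hb, ?_⟩
        have h1 : phi σ g.b = 1 := by
          rw [phi_eq hb]
          have := g.eq
          rw [ha, zero_mul] at this
          linear_combination this
        rw [h1]
        exact hM.one
      rw [if_pos hmem, Heis.count_zero hline hnorm hM g ha hb]
      have e3 : (n + 2 - 1) * (n + 2 - 1) - (n + 2 - 1) = (n + 1) * n := by
        rw [e2, Nat.sub_eq_iff_eq_add] <;> nlinarith
      rw [e3]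
      zify
      rw [hl]
      push_cast [Nat.add_sub_cancel]
      linear_combination ((n : ℤ) ^ 2 + n + 1) * hmZ
    · have h := Heis.count_ne hline hnorm hM g ha
      zify
      rw [h]
      split_ifs
      · rw [hl]
        push_cast
        linear_combination ((n : ℤ) ^ 2 + n + 1) * hmZ
      · push_cast
        ring
end

section
/- Let G be a group of order 27 containing elements x, y, z with x³ = y³ = z³ = 1, x·z = z·x, y·z = z·y, x·y·x⁻¹ = y·z⁻¹, and G generated by x and y (so G is the Heisenberg group of order 27). Then the 10-element set S₁ = { x, x², x·y, x·y², z, y·z, x²·y²·z, z², y²·z², x²·y·z² } is a (27, 10, 1, 5) partial difference set in G. -/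
/-!
The relation `x * y * x⁻¹ = y * z⁻¹` with `z` central reads `y * x = x * y * z`, so the words
`x ^ a * y ^ b * z ^ c` with exponents modulo 3 multiply by
`(a, b, c) * (a₂, b₂, c₂) = (a + a₂, b + b₂, c + c₂ + b * a₂)`. This makes `(ZMod 3)³` into a
group `Heis`, and `(a, b, c) ↦ x ^ a * y ^ b * z ^ c` a homomorphism from it to `G`
(`Heis.toGroup`). It is onto because `x` and `y` generate `G`, hence bijective because both groups
have 27 elements. Being a partial difference set is invariant under isomorphism (`IsPDS.image`),
and in the concrete group `Heis` it is a finite computation (`Heis.isPDS_S₁`).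
-/

attribute [local instance] Classical.propDecidable

/-- Partial difference sets are carried to partial difference sets by group isomorphisms. -/
theorem IsPDS.image {H G : Type*} [Group H] [Group G] {v k l m : ℕ} {S : Set H}
    (h : IsPDS v k l m S) (e : H ≃* G) : IsPDS v k l m (e '' S) := by
  obtain ⟨hv, hk, h1, hinv, hcount⟩ := h
  have hmem : ∀ g : G, g ∈ e '' S ↔ e.symm g ∈ S := by
    intro g
    constructor
    · rintro ⟨s, hs, rfl⟩
      simpa using hs
    · intro hg
      exact ⟨_, hg, by simp⟩
  refine ⟨?_, ?_, ?_, ?_, ?_⟩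
  · rw [← hv]
    exact (Nat.card_congr e.toEquiv).symm
  · rw [← hk]
    exact (Nat.card_congr (e.toEquiv.image S)).symm
  · rw [hmem]
    simpa using h1
  · intro s hs
    rw [hmem] at hs ⊢
    simpa using hinv _ hs
  · intro g hg
    have hg_ne : e.symm g ≠ 1 := by simpa using hg
    simp only [hmem]
    rw [← hcount _ hg_ne]
    refine (Nat.card_congr (Equiv.subtypeEquiv
      (Equiv.prodCongr (e.toEquiv.image S) (e.toEquiv.image S)) ?_)).symm
    rintro ⟨p, q⟩
    change (p : H) * (q : H)⁻¹ = e.symm g ↔ e p * (e q)⁻¹ = g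
    rw [← map_inv, ← map_mul, MulEquiv.eq_symm_apply]

/-- The Heisenberg group of order 27; `⟨a, b, c⟩` stands for the word `x ^ a * y ^ b * z ^ c`,
where `z` is central and `y * x = x * y * z`. -/
structure Heis where
  /-- The exponent of `x`. -/
  a : ZMod 3
  /-- The exponent of `y`. -/
  b : ZMod 3
  /-- The exponent of `z`. -/
  c : ZMod 3

namespace Heis

instance : DecidableEq Heis := fun p q =>
  if h : p.a = q.a ∧ p.b = q.b ∧ p.c = q.c then
    isTrue (by cases p; cases q; simpa using h)
  else
    isFalse (by rintro rfl; exact h ⟨rfl, rfl, rfl⟩)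

instance : Fintype Heis :=
  Fintype.ofEquiv (ZMod 3 × ZMod 3 × ZMod 3)
    ⟨fun t => ⟨t.1, t.2.1, t.2.2⟩, fun p => (p.a, p.b, p.c), fun _ => rfl, fun _ => rfl⟩

instance : Mul Heis := ⟨fun p q => ⟨p.a + q.a, p.b + q.b, p.c + q.c + p.b * q.a⟩⟩
instance : One Heis := ⟨⟨0, 0, 0⟩⟩
instance : Inv Heis := ⟨fun p => ⟨-p.a, -p.b, -p.c + p.b * p.a⟩⟩

theorem mul_def (p q : Heis) :
    p * q = ⟨p.a + q.a, p.b + q.b, p.c + q.c + p.b * q.a⟩ := rfl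

theorem one_def : (1 : Heis) = ⟨0, 0, 0⟩ := rfl

theorem inv_def (p : Heis) : p⁻¹ = ⟨-p.a, -p.b, -p.c + p.b * p.a⟩ := rfl

instance : Group Heis :=
  Group.ofLeftAxioms
    (fun p q r => by simp only [mul_def, mk.injEq]; refine ⟨?_, ?_, ?_⟩ <;> ring)
    (fun p => by simp [mul_def, one_def])
    (fun p => by simp [mul_def, one_def, inv_def])

/-- The exponent triples of the ten elements of the partial difference set. -/
def S₁ : Finset Heis :=
  {⟨1, 0, 0⟩, ⟨2, 0, 0⟩, ⟨1, 1, 0⟩, ⟨1, 2, 0⟩, ⟨0, 0, 1⟩, ⟨0, 1, 1⟩, ⟨2, 2, 1⟩, ⟨0, 0, 2⟩,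
    ⟨0, 2, 2⟩, ⟨2, 1, 2⟩}

theorem card_eq : Fintype.card Heis = 27 := by decide +kernel

theorem card_S₁ : S₁.card = 10 := by decide +kernel

theorem one_notMem_S₁ : (1 : Heis) ∉ S₁ := by decide +kernel

theorem inv_mem_S₁ : ∀ s ∈ S₁, s⁻¹ ∈ S₁ := by decide +kernel

theorem count_S₁ : ∀ g : Heis, g ≠ 1 →
    Fintype.card {p : ↥S₁ × ↥S₁ // (p.1 : Heis) * (p.2 : Heis)⁻¹ = g} =
      if g ∈ S₁ then 1 else 5 := by decide +kernel

theorem isPDS_S₁ : IsPDS 27 10 1 5 (S₁ : Set Heis) := by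
  refine ⟨?_, ?_, ?_, ?_, ?_⟩
  · rw [Nat.card_eq_fintype_card, card_eq]
  · rw [← card_S₁]
    simp
  · exact_mod_cast one_notMem_S₁
  · exact_mod_cast inv_mem_S₁
  · intro g hg
    have h := count_S₁ g hg
    rw [← Nat.card_eq_fintype_card] at h
    refine h.trans ?_
    simp only [Finset.mem_coe]

/-- A group containing `x, y, z` that satisfy the Heisenberg relations receives the homomorphism
`⟨a, b, c⟩ ↦ x ^ a * y ^ b * z ^ c` from `Heis`; the exponents are read as residues in `{0, 1, 2}`. -/
def toGroup {G : Type*} [Group G] (x y z : G) (hx : x ^ 3 = 1) (hy : y ^ 3 = 1) (hz : z ^ 3 = 1)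
    (hxz : Commute x z) (hyz : Commute y z) (hyx : y * x = x * y * z) : Heis →* G :=
  MonoidHom.mk' (fun p => x ^ p.a.val * y ^ p.b.val * z ^ p.c.val) <| by
    have red : ∀ {g : G}, g ^ 3 = 1 → ∀ n : ℕ, g ^ (n % 3) = g ^ n :=
      fun h n => (pow_eq_pow_mod n h).symm
    have hy1 : ∀ n : ℕ, y ^ n * x = x * y ^ n * z ^ n := by
      intro n
      induction n with
      | zero => simp
      | succ n ih =>
        calc y ^ (n + 1) * x = y ^ n * (y * x) := by rw [pow_succ, mul_assoc]
          _ = (y ^ n * x) * y * z := by rw [hyx]; simp only [mul_assoc]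
          _ = x * y ^ n * (z ^ n * y) * z := by rw [ih]; simp only [mul_assoc]
          _ = x * y ^ n * (y * z ^ n) * z := by rw [(hyz.pow_right n).eq]
          _ = x * y ^ (n + 1) * z ^ (n + 1) := by simp only [pow_succ, mul_assoc]
    have hyx_pow : ∀ n k : ℕ, y ^ n * x ^ k = x ^ k * y ^ n * z ^ (n * k) := by
      intro n k
      induction k with
      | zero => simp
      | succ k ih =>
        calc y ^ n * x ^ (k + 1) = (y ^ n * x ^ k) * x := by rw [pow_succ, mul_assoc]
          _ = x ^ k * y ^ n * (z ^ (n * k) * x) := by rw [ih]; simp only [mul_assoc]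
          _ = x ^ k * y ^ n * (x * z ^ (n * k)) := by rw [(hxz.pow_right (n * k)).eq]
          _ = x ^ k * (y ^ n * x) * z ^ (n * k) := by simp only [mul_assoc]
          _ = x ^ k * x * y ^ n * (z ^ n * z ^ (n * k)) := by rw [hy1]; simp only [mul_assoc]
          _ = x ^ (k + 1) * y ^ n * z ^ (n * (k + 1)) := by
            rw [← pow_add, ← pow_succ, mul_add, mul_one, add_comm n]
    rintro ⟨a, b, c⟩ ⟨a₂, b₂, c₂⟩
    simp only [mul_def, ZMod.val_add, ZMod.val_mul, red hx, red hy, red hz]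
    simp only [pow_add, red hz]
    generalize a.val = a, b.val = b, c.val = c, a₂.val = a₂, b₂.val = b₂, c₂.val = c₂
    symm
    calc x ^ a * y ^ b * z ^ c * (x ^ a₂ * y ^ b₂ * z ^ c₂)
        = x ^ a * y ^ b * (z ^ c * (x ^ a₂ * y ^ b₂)) * z ^ c₂ := by simp only [mul_assoc]
      _ = x ^ a * (y ^ b * x ^ a₂) * y ^ b₂ * (z ^ c * z ^ c₂) := by
        rw [← (((hxz.pow_pow a₂ c).mul_left (hyz.pow_pow b₂ c))).eq]
        simp only [mul_assoc]
      _ = x ^ a * x ^ a₂ * y ^ b * (z ^ (b * a₂) * y ^ b₂) * (z ^ c * z ^ c₂) := by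
        rw [hyx_pow]; simp only [mul_assoc]
      _ = x ^ a * x ^ a₂ * (y ^ b * y ^ b₂) * (z ^ (b * a₂) * (z ^ c * z ^ c₂)) := by
        rw [← (hyz.pow_pow b₂ (b * a₂)).eq]; simp only [mul_assoc]
      _ = x ^ a * x ^ a₂ * (y ^ b * y ^ b₂) * (z ^ c * z ^ c₂ * z ^ (b * a₂)) := by
        simp only [← pow_add, add_comm]

end Heis

/-- In the Heisenberg group of order 27 (with generators `x, y` and central `z`), the set
`S₁ = {x, x², xy, xy², z, yz, x²y²z, z², y²z², x²yz²}` is a `(27,10,1,5)` PDS. -/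
theorem stmt_12 {G : Type*} [Group G] (hG : Nat.card G = 27)
    (x y z : G) (hx : x ^ 3 = 1) (hy : y ^ 3 = 1) (hz : z ^ 3 = 1)
    (hxz : x * z = z * x) (hyz : y * z = z * y) (hxy : x * y * x⁻¹ = y * z⁻¹)
    (hgen : Subgroup.closure {x, y} = ⊤) :
    IsPDS 27 10 1 5
      ({x, x ^ 2, x * y, x * y ^ 2, z, y * z, x ^ 2 * y ^ 2 * z, z ^ 2, y ^ 2 * z ^ 2,
        x ^ 2 * y * z ^ 2} : Set G) := by
  have hyx : y * x = x * y * z := by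
    have h : x * y = y * z⁻¹ * x := by rw [← hxy]; group
    have hc : z⁻¹ * x = x * z⁻¹ := (Commute.inv_right hxz).eq.symm
    rw [h, mul_assoc y, hc]
    group
  let f := Heis.toGroup x y z hx hy hz hxz hyz hyx
  have hf : ∀ p : Heis, f p = x ^ p.a.val * y ^ p.b.val * z ^ p.c.val := fun _ => rfl
  have h1 : (1 : ZMod 3).val = 1 := rfl
  have h2 : (2 : ZMod 3).val = 2 := rfl
  have hsurj : Function.Surjective f := by
    rw [← MonoidHom.range_eq_top, eq_top_iff, ← hgen, Subgroup.closure_le]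
    rintro g (rfl | rfl)
    · exact ⟨⟨1, 0, 0⟩, by simp [hf, h1]⟩
    · exact ⟨⟨0, 1, 0⟩, by simp [hf, h1]⟩
  have hbij : Function.Bijective f :=
    hsurj.bijective_of_nat_card_le (by rw [hG, Nat.card_eq_fintype_card, Heis.card_eq])
  have h := Heis.isPDS_S₁.image (MulEquiv.ofBijective f hbij)
  convert h using 1
  simp [Heis.S₁, Set.image_insert_eq, hf, h1, h2]
end

section
/- (Ma) Let G be a finite group of order v, let S be a Type II (v,k,λ,μ) partial difference set in G with 0 < k < v−1, let G' be the commutator subgroup of G, and let π : G → G/G' be the natural projection. If m is a positive integer coprime to |G/G'|, then for every coset c ∈ G/G', the number of elements s ∈ S with π(s)ᵐ = c equals the number of elements s ∈ S with π(s) = c (i.e., the image of S in the abelianization, counted with multiplicity, is fixed by the m-th power map). -/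
/-!
Let `π : G →* A` be a homomorphism to a finite abelian group whose order is coprime to `n`.
For a character `χ` of `A`, put `χ(S) = ∑ s ∈ S, χ (π s)`. If `χ ∘ π` is nontrivial, the group ring
identity `S * S⁻¹ = k + l S + m (G - 1 - S)` and `S = S⁻¹` show that `χ(S)` is a root of
`X² - (l - m) X - (k - m)`, whose discriminant is a perfect square; hence `χ(S)` is rational
(`charSum_rational`). Writing the values of `χ` as powers of a primitive `|A|`-th root of unity `ζ`,
rationality of `χ(S)` says that `ζ` is a root of a polynomial over `ℚ`. As `ζ` and `ζ ^ n` have the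
same minimal polynomial, `∑ χ (π s) ^ n = χ(S)` (`sum_pow_eq_of_rational`). So the multisets
`π(S)` and `π(S)ⁿ` have the same character sums, and Fourier inversion on `A`
(`card_fiber_eq_of_charSum_eq`) shows that they coincide.
-/


attribute [local instance] Classical.propDecidable

/-- A nontrivial linear character sum over a PDS is a root of `X² - (l - m) X - (k - m)`. -/
lemma charSum_quadratic {G : Type*} [Group G] [Fintype G] {v k l m : ℕ} {S : Set G}
    (hS : IsPDS v k l m S) (χ : G →* ℂ) (hχ : ∃ g, χ g ≠ 1) :
    (∑ s : S, χ s) ^ 2 = k + l * (∑ s : S, χ s) + m * (-1 - ∑ s : S, χ s) := by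
  obtain ⟨-, hk, h1, hinv, hcount⟩ := hS
  have hG : ∑ g : G, χ g = 0 := by
    obtain ⟨a, ha⟩ := hχ
    have h : χ a * ∑ g : G, χ g = ∑ g : G, χ g := by
      rw [Finset.mul_sum]
      exact Fintype.sum_equiv (Equiv.mulLeft a) _ _ fun g => by simp
    have h' : (χ a - 1) * ∑ g : G, χ g = 0 := by rw [sub_mul, h]; ring
    exact (mul_eq_zero.mp h').resolve_left (sub_ne_zero.mpr ha)
  have hneg : ∑ s : S, χ s = ∑ s : S, χ (s : G)⁻¹ :=
    Fintype.sum_equiv ⟨fun s => ⟨(s : G)⁻¹, hinv _ s.2⟩, fun s => ⟨(s : G)⁻¹, hinv _ s.2⟩,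
      fun s => by simp, fun s => by simp⟩ _ _ fun s => by simp
  have hcard : ∀ g : G, (Nat.card {p : ↥S × ↥S // (p.1 : G) * (p.2 : G)⁻¹ = g} : ℂ) =
      (if g ∈ S then (l : ℂ) - m else 0) + m + if g = 1 then (k : ℂ) - m else 0 := by
    intro g
    by_cases hg : g = 1
    · subst hg
      have : Nat.card {p : ↥S × ↥S // (p.1 : G) * (p.2 : G)⁻¹ = 1} = k := by
        rw [← hk]
        refine Nat.card_congr ⟨fun p => p.1.1, fun s => ⟨(s, s), by simp⟩, ?_, fun s => rfl⟩
        rintro ⟨⟨x, y⟩, h⟩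
        have : x = y := Subtype.ext (mul_inv_eq_one.mp h)
        simp [this]
      rw [this]
      simp [h1]
    · rw [hcount g hg]
      split_ifs <;> simp
  have hS' : ∑ g : G, χ g * (if g ∈ S then (l : ℂ) - m else 0) = (l - m) * ∑ s : S, χ s := by
    simp only [mul_ite, mul_zero]
    rw [← Finset.sum_filter, Finset.mul_sum,
      Finset.sum_subtype (p := fun x => x ∈ S) _ (fun x => by simp)]
    exact Finset.sum_congr rfl fun s _ => mul_comm _ _
  calc (∑ s : S, χ s) ^ 2 = (∑ s : S, χ s) * ∑ s : S, χ (s : G)⁻¹ := by rw [← hneg, sq]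
    _ = ∑ p : S × S, χ ((p.1 : G) * (p.2 : G)⁻¹) := by
        rw [Fintype.sum_mul_sum, Fintype.sum_prod_type]; simp
    _ = ∑ g : G, ∑ p : {p : S × S // (p.1 : G) * (p.2 : G)⁻¹ = g}, χ g := by
        rw [← Fintype.sum_fiberwise (fun p : S × S => (p.1 : G) * (p.2 : G)⁻¹)]
        exact Finset.sum_congr rfl fun g _ => Finset.sum_congr rfl fun p _ => by rw [p.2]
    _ = ∑ g : G, χ g * Nat.card {p : S × S // (p.1 : G) * (p.2 : G)⁻¹ = g} := by
        simp [Nat.card_eq_fintype_card, mul_comm]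
    _ = _ := by
        simp only [hcard, mul_add, Finset.sum_add_distrib, hS', ← Finset.sum_mul, hG]
        simp
        ring

/-- All linear character sums over a Type II PDS are rational. -/
lemma charSum_rational {G : Type*} [Group G] [Fintype G] {v k l m : ℕ} {S : Set G}
    (hS : IsPDS v k l m S)
    (hII : ∃ s : ℤ, ((l : ℤ) - (m : ℤ)) ^ 2 + 4 * ((k : ℤ) - (m : ℤ)) = s ^ 2)
    (χ : G →* ℂ) : ∃ r : ℚ, ∑ s : S, χ s = r := by
  by_cases hχ : ∃ g, χ g ≠ 1
  · obtain ⟨s, hs⟩ := hII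
    have hq := charSum_quadratic hS χ hχ
    generalize ∑ s : S, χ s = X at hq
    have hs' : ((l : ℂ) - m) ^ 2 + 4 * ((k : ℂ) - m) = s ^ 2 := by exact_mod_cast hs
    have : (2 * X - (l - m) - s) * (2 * X - (l - m) + s) = 0 := by
      linear_combination 4 * hq + hs'
    rcases mul_eq_zero.mp this with h | h
    · refine ⟨((l : ℚ) - m + s) / 2, ?_⟩
      push_cast
      linear_combination h / 2
    · refine ⟨((l : ℚ) - m - s) / 2, ?_⟩
      push_cast
      linear_combination h / 2
  · push Not at hχ
    exact ⟨Fintype.card S, by simp [hχ]⟩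

/-- A rational sum of `N`-th roots of unity is unchanged when each summand is raised to a power
coprime to `N`. -/
lemma sum_pow_eq_of_rational {ι : Type*} [Fintype ι] (N n : ℕ) (hN : 0 < N) (hn : n.Coprime N)
    (z : ι → ℂ) (hz : ∀ i, z i ^ N = 1) (r : ℚ) (hr : ∑ i, z i = r) :
    ∑ i, z i ^ n = r := by
  have : NeZero N := ⟨hN.ne'⟩
  have hζ := Complex.isPrimitiveRoot_exp N hN.ne'
  generalize Complex.exp (2 * Real.pi * Complex.I / N) = ζ at hζ
  choose e _ he using fun i => hζ.eq_pow_of_pow_eq_one (hz i)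
  let P : Polynomial ℚ := ∑ i, Polynomial.X ^ e i - Polynomial.C r
  have hP : Polynomial.aeval ζ P = 0 := by simp [P, he, hr]
  -- `ζ` and `ζ ^ n` have the same minimal polynomial, the `N`-th cyclotomic polynomial.
  have hdvd : minpoly ℚ (ζ ^ n) ∣ P := by
    rw [← Polynomial.cyclotomic_eq_minpoly_rat (hζ.pow_of_coprime n hn) hN,
      Polynomial.cyclotomic_eq_minpoly_rat hζ hN]
    exact minpoly.dvd ℚ ζ hP
  have hP' : Polynomial.aeval (ζ ^ n) P = 0 := by
    obtain ⟨Q, hQ⟩ := hdvd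
    rw [hQ, map_mul, minpoly.aeval, zero_mul]
  simp only [P, map_sub, map_sum, map_pow, Polynomial.aeval_X, Polynomial.aeval_C, sub_eq_zero]
    at hP'
  calc ∑ i, z i ^ n = ∑ i, (ζ ^ n) ^ e i :=
        Finset.sum_congr rfl fun i _ => by rw [← he i, ← pow_mul, ← pow_mul, mul_comm]
    _ = r := by rw [hP']; simp

/-- Fourier inversion: a finite family in a finite abelian group is determined, up to order, by
its character sums. -/
lemma card_fiber_eq_of_charSum_eq {ι A : Type*} [Fintype ι] [AddCommGroup A] [Finite A]
    (f g : ι → A) (h : ∀ ψ : AddChar A ℂ, ∑ i, ψ (f i) = ∑ i, ψ (g i)) (c : A) :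
    Nat.card {i // f i = c} = Nat.card {i // g i = c} := by
  have := Fintype.ofFinite A
  have key : ∀ f : ι → A, (Nat.card {i // f i = c} : ℂ) * Fintype.card A =
      ∑ ψ : AddChar A ℂ, (∑ i, ψ (f i)) * ψ (-c) := by
    intro f
    simp only [Finset.sum_mul, ← AddChar.map_add_eq_mul]
    rw [Finset.sum_comm]
    simp only [AddChar.sum_apply_eq_ite, add_neg_eq_zero]
    rw [← Finset.sum_filter, Finset.sum_const, Nat.card_eq_fintype_card, Fintype.card_subtype]
    simp
  have hA : (Fintype.card A : ℂ) ≠ 0 := by exact_mod_cast Fintype.card_ne_zero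
  have := (key f).trans ((Finset.sum_congr rfl fun ψ _ => by rw [h]).trans (key g).symm)
  exact_mod_cast mul_right_cancel₀ hA this

/-- The multiplier theorem for an arbitrary homomorphism to a finite abelian group. -/
lemma multiplier_hom {G A : Type*} [Group G] [Finite G] [CommGroup A] [Finite A] (π : G →* A)
    {v k l m : ℕ} {S : Set G} (hS : IsPDS v k l m S)
    (hII : ∃ s : ℤ, ((l : ℤ) - (m : ℤ)) ^ 2 + 4 * ((k : ℤ) - (m : ℤ)) = s ^ 2)
    (n : ℕ) (hcop : Nat.Coprime n (Nat.card A)) (c : A) :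
    Nat.card {s : S // π s ^ n = c} = Nat.card {s : S // π s = c} := by
  have := Fintype.ofFinite G
  refine card_fiber_eq_of_charSum_eq (A := Additive A)
    (fun s : S => n • Additive.ofMul (π s)) (fun s : S => Additive.ofMul (π s)) (fun ψ => ?_)
    (Additive.ofMul c)
  let χ : G →* ℂ :=
    { toFun := fun g => ψ (Additive.ofMul (π g))
      map_one' := by simp
      map_mul' := fun x y => by simp [AddChar.map_add_eq_mul] }
  obtain ⟨r, hr⟩ := charSum_rational hS hII χ
  have hroot : ∀ s : S, ψ (Additive.ofMul (π s)) ^ Nat.card A = 1 := fun s => by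
    rw [← AddChar.map_nsmul_eq_pow, ← ofMul_pow, pow_card_eq_one', ofMul_one,
      AddChar.map_zero_eq_one]
  simp only [AddChar.map_nsmul_eq_pow]
  exact (sum_pow_eq_of_rational _ n Nat.card_pos hcop _ hroot r hr).trans hr.symm

/-- Ma's nonabelian multiplier theorem: if `S` is a Type II `(v,k,l,m)` PDS in `G` and `n` is
coprime to `|G/G'|`, then the image of `S` in the abelianization `G/G'`, counted with
multiplicity, is fixed by the `n`-th power map. -/
theorem stmt_15 {G : Type*} [Group G] [Finite G] (v k l m : ℕ) (S : Set G)
    (hS : IsPDS v k l m S) (hk : 0 < k) (hkv : k < v - 1)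
    (hII : ∃ s : ℤ, ((l : ℤ) - (m : ℤ)) ^ 2 + 4 * ((k : ℤ) - (m : ℤ)) = s ^ 2)
    (n : ℕ) (hn : 0 < n) (hcop : Nat.Coprime n (Nat.card (G ⧸ commutator G))) :
    ∀ c : G ⧸ commutator G,
      Nat.card {s : ↥S // ((QuotientGroup.mk (s : G) : G ⧸ commutator G)) ^ n = c} =
      Nat.card {s : ↥S // ((QuotientGroup.mk (s : G) : G ⧸ commutator G)) = c} := by
  intro c
  have : Finite (Abelianization G) := inferInstanceAs (Finite (G ⧸ commutator G))
  exact multiplier_hom (Abelianization.of (G := G)) hS hII n hcop c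
end

section
/- (De Winter–Kamischke–Wang, for PDSs) Let G be a finite group of order v, let S be a (v,k,λ,μ) partial difference set in G with 0 < μ < k and k < v−1, and let θ₁ ≥ θ₂ be integers with θ₁ + θ₂ = λ − μ and θ₁·θ₂ = −(k − μ). For a nonidentity element x ∈ G, let d₁(x) := |{ g ∈ G : g·(g·x)⁻¹ ∈ S }| (the number of vertices of the Cayley graph Cay(G,S) that right translation by x sends to adjacent vertices). Then, as integers, d₁(x) ≡ μ − θ₂·(θ₁ + 1) (mod θ₁ − θ₂). -/
/-!
Let `A` be the adjacency matrix of `Cay(G,S)`, `R x` the permutation matrix of right translation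
by `x`, and `J` the all-ones matrix. The difference set axioms say that
`A² = (k - μ) + (λ - μ) A + μ J`, and right translations are automorphisms of the graph, so `A`
and `R x` commute. Put `D = θ₁ - θ₂`, which is nonzero since `θ₁ θ₂ = -(k - μ) < 0`. The matrix
`E = D⁻¹ (A - θ₂ - ((k - θ₂) / v) J)` is the projection onto the `θ₁`-eigenspace orthogonal to the
constants, so it is idempotent (`eigenmatrix_mul_self`), and it commutes with `R x`. Hence
`T = E (R x)` satisfies `T ^ (n + 1) = T` for `n` the order of `x`, its eigenvalues are algebraic
integers, and so is its trace (`isIntegral_trace_of_pow_eq`). As `R x` has trace `0` for `x ≠ 1`,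
this trace is the rational number `(d₁(x) - (k - θ₂)) / D`, which is therefore an integer:
`d₁(x) ≡ k - θ₂ (mod D)`, and `k = μ - θ₁ θ₂`.
-/

attribute [local instance] Classical.propDecidable

/-- A complex matrix equal to one of its higher powers has algebraic-integer trace: each eigenvalue
`r` satisfies `r ^ (n + 1) = r`. -/
lemma isIntegral_trace_of_pow_eq {ι : Type*} [Fintype ι] [DecidableEq ι] (T : Matrix ι ι ℂ) (n : ℕ)
    (hn : 0 < n) (hT : T ^ (n + 1) = T) : IsIntegral ℤ T.trace := by
  rw [Matrix.trace_eq_sum_roots_charpoly]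
  refine IsIntegral.multiset_sum fun r hr => ?_
  have hr' : r ∈ spectrum ℂ T := by
    rw [Matrix.mem_spectrum_iff_isRoot_charpoly]
    exact Polynomial.isRoot_of_mem_roots hr
  have hpow : r ^ (n + 1) = r := by
    have h := spectrum.subset_polynomial_aeval T
      (Polynomial.X ^ (n + 1) - Polynomial.X : Polynomial ℂ) ⟨r, hr', rfl⟩
    simp only [map_sub, map_pow, Polynomial.aeval_X, hT, sub_self, Polynomial.eval_sub,
      Polynomial.eval_pow, Polynomial.eval_X] at h
    have hne : Nontrivial (Matrix ι ι ℂ) := by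
      by_contra hc
      rw [not_nontrivial_iff_subsingleton] at hc
      rw [spectrum.of_subsingleton] at hr'
      exact hr'
    rw [spectrum.zero_eq] at h
    exact sub_eq_zero.mp h
  refine ⟨Polynomial.X ^ (n + 1) - Polynomial.X, ?_, by simp [hpow]⟩
  exact Polynomial.monic_X_pow_sub (by
    rw [Polynomial.degree_X]; exact_mod_cast Nat.succ_lt_succ hn)

/-- The adjacency matrix of `Cay(G,S)`. -/
noncomputable def cayMat {G : Type*} [Group G] (S : Set G) : Matrix G G ℂ :=
  Matrix.of fun g h => if g * h⁻¹ ∈ S then 1 else 0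

/-- The permutation matrix of right translation by `x`, with the ones at `(h * x, h)`, so that
`(M * transMat x) g h = M g (h * x)`. -/
noncomputable def transMat {G : Type*} [Group G] (x : G) : Matrix G G ℂ :=
  Matrix.of fun g h => if g = h * x then 1 else 0

/-- The all-ones matrix. -/
def onesMat (G : Type*) : Matrix G G ℂ := Matrix.of fun _ _ => 1

lemma onesMat_mul_self {G : Type*} [Fintype G] :
    onesMat G * onesMat G = (Fintype.card G : ℂ) • onesMat G := by
  ext g h
  simp [Matrix.mul_apply, onesMat]

section
variable {G : Type*} [Group G] [Fintype G]

lemma mul_transMat_apply (M : Matrix G G ℂ) (x g h : G) :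
    (M * transMat x) g h = M g (h * x) := by
  simp [Matrix.mul_apply, transMat]

lemma transMat_mul_apply (M : Matrix G G ℂ) (x g h : G) :
    (transMat x * M) g h = M (g * x⁻¹) h := by
  have : ∀ j : G, g = j * x ↔ g * x⁻¹ = j := fun j => by rw [mul_inv_eq_iff_eq_mul]
  simp [Matrix.mul_apply, transMat, this]

lemma transMat_pow (x : G) (n : ℕ) : transMat x ^ n = transMat (x ^ n) := by
  induction n with
  | zero => ext g h; simp [transMat, Matrix.one_apply]
  | succ n ih =>
    ext g h
    rw [pow_succ, ih, mul_transMat_apply]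
    simp [transMat, pow_succ', mul_assoc]

lemma commute_cayMat_transMat (S : Set G) (x : G) : Commute (cayMat S) (transMat x) := by
  ext g h
  rw [mul_transMat_apply, transMat_mul_apply]
  simp [cayMat, mul_assoc]

lemma commute_onesMat_transMat (x : G) : Commute (onesMat G) (transMat x) := by
  ext g h
  rw [mul_transMat_apply, transMat_mul_apply]
  simp [onesMat]

lemma sum_indicator_eq_card {α : Type*} [Fintype α] (p : α → Prop)
    [DecidablePred p] : (∑ a, if p a then (1 : ℂ) else 0) = Nat.card {a // p a} := by
  rw [Finset.sum_boole, Nat.card_eq_fintype_card, Fintype.card_subtype]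

lemma cayMat_mul_onesMat (S : Set G) :
    cayMat S * onesMat G = (Nat.card S : ℂ) • onesMat G := by
  ext g h
  simp only [Matrix.mul_apply, cayMat, onesMat, Matrix.of_apply, mul_one, Matrix.smul_apply,
    smul_eq_mul]
  rw [sum_indicator_eq_card]
  congr 1
  exact Nat.card_congr
    (((Equiv.inv G).trans (Equiv.mulLeft g)).subtypeEquiv fun a => by simp)

lemma onesMat_mul_cayMat (S : Set G) (hinv : ∀ s ∈ S, s⁻¹ ∈ S) :
    onesMat G * cayMat S = (Nat.card S : ℂ) • onesMat G := by
  have hT : (cayMat S).transpose = cayMat S := by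
    ext g h
    have : h * g⁻¹ ∈ S ↔ g * h⁻¹ ∈ S :=
      ⟨fun H => by simpa using hinv _ H, fun H => by simpa using hinv _ H⟩
    simp [cayMat, this]
  have h := congrArg Matrix.transpose (cayMat_mul_onesMat S)
  rw [Matrix.transpose_mul, hT, Matrix.transpose_smul] at h
  exact h

/-- The difference set axioms as a matrix equation, `A² = (k - μ) I + (λ - μ) A + μ J`. -/
lemma cayMat_mul_self {v k l m : ℕ} {S : Set G} (hS : IsPDS v k l m S) :
    cayMat S * cayMat S
      = ((k : ℂ) - m) • 1 + ((l : ℂ) - m) • cayMat S + (m : ℂ) • onesMat G := by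
  obtain ⟨-, hk, h1, hinv, hrep⟩ := hS
  have hiff : ∀ a : G, a⁻¹ ∈ S ↔ a ∈ S :=
    fun a => ⟨fun H => by simpa using hinv _ H, fun H => hinv _ H⟩
  ext g h
  have key : (cayMat S * cayMat S) g h
      = Nat.card {p : ↥S × ↥S // (p.1 : G) * (p.2 : G)⁻¹ = g * h⁻¹} := by
    simp only [Matrix.mul_apply, cayMat, Matrix.of_apply, mul_ite, mul_one, mul_zero, ← ite_and]
    rw [sum_indicator_eq_card]
    congr 1
    -- an intermediate vertex `j` corresponds to the pair `(g j⁻¹, h j⁻¹)`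
    refine Nat.card_congr
      { toFun := fun j => ⟨(⟨g * j.1⁻¹, ?_⟩, ⟨h * j.1⁻¹, ?_⟩), ?_⟩
        invFun := fun p => ⟨(p.1.1 : G)⁻¹ * g, ?_, ?_⟩
        left_inv := ?_
        right_inv := ?_ }
    · have := j.2; tauto
    · have := j.2
      have h2 := hiff (j.1 * h⁻¹)
      simp only [mul_inv_rev, inv_inv] at h2
      tauto
    · simp
    · have e : (p.1.1 : G)⁻¹ * g * h⁻¹ = (p.1.2 : G)⁻¹ := by
        rw [mul_assoc]; exact inv_mul_eq_iff_eq_mul.mpr p.2.symm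
      rw [e]; exact hinv _ p.1.2.2
    · simp
    · intro j; simp
    · rintro ⟨⟨a, b⟩, hp⟩
      have : h * (g⁻¹ * a) = b := by
        simp only at hp
        have h3 : (a : G) = g * h⁻¹ * b := by rw [← hp]; simp
        rw [h3]; group
      simp [this]
  rw [key]
  by_cases hgh : g = h
  · subst hgh
    have hc : Nat.card {p : ↥S × ↥S // (p.1 : G) * (p.2 : G)⁻¹ = g * g⁻¹} = k := by
      rw [← hk]
      refine Nat.card_congr
        { toFun := fun p => p.1.1
          invFun := fun s => ⟨(s, s), by simp⟩
          left_inv := ?_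
          right_inv := fun s => rfl }
      rintro ⟨⟨a, b⟩, hp⟩
      simp only [mul_inv_cancel, mul_inv_eq_one] at hp
      simp [Subtype.ext hp]
    rw [hc]
    simp [cayMat, onesMat, h1]
  · rw [hrep _ (by rwa [Ne, mul_inv_eq_one])]
    by_cases hs : g * h⁻¹ ∈ S <;> simp [cayMat, onesMat, hs, hgh]

/-- With `a = θ₁` and `b = θ₂`, the matrix `A - b - c J` is `a - b` times the projection onto the
`θ₁`-eigenspace orthogonal to the constants; `c = (k - b) / v` is the value for which it kills the
constants. -/
lemma eigenmatrix_mul_self {v k l m : ℕ} {S : Set G} (hS : IsPDS v k l m S) (a b c : ℂ)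
    (hsum : a + b = (l : ℂ) - m) (hprod : a * b = -((k : ℂ) - m)) (hc : c * v = k - b) :
    (cayMat S - b • 1 - c • onesMat G) * (cayMat S - b • 1 - c • onesMat G)
      = (a - b) • (cayMat S - b • 1 - c • onesMat G) := by
  have hA := cayMat_mul_self hS
  obtain ⟨hv, hk, -, hinv, -⟩ := hS
  have hAJ := cayMat_mul_onesMat S
  have hJA := onesMat_mul_cayMat S hinv
  have hJ := onesMat_mul_self (G := G)
  rw [hk] at hAJ hJA
  rw [← Nat.card_eq_fintype_card, hv] at hJ
  -- counting walks of length two: the quadratic relation applied to the constant vector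
  have hcount : (k : ℂ) * k = (k - m) + (l - m) * k + m * v := by
    have h := congrArg (fun M => M * onesMat G) hA
    simp only [mul_assoc, add_mul, hAJ, hJ, Matrix.mul_smul, Matrix.smul_mul, one_mul] at h
    have h' := congrFun (congrFun h 1) 1
    simpa [onesMat] using h'
  have hcm : c * (k - a) = m := by
    have hvne : (v : ℂ) ≠ 0 := by
      rw [← hv]; exact_mod_cast Nat.card_pos.ne'
    apply mul_right_cancel₀ hvne
    linear_combination (k - a) * hc + hcount + hprod - k * hsum
  simp only [sub_mul, mul_sub, Matrix.mul_smul, Matrix.smul_mul, one_mul, mul_one, hA, hAJ, hJA,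
    hJ]
  have hl : (l : ℂ) - m = a + b := hsum.symm
  have hkm : (k : ℂ) - m = -(a * b) := by rw [hprod]; ring
  rw [hl, hkm]
  have hcoef : (m : ℂ) - 2 * c * (k - b) + c * (c * v) = -((a - b) * c) := by
    linear_combination c * hc - hcm
  have hm' : (m : ℂ) = 2 * c * (k - b) - c * (c * v) - (a - b) * c := by
    linear_combination hcoef
  rw [hm']
  module

end


/-- De Winter–Kamischke–Wang (for PDSs): for a `(v,k,l,m)` PDS `S` with nontrivial eigenvalues
`θ₁ ≥ θ₂` and a nonidentity `x ∈ G`, the number `d₁(x)` of vertices of `Cay(G,S)` sent to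
adjacent vertices by right translation by `x` satisfies
`d₁(x) ≡ m − θ₂(θ₁+1) (mod θ₁−θ₂)`. -/
theorem stmt_16 {G : Type*} [Group G] [Finite G] (v k l m : ℕ) (S : Set G)
    (hS : IsPDS v k l m S) (hm : 0 < m) (hmk : m < k) (hkv : k < v - 1)
    (θ₁ θ₂ : ℤ) (hθ : θ₂ ≤ θ₁) (hsum : θ₁ + θ₂ = (l : ℤ) - (m : ℤ))
    (hprod : θ₁ * θ₂ = -((k : ℤ) - (m : ℤ)))
    (x : G) (hx : x ≠ 1) :
    (Nat.card {g : G // g * (g * x)⁻¹ ∈ S} : ℤ) ≡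
      (m : ℤ) - θ₂ * (θ₁ + 1) [ZMOD (θ₁ - θ₂)] := by
  classical
  have := Fintype.ofFinite G
  have hD : θ₁ - θ₂ ≠ 0 := by
    intro h
    have h1 : θ₁ = θ₂ := by linarith
    have h2 : (m : ℤ) < k := by exact_mod_cast hmk
    subst h1
    nlinarith [mul_self_nonneg θ₁]
  have hDC : (θ₁ : ℂ) - θ₂ ≠ 0 := by exact_mod_cast hD
  have hv : Nat.card G = v := hS.1
  have hvne : (v : ℂ) ≠ 0 := by
    rw [← hv]; exact_mod_cast Nat.card_pos.ne'
  set c : ℂ := ((k : ℂ) - θ₂) / v with hc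
  have hcv : c * v = k - θ₂ := div_mul_cancel₀ _ hvne
  set F : Matrix G G ℂ := cayMat S - (θ₂ : ℂ) • 1 - c • onesMat G with hF
  have hFF : F * F = ((θ₁ : ℂ) - θ₂) • F :=
    eigenmatrix_mul_self hS _ _ _ (by exact_mod_cast hsum) (by exact_mod_cast hprod) hcv
  set E : Matrix G G ℂ := ((θ₁ : ℂ) - θ₂)⁻¹ • F with hE
  have hEE : IsIdempotentElem E := by
    rw [IsIdempotentElem, hE, Matrix.smul_mul, Matrix.mul_smul, hFF, inv_smul_smul₀ hDC]
  have hcomm : Commute E (transMat x) := by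
    refine Commute.smul_left (((commute_cayMat_transMat S x).sub_left ?_).sub_left ?_) _
    · exact (Commute.one_left _).smul_left _
    · exact (commute_onesMat_transMat x).smul_left _
  have hint : IsIntegral ℤ (E * transMat x).trace := by
    refine isIntegral_trace_of_pow_eq _ (orderOf x) (orderOf_pos x) ?_
    rw [hcomm.mul_pow, hEE.pow_succ_eq, transMat_pow, pow_succ, pow_orderOf_eq_one, one_mul]
  set d : ℕ := Nat.card {g : G // g * (g * x)⁻¹ ∈ S} with hd
  have htr : (E * transMat x).trace = ((d : ℂ) - (k - θ₂)) / (θ₁ - θ₂) := by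
    have h1 : ∀ g : G, (E * transMat x) g g
        = ((θ₁ : ℂ) - θ₂)⁻¹ * ((if g * (g * x)⁻¹ ∈ S then 1 else 0) - c) := by
      intro g
      rw [mul_transMat_apply]
      simp [hE, hF, cayMat, onesMat, hx]
    simp only [Matrix.trace, Matrix.diag_apply, h1]
    rw [← Finset.mul_sum, Finset.sum_sub_distrib, sum_indicator_eq_card, ← hd, Finset.sum_const,
      Finset.card_univ, ← Nat.card_eq_fintype_card, hv, nsmul_eq_mul, mul_comm (v : ℂ), hcv,
      div_eq_inv_mul]
  -- the trace is a rational algebraic integer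
  obtain ⟨z, hz⟩ : ∃ z : ℤ, (z : ℚ) = ((d : ℚ) - (k - θ₂)) / (θ₁ - θ₂) := by
    refine IsIntegrallyClosed.isIntegral_iff.mp ?_
    rw [← isIntegral_algebraMap_iff (algebraMap ℚ ℂ).injective]
    rw [htr] at hint
    simpa using hint
  have hDQ : (θ₁ : ℚ) - θ₂ ≠ 0 := by exact_mod_cast hD
  rw [eq_div_iff hDQ] at hz
  have hz' : z * (θ₁ - θ₂) = (d : ℤ) - (k - θ₂) := by exact_mod_cast hz
  refine (Int.modEq_iff_dvd.mpr ⟨z, ?_⟩).symm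
  linear_combination -hz' + hprod
end

section
/- (Swartz–Tauscheck) Let G be a finite group of order v, let S be a (v,k,λ,μ) partial difference set in G with 0 < μ < k and k < v−1, and let θ₁ ≥ θ₂ be integers with θ₁ + θ₂ = λ − μ and θ₁·θ₂ = −(k − μ). For a nonidentity element x ∈ G, define Φ(x) := |Cl(x) ∩ S| · |C_G(x)|, where Cl(x) is the conjugacy class of x in G and C_G(x) is the centralizer of x in G. Then, as integers, Φ(x) ≡ μ − θ₂·(θ₁ + 1) (mod θ₁ − θ₂). In particular, if (θ₁ − θ₂) does not divide μ − θ₂·(θ₁ + 1), then Cl(x) ∩ S ≠ ∅ for every nonidentity x ∈ G. -/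
/-!
Let `A` be the `G × G` adjacency matrix `A g h = [g * h⁻¹ ∈ S]`, `J` the all-ones matrix and
`n = θ₁ - θ₂`, which is nonzero because `θ₁ * θ₂ = m - k < 0`. The difference set condition says
`A² = k I + l A + m (J - I - A)`, that is, `(A - θ₁)(A - θ₂) = m J`, and `A J = J A = k J`.
Hence `E = n⁻¹ (A - θ₂ I - c J)` with `c = (k - θ₂) / v` is an idempotent, namely the projection
to the `θ₁`-eigenspace orthogonal to the constants (`eigenproj_sq`).

The right translation `P x` commutes with `E` and has finite order, so `T = P x * E` satisfies
`T ^ (r + 1) = T` with `r` the order of `x`. Its eigenvalues are therefore `0` or roots of unity,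
and its trace is an algebraic integer (`isIntegral_trace_of_pow_succ_eq`). On the other hand,
`tr (P x * A) = #{g | g x g⁻¹ ∈ S} = Φ(x)`, `tr (P x) = 0` and `tr (P x * J) = v`, which gives
`n * tr T = Φ(x) - (k - θ₂)`. So `tr T` is a rational algebraic integer, hence an integer, and
`Φ(x) ≡ k - θ₂ = m - θ₂ (θ₁ + 1)` modulo `n`.
-/

attribute [local instance] Classical.propDecidable

namespace PDS

/-- The permutation matrix of right translation `g ↦ g * x`. The entry is at `(g, g * x)`, so that
`x ↦ transl x` is multiplicative rather than antimultiplicative. -/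
noncomputable def transl {G : Type*} [Group G] (x : G) : Matrix G G ℂ :=
  Matrix.of fun g h => if g * x = h then 1 else 0

/-- The adjacency matrix of the Cayley graph of `S`, commuting with all right translations. -/
noncomputable def adj {G : Type*} [Group G] (S : Set G) : Matrix G G ℂ :=
  Matrix.of fun g h => if g * h⁻¹ ∈ S then 1 else 0

/-- The all-ones matrix. -/
def ones (G : Type*) : Matrix G G ℂ := Matrix.of fun _ _ => 1

section
variable {G : Type*} [Group G] [Fintype G]

lemma transl_mul_apply (x : G) (M : Matrix G G ℂ) (g h : G) :
    (transl x * M) g h = M (g * x) h := by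
  simp [transl, Matrix.mul_apply]

lemma mul_transl_apply (x : G) (M : Matrix G G ℂ) (g h : G) :
    (M * transl x) g h = M g (h * x⁻¹) := by
  simp [transl, Matrix.mul_apply, ← eq_mul_inv_iff_mul_eq]

lemma transl_pow (x : G) (r : ℕ) : transl x ^ r = transl (x ^ r) := by
  induction r with
  | zero => ext g h; simp [transl, Matrix.one_apply]
  | succ r ih =>
    rw [pow_succ', ih]
    ext g h
    rw [transl_mul_apply]
    simp [transl, pow_succ', mul_assoc]

lemma transl_one : transl (1 : G) = 1 := by
  ext g h; simp [transl, Matrix.one_apply]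

lemma ones_mul_ones : ones G * ones G = (Fintype.card G : ℂ) • ones G := by
  ext g h; simp [ones, Matrix.mul_apply]

lemma adj_mul_ones (S : Set G) : adj S * ones G = (Nat.card S : ℂ) • ones G := by
  ext g h
  simp only [ones, adj, Matrix.mul_apply, Matrix.of_apply, mul_one, Matrix.smul_apply,
    smul_eq_mul]
  rw [← Equiv.sum_comp ((Equiv.inv G).trans (Equiv.mulRight g))]
  rw [Nat.card_eq_fintype_card, Fintype.card_subtype]
  simp only [Equiv.trans_apply, Equiv.inv_apply, Equiv.coe_mulRight, mul_inv_rev, inv_inv,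
    mul_inv_cancel_left, Finset.sum_boole]

lemma ones_mul_adj (S : Set G) : ones G * adj S = (Nat.card S : ℂ) • ones G := by
  ext g h
  simp only [ones, adj, Matrix.mul_apply, Matrix.of_apply, one_mul, Matrix.smul_apply,
    smul_eq_mul, mul_one]
  rw [← Equiv.sum_comp (Equiv.mulRight h)]
  rw [Nat.card_eq_fintype_card, Fintype.card_subtype]
  simp [Finset.sum_boole]

lemma adj_mul_adj_apply (S : Set G) (hinv : ∀ s ∈ S, s⁻¹ ∈ S) (g h : G) :
    (adj S * adj S) g h =
      (Nat.card {p : ↥S × ↥S // (p.1 : G) * (p.2 : G)⁻¹ = g * h⁻¹} : ℂ) := by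
  have e : {p : ↥S × ↥S // (p.1 : G) * (p.2 : G)⁻¹ = g * h⁻¹} ≃
      {u : G // g * u⁻¹ ∈ S ∧ u * h⁻¹ ∈ S} :=
    { toFun := fun p => ⟨(p.1.1 : G)⁻¹ * g, by
        have hp := p.2
        refine ⟨by simp, ?_⟩
        have h2 : (p.1.1 : G)⁻¹ * (g * h⁻¹) = (p.1.2 : G)⁻¹ := by
          rw [inv_mul_eq_iff_eq_mul]; exact hp.symm
        rw [mul_assoc, h2]
        exact hinv _ p.1.2.2⟩
      invFun := fun u => ⟨(⟨g * u.1⁻¹, u.2.1⟩, ⟨(u.1 * h⁻¹)⁻¹, hinv _ u.2.2⟩), by simp⟩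
      left_inv := by
        rintro ⟨⟨⟨a, ha⟩, ⟨b, hb⟩⟩, hp⟩
        simp only at hp
        have hb' : b = h * (g⁻¹ * a) := by
          have := congrArg (·⁻¹) hp
          simp only [mul_inv_rev, inv_inv] at this
          rw [← mul_assoc, ← this, inv_mul_cancel_right]
        simp [hb']
      right_inv := by
        rintro ⟨u, hu⟩
        simp }
  rw [Nat.card_congr e, Nat.card_eq_fintype_card, Fintype.card_subtype]
  simp only [adj, Matrix.mul_apply, Matrix.of_apply, ← ite_and, mul_ite, mul_one, mul_zero]
  rw [Finset.sum_boole]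
  simp only [and_comm]

/-- The strongly regular graph identity `A² = k I + l A + m (J - I - A)`. -/
lemma adj_sq {v k l m : ℕ} {S : Set G} (hS : IsPDS v k l m S) :
    adj S * adj S = ((l : ℂ) - m) • adj S + ((k : ℂ) - m) • (1 : Matrix G G ℂ)
      + (m : ℂ) • ones G := by
  obtain ⟨-, hk, h1, hinv, hcount⟩ := hS
  ext g h
  rw [adj_mul_adj_apply S hinv]
  by_cases hgh : g = h
  · subst hgh
    have e : {p : ↥S × ↥S // (p.1 : G) * (p.2 : G)⁻¹ = g * g⁻¹} ≃ S :=
      { toFun := fun p => p.1.1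
        invFun := fun s => ⟨(s, s), by simp⟩
        left_inv := by
          rintro ⟨⟨a, b⟩, hp⟩
          simp only [mul_inv_cancel, mul_inv_eq_one] at hp
          have : a = b := Subtype.ext hp
          simp [this]
        right_inv := fun s => rfl }
    rw [Nat.card_congr e, hk]
    simp [adj, ones, h1]
  · rw [hcount _ (by rwa [Ne, mul_inv_eq_one])]
    by_cases hs : g * h⁻¹ ∈ S <;> simp [adj, ones, hs, hgh]

/-- Orbit counting for conjugation: the left side is `Φ(x)` in the form of a matrix trace. -/
lemma card_conj_mem (S : Set G) (x : G) :
    Nat.card {g : G // g * x * g⁻¹ ∈ S} =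
      Nat.card ↥(conjugatesOf x ∩ S) * Nat.card (Subgroup.centralizer {x}) := by
  -- A chosen conjugating element `t y` identifies each fibre of `g ↦ g x g⁻¹` with `C_G(x)`.
  have hc : ∀ y : ↥(conjugatesOf x ∩ S), ∃ t : G, t * x * t⁻¹ = y := fun y =>
    isConj_iff.1 y.2.1
  choose t ht using hc
  rw [← Nat.card_prod]
  refine Nat.card_congr (Equiv.symm (Equiv.ofBijective
    (fun p : ↥(conjugatesOf x ∩ S) × Subgroup.centralizer {x} =>
      (⟨t p.1 * p.2, ?_⟩ : {g : G // g * x * g⁻¹ ∈ S})) ⟨?_, ?_⟩))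
  · have h := Subgroup.mem_centralizer_singleton_iff.1 p.2.2
    have : t p.1 * p.2 * x * (t p.1 * p.2 : G)⁻¹ = p.1 := by
      rw [← ht p.1, mul_assoc (t p.1), h]; group
    rw [this]; exact p.1.2.2
  · rintro ⟨y, c⟩ ⟨y', c'⟩ h
    have h0 : t y * c = t y' * c' := congrArg Subtype.val h
    have key : ∀ (y : ↥(conjugatesOf x ∩ S)) (c : Subgroup.centralizer {x}),
        t y * c * x * (t y * c : G)⁻¹ = y := by
      intro y c
      have h := Subgroup.mem_centralizer_singleton_iff.1 c.2
      rw [← ht y, mul_assoc (t y), h]; group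
    have hy : y = y' := Subtype.ext (by rw [← key y c, ← key y' c', h0])
    subst hy
    rw [mul_left_cancel_iff] at h0
    rw [Subtype.ext h0]
  · rintro ⟨g, hg⟩
    have hmem : g * x * g⁻¹ ∈ conjugatesOf x ∩ S := ⟨isConj_iff.2 ⟨g, rfl⟩, hg⟩
    have h := ht ⟨_, hmem⟩
    refine ⟨(⟨_, hmem⟩, ⟨(t ⟨_, hmem⟩)⁻¹ * g, ?_⟩), ?_⟩
    · rw [Subgroup.mem_centralizer_singleton_iff]
      simp only at h
      generalize t ⟨_, hmem⟩ = s at h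
      rw [mul_inv_eq_iff_eq_mul, mul_assoc (g * x)] at h
      rw [mul_assoc, inv_mul_eq_iff_eq_mul, ← mul_assoc, ← mul_assoc, h]
      group
    · simp

/-- The matrix `n⁻¹ (A - θ I - c J)`. For `n = θ₁ - θ₂`, `θ = θ₂` and `c = (k - θ₂) / v` it is the
projection to the `θ₁`-eigenspace of `A` orthogonal to the constants. -/
noncomputable def eigenproj (S : Set G) (n θ c : ℂ) : Matrix G G ℂ :=
  n⁻¹ • (adj S - θ • (1 : Matrix G G ℂ) - c • ones G)

lemma commute_transl_eigenproj (S : Set G) (n θ c : ℂ) (x : G) :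
    Commute (transl x) (eigenproj S n θ c) := by
  ext g h
  rw [transl_mul_apply, mul_transl_apply]
  simp [eigenproj, adj, ones, Matrix.one_apply, eq_mul_inv_iff_mul_eq, mul_assoc]

lemma eigenproj_sq {v k l m : ℕ} {S : Set G} (hS : IsPDS v k l m S) {a b : ℂ}
    (hab : a ≠ b) (hsum : a + b = (l : ℂ) - m) (hprod : a * b = -((k : ℂ) - m)) :
    eigenproj S (a - b) b ((k - b) / v) * eigenproj S (a - b) b ((k - b) / v) =
      eigenproj S (a - b) b ((k - b) / v) := by
  have hA := adj_sq hS
  have hv : (Fintype.card G : ℂ) = v := by rw [← hS.1, Nat.card_eq_fintype_card]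
  have hv0 : (v : ℂ) ≠ 0 := by rw [← hv]; simp
  have hAJ := adj_mul_ones S
  have hJA := ones_mul_adj S
  have hJJ := ones_mul_ones (G := G)
  rw [hS.2.1] at hAJ hJA
  rw [hv] at hJJ
  -- Comparing an entry of `A * A * J` computed in two ways gives `(k - θ₁)(k - θ₂) = m v`.
  have hkk : ((k : ℂ) - a) * (k - b) = m * v := by
    have h1 : adj S * adj S * ones G = ((k : ℂ) * k) • ones G := by
      rw [Matrix.mul_assoc, hAJ, Matrix.mul_smul, hAJ, smul_smul]
    rw [hA, add_mul, add_mul, Matrix.smul_mul, Matrix.smul_mul, Matrix.smul_mul, hAJ, hJJ,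
      one_mul] at h1
    have h2 := congrFun (congrFun h1 1) 1
    simp [ones] at h2
    linear_combination (k : ℂ) * hsum * (-1) + hprod - h2
  set c : ℂ := (k - b) / v with hc
  have hcv : c * v = k - b := by rw [hc]; field_simp
  have hcm : m = c * (k - a) := by
    apply mul_right_cancel₀ hv0
    linear_combination -hkk - (k - a) * hcv
  have hn : a - b ≠ 0 := sub_ne_zero.2 hab
  have key : (adj S - b • (1 : Matrix G G ℂ) - c • ones G) *
      (adj S - b • (1 : Matrix G G ℂ) - c • ones G) =
      (a - b) • (adj S - b • (1 : Matrix G G ℂ) - c • ones G) := by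
    simp only [sub_mul, mul_sub, Matrix.smul_mul, Matrix.mul_smul, one_mul, mul_one, hA, hAJ,
      hJA, hJJ]
    ext g h
    simp only [Matrix.sub_apply, Matrix.add_apply, Matrix.smul_apply, smul_eq_mul]
    linear_combination (-hsum) * adj S g h + hprod * (1 : Matrix G G ℂ) g h +
      ones G g h * (hcm + c * hcv)
  rw [eigenproj, Matrix.smul_mul, Matrix.mul_smul, key, inv_smul_smul₀ hn]

/-- The trace is the sum of the eigenvalues, which are `0` or roots of unity. -/
lemma isIntegral_trace_of_pow_succ_eq (T : Matrix G G ℂ) {r : ℕ} (hr : 0 < r)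
    (hT : T ^ (r + 1) = T) : IsIntegral ℤ T.trace := by
  rw [Matrix.trace_eq_sum_roots_charpoly]
  refine Multiset.sum_induction _ _ (fun _ _ => IsIntegral.add) isIntegral_zero ?_
  intro z hz
  have hz' : z ∈ spectrum ℂ T := by
    rw [Matrix.mem_spectrum_iff_isRoot_charpoly]
    exact Polynomial.isRoot_of_mem_roots hz
  have h1 := spectrum.subset_polynomial_aeval T (Polynomial.X ^ (r + 1) - Polynomial.X)
    ⟨z, hz', rfl⟩
  have h2 : z ^ (r + 1) - z = 0 := by
    simpa [hT] using h1
  refine ⟨Polynomial.X ^ (r + 1) - Polynomial.X, ?_, by simpa using h2⟩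
  refine Polynomial.monic_X_pow_sub ?_
  rw [Polynomial.degree_X]
  exact_mod_cast Nat.lt_add_of_pos_left hr

lemma trace_transl_mul_eigenproj (S : Set G) (n θ c : ℂ) {x : G} (hx : x ≠ 1) :
    (transl x * eigenproj S n θ c).trace =
      n⁻¹ * ((Nat.card {g : G // g * x * g⁻¹ ∈ S} : ℂ) - c * Fintype.card G) := by
  simp only [Matrix.trace, Matrix.diag, transl_mul_apply]
  rw [Nat.card_eq_fintype_card, Fintype.card_subtype]
  simp [eigenproj, adj, ones, hx, ← Finset.mul_sum, Finset.sum_sub_distrib,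
    mul_comm]

end

end PDS

/-- Swartz–Tauscheck: for a `(v,k,l,m)` PDS `S` with nontrivial eigenvalues `θ₁ ≥ θ₂` and a
nonidentity `x ∈ G`, `Φ(x) = |Cl(x) ∩ S|·|C_G(x)| ≡ m − θ₂(θ₁+1) (mod θ₁−θ₂)`; in particular,
if `θ₁−θ₂` does not divide `m − θ₂(θ₁+1)`, then `Cl(x) ∩ S ≠ ∅`. -/
theorem stmt_17 {G : Type*} [Group G] [Finite G] (v k l m : ℕ) (S : Set G)
    (hS : IsPDS v k l m S) (hm : 0 < m) (hmk : m < k) (hkv : k < v - 1)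
    (θ₁ θ₂ : ℤ) (hθ : θ₂ ≤ θ₁) (hsum : θ₁ + θ₂ = (l : ℤ) - (m : ℤ))
    (hprod : θ₁ * θ₂ = -((k : ℤ) - (m : ℤ)))
    (x : G) (hx : x ≠ 1) :
    ((Nat.card ↥(conjugatesOf x ∩ S) * Nat.card (Subgroup.centralizer {x}) : ℕ) : ℤ) ≡
      (m : ℤ) - θ₂ * (θ₁ + 1) [ZMOD (θ₁ - θ₂)] ∧
    (¬ (θ₁ - θ₂) ∣ ((m : ℤ) - θ₂ * (θ₁ + 1)) → (conjugatesOf x ∩ S).Nonempty) := by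
  have : Fintype G := Fintype.ofFinite G
  have hne : θ₁ ≠ θ₂ := by
    rintro rfl
    have : (m : ℤ) < k := by exact_mod_cast hmk
    nlinarith [mul_self_nonneg θ₁]
  have hn : θ₁ - θ₂ ≠ 0 := sub_ne_zero.2 hne
  have hcong : ((Nat.card ↥(conjugatesOf x ∩ S) * Nat.card (Subgroup.centralizer {x}) : ℕ) : ℤ) ≡
      (m : ℤ) - θ₂ * (θ₁ + 1) [ZMOD (θ₁ - θ₂)] := by
    rw [← PDS.card_conj_mem]
    set N := Nat.card {g : G // g * x * g⁻¹ ∈ S} with hN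
    have hv : (Fintype.card G : ℂ) = v := by rw [← hS.1, Nat.card_eq_fintype_card]
    have hv0 : (v : ℂ) ≠ 0 := by rw [← hv]; simp
    have hsq := PDS.eigenproj_sq hS (a := θ₁) (b := θ₂) (by exact_mod_cast hne)
      (by exact_mod_cast hsum) (by exact_mod_cast hprod)
    have htr := PDS.trace_transl_mul_eigenproj S ((θ₁ : ℂ) - θ₂) θ₂ ((k - θ₂) / v) hx
    have hcomm := PDS.commute_transl_eigenproj S ((θ₁ : ℂ) - θ₂) θ₂ ((k - θ₂) / v) x
    set E := PDS.eigenproj S ((θ₁ : ℂ) - θ₂) θ₂ ((k - θ₂) / v)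
    have hint : IsIntegral ℤ (PDS.transl x * E).trace := by
      refine PDS.isIntegral_trace_of_pow_succ_eq _ (orderOf_pos x) ?_
      have hE : IsIdempotentElem E := hsq
      rw [hcomm.mul_pow, hE.pow_succ_eq, PDS.transl_pow, pow_succ, pow_orderOf_eq_one, one_mul]
    rw [htr, hv, div_mul_cancel₀ _ hv0] at hint
    -- The trace is also rational, so integrality over `ℤ` makes it an integer `z`.
    have hq : ((θ₁ : ℂ) - θ₂)⁻¹ * ((N : ℂ) - (k - θ₂)) =
        algebraMap ℚ ℂ (((θ₁ : ℚ) - θ₂)⁻¹ * ((N : ℚ) - (k - θ₂))) := by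
      simp
    rw [← hN, hq, isIntegral_algebraMap_iff (algebraMap ℚ ℂ).injective,
      IsIntegrallyClosed.isIntegral_iff] at hint
    obtain ⟨z, hz⟩ := hint
    have hn' : (θ₁ : ℚ) - θ₂ ≠ 0 := by exact_mod_cast hn
    have hz' : (N : ℚ) - (k - θ₂) = (θ₁ - θ₂) * z := by
      have : (z : ℚ) = ((θ₁ : ℚ) - θ₂)⁻¹ * ((N : ℚ) - (k - θ₂)) := by simpa using hz
      rw [this, mul_inv_cancel_left₀ hn']
    have hz'' : (N : ℤ) - (k - θ₂) = (θ₁ - θ₂) * z := by exact_mod_cast hz'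
    refine (Int.modEq_iff_dvd.2 ⟨z, ?_⟩).symm
    linear_combination hz'' + hprod
  -- If `Cl(x) ∩ S` is empty then `Φ(x) = 0`.
  refine ⟨hcong, fun hnd => ?_⟩
  by_contra hemp
  rw [Set.not_nonempty_iff_eq_empty] at hemp
  rw [hemp] at hcong
  exact hnd (by simpa using hcong.dvd)
end

section
/- Let v, k, λ, μ be natural numbers with 0 < μ < k and k < v−1, and let θ₁ ≥ θ₂ be integers with θ₁ + θ₂ = λ − μ and θ₁·θ₂ = −(k − μ). Suppose (θ₁ − θ₂) divides neither μ − θ₂·(θ₁ + 1) nor v − 2k + λ − θ₂·(θ₁ + 1) (as integers). Then no finite group G of order v whose center is nontrivial contains a (v,k,λ,μ) partial difference set. -/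
/-!
Let `A` be the adjacency matrix of the Cayley graph of a partial difference set `S`, so that
`A ^ 2 = k I + l A + m (J - I - A)` (`cayleyMatrix_sq`), i.e. `(A - θ₁)(A - θ₂) = m J`. The matrix
`E = (θ₁ - θ₂)⁻¹ (A - θ₂ I - ((k - θ₂) / v) J)` is therefore idempotent, being the projection onto
the `θ₁`-eigenspace in the complement of the constant vectors.

A nonidentity central element `z` acts by left translation as an automorphism of the graph; its
permutation matrix `P` has finite order and commutes with `E`. With `r` the order of `z`, this gives
`(P E) ^ (r + 1) = P E`, so the trace of `P E` is an algebraic integer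
(`isIntegral_trace_of_pow_eq`). Since `z` has no fixed points and is central, the diagonal of `P A`
is constant, equal to `1` or `0` according to whether `z⁻¹ ∈ S`, and the trace of `P E` is the
rational number `(v [z⁻¹ ∈ S] - (k - θ₂)) / (θ₁ - θ₂)`, hence an integer (`dvd_of_mem_center`).

If `z⁻¹ ∉ S`, then `θ₁ - θ₂` divides `k - θ₂ = m - θ₂ (θ₁ + 1)`. If `z⁻¹ ∈ S`, it divides
`v - (k - θ₂)`, which is `v - 2 k + l - θ₂ (θ₁ + 1)` up to the multiple `θ₁ - θ₂`. Both are excluded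
by hypothesis.
-/

attribute [local instance] Classical.propDecidable

/-- Every root of the characteristic polynomial of such a matrix is a root of the monic integer
polynomial `X ^ (r + 1) - X`, and the trace is the sum of these roots. -/
theorem isIntegral_trace_of_pow_eq_s18 {n : Type*} [Fintype n] (F : Matrix n n ℂ) (r : ℕ)
    (hr : 0 < r) (h : F ^ (r + 1) = F) : IsIntegral ℤ F.trace := by
  rw [Matrix.trace_eq_sum_roots_charpoly]
  refine IsIntegral.multiset_sum fun a ha => ?_
  have hmem : a ∈ spectrum ℂ F :=
    Matrix.mem_spectrum_iff_isRoot_charpoly.2 (Polynomial.mem_roots'.1 ha).2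
  have hne : Nontrivial (Matrix n n ℂ) := by
    by_contra hn
    rw [not_nontrivial_iff_subsingleton] at hn
    rw [spectrum.of_subsingleton] at hmem
    exact hmem
  have h0 := spectrum.subset_polynomial_aeval F
    (Polynomial.X ^ (r + 1) - Polynomial.X) ⟨a, hmem, rfl⟩
  refine ⟨Polynomial.X ^ (r + 1) - Polynomial.X, ?_, by simpa [h] using h0⟩
  exact Polynomial.monic_X_pow_sub (by
    rw [Polynomial.degree_X]; exact_mod_cast Nat.lt_add_of_pos_left hr)

theorem exists_int_of_isIntegral_ratCast (q : ℚ) (h : IsIntegral ℤ (q : ℂ)) :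
    ∃ n : ℤ, q = n := by
  have h' : IsIntegral ℤ q :=
    (isIntegral_algebraMap_iff (B := ℂ) (algebraMap ℚ ℂ).injective).1 (by simpa using h)
  obtain ⟨n, hn⟩ := IsIntegrallyClosed.isIntegral_iff.1 h'
  exact ⟨n, by simpa using hn.symm⟩

/-- The adjacency matrix of the Cayley graph of `G` with connection set `S`, in which `x` and `y`
are joined when `x * y⁻¹ ∈ S`. -/
noncomputable def cayleyMatrix {G : Type*} [Group G] (S : Set G) : Matrix G G ℂ :=
  Matrix.of fun x y => if x * y⁻¹ ∈ S then 1 else 0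

/-- The all-ones matrix. -/
def onesMatrix (G : Type*) : Matrix G G ℂ := Matrix.of fun _ _ => 1

theorem onesMatrix_mul_self {G : Type*} [Fintype G] :
    onesMatrix G * onesMatrix G = (Nat.card G : ℂ) • onesMatrix G := by
  ext x y
  simp [onesMatrix, Matrix.mul_apply]

section PDS

variable {G : Type*} [Group G] [Fintype G] {v k l m : ℕ} {S : Set G}

theorem cayleyMatrix_mul_onesMatrix :
    cayleyMatrix S * onesMatrix G = (Nat.card S : ℂ) • onesMatrix G := by
  ext x y
  have h : Nat.card {t // x * t⁻¹ ∈ S} = Nat.card S := Nat.card_congr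
    { toFun := fun t => ⟨x * t.1⁻¹, t.2⟩
      invFun := fun s => ⟨s.1⁻¹ * x, by simp⟩
      left_inv := fun t => by simp
      right_inv := fun s => by simp }
  rw [← h]
  simp [onesMatrix, cayleyMatrix, Matrix.mul_apply, Fintype.card_subtype]

theorem onesMatrix_mul_cayleyMatrix :
    onesMatrix G * cayleyMatrix S = (Nat.card S : ℂ) • onesMatrix G := by
  ext x y
  have h : Nat.card {t // t * y⁻¹ ∈ S} = Nat.card S := Nat.card_congr
    { toFun := fun t => ⟨t.1 * y⁻¹, t.2⟩
      invFun := fun s => ⟨s.1 * y, by simp⟩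
      left_inv := fun t => by simp
      right_inv := fun s => by simp }
  rw [← h]
  simp [onesMatrix, cayleyMatrix, Matrix.mul_apply, Fintype.card_subtype]

/-- Since `S = S⁻¹`, a walk `x, y, w` of length two corresponds to the pair
`(x * y⁻¹, w * y⁻¹)` in `S × S`. -/
theorem cayleyMatrix_sq_apply (hS : ∀ s ∈ S, s⁻¹ ∈ S) (x w : G) :
    (cayleyMatrix S * cayleyMatrix S) x w =
      (Nat.card {p : ↥S × ↥S // (p.1 : G) * (p.2 : G)⁻¹ = x * w⁻¹} : ℂ) := by
  have h : Nat.card {y // x * y⁻¹ ∈ S ∧ y * w⁻¹ ∈ S} =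
      Nat.card {p : ↥S × ↥S // (p.1 : G) * (p.2 : G)⁻¹ = x * w⁻¹} := Nat.card_congr
    { toFun := fun y => ⟨(⟨x * y.1⁻¹, y.2.1⟩, ⟨w * y.1⁻¹, by simpa using hS _ y.2.2⟩),
        by simp [mul_assoc]⟩
      invFun := fun p => ⟨(p.1.1 : G)⁻¹ * x, by simp, by
        have h1 : (p.1.1 : G)⁻¹ * x * w⁻¹ = (p.1.2 : G)⁻¹ := by
          rw [mul_assoc]
          exact inv_mul_eq_iff_eq_mul.2 p.2.symm
        rw [h1]
        exact hS _ p.1.2.2⟩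
      left_inv := fun y => by simp
      right_inv := fun p => by
        have h2 : w * (x⁻¹ * (p.1.1 : G)) = p.1.2 := by
          have := p.2
          rw [mul_inv_eq_iff_eq_mul] at this
          rw [this]; group
        apply Subtype.ext
        apply Prod.ext <;> apply Subtype.ext <;> simp [h2] }
  rw [← h]
  simp [cayleyMatrix, Matrix.mul_apply, Fintype.card_subtype, ← ite_and, and_comm]

/-- The strongly regular graph equation `A ^ 2 = k I + l A + m (J - I - A)`. -/
theorem cayleyMatrix_sq (h : IsPDS v k l m S) :
    cayleyMatrix S * cayleyMatrix S =
      (k : ℂ) • (1 : Matrix G G ℂ) + (l : ℂ) • cayleyMatrix S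
        + (m : ℂ) • (onesMatrix G - 1 - cayleyMatrix S) := by
  obtain ⟨-, hk, h1, hinv, hrep⟩ := h
  ext x w
  rw [cayleyMatrix_sq_apply hinv]
  by_cases hxw : x = w
  · subst hxw
    have hc : Nat.card {p : ↥S × ↥S // (p.1 : G) * (p.2 : G)⁻¹ = x * x⁻¹} = k := by
      rw [← hk]
      refine Nat.card_congr
        { toFun := fun p => p.1.1
          invFun := fun s => ⟨(s, s), by simp⟩
          left_inv := fun p => ?_
          right_inv := fun s => rfl }
      have : (p.1.1 : G) = p.1.2 := mul_inv_eq_one.1 (p.2.trans (mul_inv_cancel x))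
      exact Subtype.ext (Prod.ext rfl (Subtype.ext this))
    rw [hc]
    simp [cayleyMatrix, onesMatrix, h1]
  · rw [hrep _ (by rwa [Ne, mul_inv_eq_one])]
    by_cases hs : x * w⁻¹ ∈ S <;> simp [cayleyMatrix, onesMatrix, hs, hxw]

/-- A congruence of Benson type: left translation by a nonidentity central element `z` is a
fixed-point-free automorphism of the Cayley graph, and the number of vertices that it maps to a
neighbour (all `v` of them or none) is congruent to `k - θ₂` modulo `θ₁ - θ₂`. -/
theorem dvd_of_mem_center (h : IsPDS v k l m S) (θ₁ θ₂ : ℤ) (hne : θ₁ ≠ θ₂)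
    (hsum : θ₁ + θ₂ = (l : ℤ) - (m : ℤ)) (hprod : θ₁ * θ₂ = -((k : ℤ) - (m : ℤ)))
    (z : G) (hz : z ∈ Subgroup.center G) (hz1 : z ≠ 1) :
    (θ₁ - θ₂) ∣ (if z⁻¹ ∈ S then (v : ℤ) else 0) - ((k : ℤ) - θ₂) := by
  have hsq := cayleyMatrix_sq h
  obtain ⟨hv, hk, -, -, -⟩ := h
  have hJJ := onesMatrix_mul_self (G := G)
  have hAJ := cayleyMatrix_mul_onesMatrix (S := S)
  have hJA := onesMatrix_mul_cayleyMatrix (S := S)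
  rw [hv] at hJJ
  rw [hk] at hAJ hJA
  have hv0 : (v : ℂ) ≠ 0 := by
    rw [← hv]; exact_mod_cast Nat.card_pos.ne'
  have hd0 : (θ₁ : ℂ) - θ₂ ≠ 0 := by
    rw [sub_ne_zero]; exact_mod_cast hne
  have hsum' : (θ₁ : ℂ) + θ₂ = l - m := by exact_mod_cast hsum
  have hprod' : (θ₁ : ℂ) * θ₂ = -(k - m) := by exact_mod_cast hprod
  set A := cayleyMatrix S with hA
  set J := onesMatrix G with hJ
  -- compare the entries of `A * A * J` computed from `A * J = k J` and from the SRG equation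
  have hcount : (m : ℂ) * v = (k - θ₁) * (k - θ₂) := by
    have e := congrArg (fun M => (M * J) 1 1) hsq
    simp only [mul_assoc, hAJ, Matrix.mul_smul, Matrix.add_mul, Matrix.sub_mul, Matrix.smul_mul,
      hJJ, Matrix.one_mul] at e
    simp [hJ, onesMatrix] at e
    linear_combination -e + k * hsum' - hprod'
  -- `c J` is the part of `A - θ₂` on the constant vectors; removing it leaves a multiple of the
  -- projection onto the `θ₁`-eigenspace
  obtain ⟨c, hc⟩ : ∃ c : ℂ, c * v = k - θ₂ := ⟨(k - θ₂) / v, div_mul_cancel₀ _ hv0⟩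
  have hc' : c * (k - θ₁) = m := by
    apply mul_right_cancel₀ hv0
    linear_combination (k - θ₁ : ℂ) * hc - hcount
  set N : Matrix G G ℂ := A - (θ₂ : ℂ) • 1 - c • J with hN
  have hNN : N * N = ((θ₁ : ℂ) - θ₂) • N := by
    have e : N * N = A * A - (2 * θ₂ : ℂ) • A + (θ₂ * θ₂ : ℂ) • 1 - c • (A * J) - c • (J * A)
        + (2 * θ₂ * c : ℂ) • J + (c * c) • (J * J) := by
      simp only [hN, Matrix.mul_sub, Matrix.sub_mul, Matrix.smul_mul, Matrix.mul_smul,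
        Matrix.one_mul, Matrix.mul_one]
      module
    rw [e, hsq, hAJ, hJA, hJJ, hN]
    ext x y
    simp only [Matrix.add_apply, Matrix.sub_apply, Matrix.smul_apply, smul_eq_mul]
    linear_combination (-A x y) * hsum' + (1 : Matrix G G ℂ) x y * hprod'
      + J x y * (c * hc - hc')
  set E : Matrix G G ℂ := ((θ₁ : ℂ) - θ₂)⁻¹ • N with hE
  have hEE : IsIdempotentElem E := by
    rw [IsIdempotentElem, hE, Matrix.smul_mul, Matrix.mul_smul, hNN, inv_smul_smul₀ hd0]
  set P : Matrix G G ℂ := Matrix.permMatrixHom (MulAction.toPermHom G G z) with hP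
  have hPn : P ^ orderOf z = 1 := by
    rw [hP, ← map_pow, ← map_pow, pow_orderOf_eq_one, map_one, map_one]
  have hzc : ∀ g, z * g = g * z := fun g => (Subgroup.mem_center_iff.1 hz g).symm
  have hPM (M : Matrix G G ℂ) (x y : G) : (P * M) x y = M (z⁻¹ * x) y := by
    simp [hP, PEquiv.toMatrix_toPEquiv_mul]
  have hMP (M : Matrix G G ℂ) (x y : G) : (M * P) x y = M x (z * y) := by
    simp [hP, PEquiv.mul_toMatrix_toPEquiv]
    rfl
  have hcomm : Commute P E := by
    ext x y
    rw [hPM, hMP]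
    have h1 : z⁻¹ * x * y⁻¹ = x * (z * y)⁻¹ := by
      have hx : z⁻¹ * x = x * z⁻¹ := by
        rw [inv_mul_eq_iff_eq_mul, ← mul_assoc, hzc, mul_inv_cancel_right]
      rw [hx, hzc y, mul_inv_rev, mul_assoc]
    have h2 : z⁻¹ * x = y ↔ x = z * y := inv_mul_eq_iff_eq_mul
    simp [hE, hN, hA, hJ, cayleyMatrix, onesMatrix, h1, h2, Matrix.one_apply]
  have hn := orderOf_pos z
  have hint : IsIntegral ℤ (P * E).trace := by
    refine isIntegral_trace_of_pow_eq_s18 _ (orderOf z) hn ?_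
    rw [hcomm.mul_pow, pow_succ, hPn, one_mul, hEE.pow_succ_eq]
  have htr : (P * E).trace =
      ((((if z⁻¹ ∈ S then (v : ℤ) else 0) - ((k : ℤ) - θ₂) : ℤ) / (θ₁ - θ₂ : ℤ) : ℚ) : ℂ) := by
    have hdiag : ∀ x, (P * E) x x = ((θ₁ : ℂ) - θ₂)⁻¹ * ((if z⁻¹ ∈ S then 1 else 0) - c) := by
      intro x
      rw [hPM]
      simp [hE, hN, hA, hJ, cayleyMatrix, onesMatrix, hz1]
    rw [Matrix.trace]
    simp only [Matrix.diag_apply, hdiag, Finset.sum_const, Finset.card_univ,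
      ← Nat.card_eq_fintype_card, hv, nsmul_eq_mul]
    push_cast
    rw [← hc]
    split_ifs <;> push_cast <;> ring
  rw [htr] at hint
  obtain ⟨n, hn⟩ := exists_int_of_isIntegral_ratCast _ hint
  have hd : ((θ₁ - θ₂ : ℤ) : ℚ) ≠ 0 := by exact_mod_cast sub_ne_zero.2 hne
  rw [div_eq_iff hd] at hn
  exact ⟨n, by rw [mul_comm]; exact_mod_cast hn⟩

end PDS

/-- If `θ₁−θ₂` divides neither `m − θ₂(θ₁+1)` nor `v − 2k + l − θ₂(θ₁+1)`, then no finite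
group of order `v` with nontrivial center contains a `(v,k,l,m)` PDS. -/
theorem stmt_18 (v k l m : ℕ) (hm : 0 < m) (hmk : m < k) (hkv : k < v - 1)
    (θ₁ θ₂ : ℤ) (hθ : θ₂ ≤ θ₁) (hsum : θ₁ + θ₂ = (l : ℤ) - (m : ℤ))
    (hprod : θ₁ * θ₂ = -((k : ℤ) - (m : ℤ)))
    (h1 : ¬ (θ₁ - θ₂) ∣ ((m : ℤ) - θ₂ * (θ₁ + 1)))
    (h2 : ¬ (θ₁ - θ₂) ∣ ((v : ℤ) - 2 * (k : ℤ) + (l : ℤ) - θ₂ * (θ₁ + 1)))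
    {G : Type*} [Group G] [Finite G] (hZ : Subgroup.center G ≠ ⊥) (S : Set G) :
    ¬ IsPDS v k l m S := by
  classical
  intro h
  have := Fintype.ofFinite G
  obtain ⟨z, hz, hz1⟩ := (Subgroup.center G).bot_or_exists_ne_one.resolve_left hZ
  have hne : θ₁ ≠ θ₂ := by
    rintro rfl
    have : (m : ℤ) < k := by exact_mod_cast hmk
    nlinarith [mul_self_nonneg θ₁]
  have hd := dvd_of_mem_center h θ₁ θ₂ hne hsum hprod z hz hz1
  split_ifs at hd
  · refine h2 ?_
    have e : (v : ℤ) - 2 * k + l - θ₂ * (θ₁ + 1) = v - (k - θ₂) + (θ₁ - θ₂) := by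
      linear_combination -hprod - hsum
    rw [e]
    exact hd.add dvd_rfl
  · refine h1 ?_
    have e : (m : ℤ) - θ₂ * (θ₁ + 1) = -(0 - (k - θ₂)) := by linear_combination -hprod
    rw [e]
    exact hd.neg_right
end
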